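/- arXiv:1309.6178 — 4 statements merged into one kernel-verified Lean document; each statement's English description precedes it below -/
import Mathlib

section
/- In the simplified model (Case II of the covariance computation), there are constants C > 0 and N such that for all n ≥ N and all 2 ≤ i ≤ m − 1, |Cov(Ȳ_{i,m}, Ȳ_{i+1,m}) − (σ²/m)∫₀¹ Λ(u)Λ(1−u) du + τ²(m/n)∫₀¹ λ(u)λ(1−u) du| ≤ C/n; that is, Cov(Ȳ_{i,m}, Ȳ_{i+1,m}) = (σ²/m)∫₀¹ Λ(u)Λ(1−u) du − τ²(m/n)∫₀¹ λ(u)λ(1−u) du + O(1/n) uniformly in i. -/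
open MeasureTheory ProbabilityTheory Real

noncomputable section

/-- `Λ(u) = -∫₀ᵘ λ(v) dv`. -/
def bigLam (lam : ℝ → ℝ) (u : ℝ) : ℝ := -∫ v in (0:ℝ)..u, lam v

/-- A (normalized) pre-average function: piecewise Lipschitz on `[0,2]`,
antisymmetric about `1`, and normalized. -/
structure IsPreAverageFn (lam : ℝ → ℝ) : Prop where
  piecewise_lipschitz : ∃ (N : ℕ) (t : ℕ → ℝ) (K : NNReal),
      0 < N ∧ t 0 = 0 ∧ t N = 2 ∧ (∀ i < N, t i < t (i + 1)) ∧
      ∀ i < N, LipschitzOnWith K lam (Set.Ioo (t i) (t (i + 1)))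
  antisymm : ∀ t ∈ Set.Icc (0:ℝ) 1, lam t = - lam (2 - t)
  normalized : Real.sqrt (2 * ∫ s in (0:ℝ)..1, (∫ u in (0:ℝ)..s, lam u) ^ 2) = 1

/-- `m = n / ⌊√n / c⌋`. -/
def mOf (c : ℝ) (n : ℕ) : ℕ := n / ⌊Real.sqrt n / c⌋₊

/-- The indices `j` with `j/n ∈ [(i-2)/m , i/m]`. -/
def blockIdx (n m i : ℕ) : Finset ℕ :=
  (Finset.range (n + 1)).filter fun j =>
    ((i : ℝ) - 2) / m ≤ (j : ℝ) / n ∧ (j : ℝ) / n ≤ (i : ℝ) / m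

variable {Ω : Type*}

/-- Pre-averaged value `Ā_{i,m} = (m/n) ∑_{j/n ∈ [(i-2)/m, i/m]} λ(m j/n - (i-2)) A_j`. -/
def preAvg (lam : ℝ → ℝ) (n m : ℕ) (A : ℕ → Ω → ℝ) (i : ℕ) (ω : Ω) : ℝ :=
  ((m : ℝ) / n) * ∑ j ∈ blockIdx n m i,
    lam ((m : ℝ) * j / n - ((i : ℝ) - 2)) * A j ω

/-- Bias correction `𝔟(λ, A)_{i,m}`. -/
def biasCorr (lam : ℝ → ℝ) (n m : ℕ) (A : ℕ → Ω → ℝ) (i : ℕ) (ω : Ω) : ℝ :=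
  ((m : ℝ) ^ 2 / (2 * (n : ℝ) ^ 2)) * ∑ j ∈ (blockIdx n m i).filter (fun j => 1 ≤ j),
    (lam ((m : ℝ) * j / n - ((i : ℝ) - 2))) ^ 2 * (A j ω - A (j - 1) ω) ^ 2

/-- The simplified model: `(W_{j/n})_j` and `(η_{j,n})_j` form a centered jointly Gaussian
family with `Cov(W_{j/n}, W_{l/n}) = min(j,l)/n`, `(η_{j,n})` standard Gaussian i.i.d.
and uncorrelated with the `W` grid values. -/
def IsSimplifiedModel [MeasureSpace Ω] (n : ℕ) (W η : ℕ → Ω → ℝ) : Prop :=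
  (∀ j, Measurable (W j)) ∧ (∀ j, Measurable (η j)) ∧
  (∀ a b : ℕ → ℝ, ∃ v : NNReal,
    Measure.map (fun ω => ∑ j ∈ Finset.range (n + 1), (a j * W j ω + b j * η j ω)) ℙ
      = gaussianReal 0 v) ∧
  (∀ j l, j ≤ n → l ≤ n → ∫ ω, W j ω * W l ω = (min j l : ℝ) / n) ∧
  (∀ j l, j ≤ n → l ≤ n → ∫ ω, η j ω * η l ω = if j = l then 1 else 0) ∧
  (∀ j l, j ≤ n → l ≤ n → ∫ ω, W j ω * η l ω = 0)

/-- The observations `Y_{j,n} = σ W_{j/n} + τ η_{j,n}`. -/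
def obs (σ τ : ℝ) (W η : ℕ → Ω → ℝ) (j : ℕ) (ω : Ω) : ℝ := σ * W j ω + τ * η j ω

end


namespace PreAvgAux

/-- `f` has increments dominated by those of a monotone function of total variation at most `C`. -/
def Dom (f : ℝ → ℝ) (C : ℝ) : Prop :=
  ∃ V : ℝ → ℝ, Monotone V ∧ (∀ x y, V y - V x ≤ C) ∧ ∀ x y, x ≤ y → |f y - f x| ≤ V y - V x

theorem Dom.nonneg {f : ℝ → ℝ} {C : ℝ} (hf : Dom f C) : 0 ≤ C := by
  obtain ⟨V, _, h, _⟩ := hf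
  simpa using h 0 0

theorem Dom.ii {f : ℝ → ℝ} {C : ℝ} (hf : Dom f C) (a b : ℝ) :
    IntervalIntegrable f volume a b := by
  obtain ⟨V, hV, _, h⟩ := hf
  have h1 : Monotone (fun x => f x + V x) := by
    intro x y hxy
    have := (abs_le.1 (h x y hxy)).1
    simp only; linarith
  have h2 : f = fun x => (f x + V x) - V x := by ext x; ring
  rw [h2]
  exact (h1.intervalIntegrable).sub hV.intervalIntegrable

theorem Dom.riemann {f : ℝ → ℝ} {C : ℝ} (hf : Dom f C) {h : ℝ} (hh : 0 < h) (a : ℝ)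
    {p q : ℕ} (hpq : p ≤ q) :
    |h * ∑ j ∈ Finset.Ico p q, f (h * j - a) - ∫ x in (h * p - a)..(h * q - a), f x| ≤ h * C := by
  have hi := hf.ii
  obtain ⟨V, hV, hC, hd⟩ := hf
  suffices H : |h * ∑ j ∈ Finset.Ico p q, f (h * j - a) - ∫ x in (h * p - a)..(h * q - a), f x|
      ≤ h * (V (h * q - a) - V (h * p - a)) from
    H.trans (mul_le_mul_of_nonneg_left (hC _ _) hh.le)
  induction q, hpq using Nat.le_induction with
  | base => simp
  | succ q hpq ih =>
    rw [Finset.sum_Ico_succ_top hpq,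
      ← intervalIntegral.integral_add_adjacent_intervals (hi (h * p - a) (h * q - a))
        (hi (h * q - a) (h * (q + 1 : ℕ) - a))]
    set x := h * q - a with hx
    set y := h * (q + 1 : ℕ) - a with hy
    have hxy : y - x = h := by rw [hx, hy]; push_cast; ring
    have hle : x ≤ y := by linarith
    have key : |h * f x - ∫ t in x..y, f t| ≤ h * (V y - V x) := by
      have e : h * f x - ∫ t in x..y, f t = ∫ t in x..y, (f x - f t) := by
        rw [intervalIntegral.integral_sub (by simp) (hi _ _)]
        simp [hxy]
      rw [e]
      have := intervalIntegral.norm_integral_le_of_norm_le_const (a := x) (b := y)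
        (f := fun t => f x - f t) (C := V y - V x) (by
          intro t ht
          rw [Set.uIoc_of_le hle] at ht
          rw [Real.norm_eq_abs, abs_sub_comm]
          have h1 := hd x t ht.1.le
          have h2 := hV ht.2
          linarith)
      rw [hxy, abs_of_pos hh] at this
      rw [mul_comm]; exact this
    have := abs_add_le (h * ∑ j ∈ Finset.Ico p q, f (h * j - a) - ∫ x in (h * p - a)..x, f x)
      (h * f x - ∫ t in x..y, f t)
    calc _ = _ := by congr 1; rw [mul_add]; ring
      _ ≤ _ := this
      _ ≤ h * (V x - V (h * p - a)) + h * (V y - V x) := add_le_add ih key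
      _ = _ := by ring

theorem Dom.mul {f g : ℝ → ℝ} {C C' M M' : ℝ} (hf : Dom f C) (hg : Dom g C')
    (hM : ∀ x, |f x| ≤ M) (hM' : ∀ x, |g x| ≤ M') :
    Dom (fun x => f x * g x) (M' * C + M * C') := by
  obtain ⟨V, hV, hC, hd⟩ := hf
  obtain ⟨U, hU, hC', hd'⟩ := hg
  have m0 : 0 ≤ M := (abs_nonneg _).trans (hM 0)
  have m0' : 0 ≤ M' := (abs_nonneg _).trans (hM' 0)
  refine ⟨fun x => M' * V x + M * U x, ?_, ?_, ?_⟩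
  · intro x y hxy
    have := mul_le_mul_of_nonneg_left (hV hxy) m0'
    have := mul_le_mul_of_nonneg_left (hU hxy) m0
    simp only; linarith
  · intro x y
    have := mul_le_mul_of_nonneg_left (hC x y) m0'
    have := mul_le_mul_of_nonneg_left (hC' x y) m0
    simp only; linarith
  · intro x y hxy
    have e : f y * g y - f x * g x = g y * (f y - f x) + f x * (g y - g x) := by ring
    simp only [e]
    refine (abs_add_le _ _).trans ?_
    rw [abs_mul, abs_mul]
    have := mul_le_mul (hM' y) (hd x y hxy) (abs_nonneg _) m0'
    have := mul_le_mul (hM x) (hd' x y hxy) (abs_nonneg _) m0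
    linarith

theorem Dom.shift {f : ℝ → ℝ} {C : ℝ} (hf : Dom f C) (b : ℝ) : Dom (fun x => f (x - b)) C := by
  obtain ⟨V, hV, hC, hd⟩ := hf
  exact ⟨fun x => V (x - b), fun x y h => hV (by linarith), fun x y => hC _ _,
    fun x y h => hd _ _ (by linarith)⟩

theorem Dom.abs {f : ℝ → ℝ} {C : ℝ} (hf : Dom f C) : Dom (fun x => |f x|) C := by
  obtain ⟨V, hV, hC, hd⟩ := hf
  exact ⟨V, hV, hC, fun x y h => (abs_abs_sub_abs_le_abs_sub _ _).trans (hd _ _ h)⟩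

theorem integral_supp {g : ℝ → ℝ} {α β p q : ℝ} (hg : ∀ x ∈ Set.Icc p q, x ∉ Set.Icc α β → g x = 0)
    (hp : p ≤ α) (hαβ : α ≤ β) (hq : β ≤ q) : ∫ x in p..q, g x = ∫ x in α..β, g x := by
  rw [intervalIntegral.integral_of_le (by linarith), intervalIntegral.integral_of_le hαβ,
    ← integral_Icc_eq_integral_Ioc, ← integral_Icc_eq_integral_Ioc]
  exact setIntegral_eq_of_subset_of_forall_sdiff_eq_zero measurableSet_Icc
    (Set.Icc_subset_Icc hp hq) (fun x hx => hg x hx.1 hx.2)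

/-- The extension of `lam` by zero. -/
noncomputable def ext0 (lam : ℝ → ℝ) : ℝ → ℝ := Set.indicator (Set.Icc 0 2) lam

theorem exists_piece {N : ℕ} {t : ℕ → ℝ} (h0 : t 0 = 0) (hN : t N = 2) {x : ℝ} (hx0 : 0 ≤ x)
    (hx2 : x < 2) : ∃ i < N, t i ≤ x ∧ x < t (i + 1) := by
  have hex : ∃ k, x < t k := ⟨N, by rw [hN]; exact hx2⟩
  classical
  have h1 := Nat.find_spec hex
  have hle : Nat.find hex ≤ N := Nat.find_min' hex (by rw [hN]; exact hx2)
  rcases Nat.eq_zero_or_pos (Nat.find hex) with h | h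
  · rw [h, h0] at h1; linarith
  · obtain ⟨k, hk⟩ := Nat.exists_eq_succ_of_ne_zero h.ne'
    refine ⟨k, by omega, ?_, ?_⟩
    · have := Nat.find_min hex (m := k) (by omega)
      linarith
    · rw [hk] at h1; exact h1

theorem exists_bound {lam : ℝ → ℝ} (hlam : IsPreAverageFn lam) :
    ∃ M, ∀ x, |ext0 lam x| ≤ M := by
  obtain ⟨N, t, K, hNpos, h0, hN, hmono, hLip⟩ := hlam.piecewise_lipschitz
  let φ : ℕ → ℝ := fun i => |lam (t i)| + |lam ((t i + t (i + 1)) / 2)| + K * (t (i + 1) - t i)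
  have hφ : ∀ i < N, 0 ≤ φ i := fun i hi => by
    have := mul_nonneg K.2 (sub_nonneg.2 (hmono i hi).le)
    have h1 := abs_nonneg (lam (t i))
    have h2 := abs_nonneg (lam ((t i + t (i + 1)) / 2))
    simp only [φ]
    have h3 : (0:ℝ) ≤ K * (t (i + 1) - t i) := this
    linarith
  have hS : ∀ i < N, φ i ≤ ∑ i ∈ Finset.range N, φ i := fun i hi =>
    Finset.single_le_sum (f := φ) (fun j hj => hφ j (Finset.mem_range.1 hj)) (Finset.mem_range.2 hi)
  have hS0 : 0 ≤ ∑ i ∈ Finset.range N, φ i :=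
    Finset.sum_nonneg (fun j hj => hφ j (Finset.mem_range.1 hj))
  refine ⟨∑ i ∈ Finset.range N, φ i + |lam 2|, fun x => ?_⟩
  have h2 := abs_nonneg (lam 2)
  by_cases hx : x ∈ Set.Icc (0:ℝ) 2
  swap
  · rw [ext0, Set.indicator_of_notMem hx, abs_zero]; linarith
  rw [ext0, Set.indicator_of_mem hx]
  rcases eq_or_lt_of_le hx.2 with h | h
  · rw [h]; linarith
  obtain ⟨i, hi, hi1, hi2⟩ := exists_piece h0 hN hx.1 h
  have := hS i hi
  have hpos := mul_nonneg K.2 (sub_nonneg.2 (hmono i hi).le)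
  have hpos : (0:ℝ) ≤ K * (t (i + 1) - t i) := hpos
  have ha := abs_nonneg (lam (t i))
  have hb := abs_nonneg (lam ((t i + t (i + 1)) / 2))
  simp only [φ] at this hS0
  rcases eq_or_lt_of_le hi1 with h' | h'
  · rw [← h']; linarith
  · have hm := hmono i hi
    have h3 := (hLip i hi).dist_le_mul x ⟨h', hi2⟩ ((t i + t (i + 1)) / 2)
      ⟨by linarith, by linarith⟩
    rw [Real.dist_eq, Real.dist_eq] at h3
    have h4 : |x - (t i + t (i + 1)) / 2| ≤ t (i + 1) - t i := by
      rw [abs_le]; constructor <;> linarith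
    have h5 := mul_le_mul_of_nonneg_left h4 K.2
    have h6 := abs_sub_abs_le_abs_sub (lam x) (lam ((t i + t (i + 1)) / 2))
    have h7 : (K:ℝ) * |x - (t i + t (i + 1)) / 2| ≤ K * (t (i + 1) - t i) := h5
    linarith

/-- clamp to `[0,2]` -/
noncomputable def cl (x : ℝ) : ℝ := max 0 (min x 2)

theorem cl_mono : Monotone cl := fun _ _ h => max_le_max le_rfl (min_le_min h le_rfl)
theorem cl_nonneg (x : ℝ) : 0 ≤ cl x := le_max_left _ _
theorem cl_le (x : ℝ) : cl x ≤ 2 := max_le (by norm_num) (min_le_right _ _)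
theorem cl_of_mem {x : ℝ} (h : x ∈ Set.Icc (0:ℝ) 2) : cl x = x := by
  rw [cl, min_eq_left h.2, max_eq_right h.1]

theorem ext0_dom {lam : ℝ → ℝ} (hlam : IsPreAverageFn lam) :
    ∃ C, Dom (ext0 lam) C := by
  obtain ⟨M, hM⟩ := exists_bound hlam
  obtain ⟨N, t, K, hNpos, h0, hN, hmono, hLip⟩ := hlam.piecewise_lipschitz
  have m0 : 0 ≤ M := (abs_nonneg _).trans (hM 0)
  have k0 : (0:ℝ) ≤ K := K.2
  let J : ℕ → ℝ → ℝ := fun i x => (if t i ≤ x then 1 else 0) + (if t i < x then 1 else 0)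
  have hJ : ∀ i, Monotone (J i) := by
    intro i x y hxy
    simp only [J]
    split_ifs <;> first | linarith | norm_num
  have hJ0 : ∀ i x, 0 ≤ J i x := by
    intro i x; simp only [J]; split_ifs <;> norm_num
  have hJ2 : ∀ i x, J i x ≤ 2 := by
    intro i x; simp only [J]; split_ifs <;> norm_num
  have hSm : Monotone (fun x => ∑ i ∈ Finset.range (N + 1), J i x) := fun x y hxy =>
    Finset.sum_le_sum fun i _ => hJ i hxy
  refine ⟨K * 2 + 2 * M * ((N + 1) * 2), fun x => K * cl x + 2 * M * ∑ i ∈ Finset.range (N + 1), J i x,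
    ?_, ?_, ?_⟩
  · intro x y hxy
    have h1 := mul_le_mul_of_nonneg_left (cl_mono hxy) k0
    have h2 := mul_le_mul_of_nonneg_left (hSm hxy) (by linarith : 0 ≤ 2 * M)
    simp only at h2 ⊢; linarith
  · intro x y
    have h1 := mul_le_mul_of_nonneg_left (cl_le y) k0
    have h2 := mul_nonneg k0 (cl_nonneg x)
    have h3 : 0 ≤ ∑ i ∈ Finset.range (N + 1), J i x := Finset.sum_nonneg fun i _ => hJ0 i x
    have h4 : ∑ i ∈ Finset.range (N + 1), J i y ≤ (N + 1) * 2 := by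
      have := Finset.sum_le_sum (s := Finset.range (N + 1)) fun i _ => hJ2 i y
      simpa using this
    have h5 := mul_le_mul_of_nonneg_left h4 (by linarith : 0 ≤ 2 * M)
    have h6 := mul_nonneg (by linarith : 0 ≤ 2 * M) h3
    simp only; linarith
  · intro x y hxy
    have hc := mul_le_mul_of_nonneg_left (cl_mono hxy) k0
    rcases eq_or_lt_of_le hxy with h | hlt
    · subst h; simp
    by_cases hex : ∃ i ∈ Finset.range (N + 1), t i ∈ Set.Icc x y
    · obtain ⟨i, hi, hix, hiy⟩ := hex
      have h1 : 1 ≤ J i y - J i x := by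
        rcases eq_or_lt_of_le hix with h | h
        · have a1 : t i < y := by linarith
          have a2 : ¬ t i < x := by linarith
          have a3 : t i ≤ x := by linarith
          simp only [J, a1, a1.le, a2, a3, if_true, if_false]
          norm_num
        · have : ¬ t i ≤ x := by linarith
          have h'' : ¬ t i < x := by linarith
          simp only [J, this, h'', hiy, if_true, if_false]
          split_ifs <;> norm_num
      have h2 : J i y - J i x ≤ ∑ i ∈ Finset.range (N + 1), (J i y - J i x) :=
        Finset.single_le_sum (f := fun i => J i y - J i x)
          (fun j _ => sub_nonneg.2 (hJ j hxy)) hi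
      rw [Finset.sum_sub_distrib] at h2
      have h3 := mul_le_mul_of_nonneg_left (h1.trans h2) (by linarith : 0 ≤ 2 * M)
      have h4 := abs_sub (ext0 lam y) (ext0 lam x)
      have := hM x
      have := hM y
      linarith
    · push Not at hex
      have hS := mul_le_mul_of_nonneg_left (hSm hxy) (by linarith : 0 ≤ 2 * M)
      simp only at hS
      have h00 : ¬ (x ≤ 0 ∧ 0 ≤ y) := by
        have := hex 0 (by simp); rwa [h0] at this
      have h22 : ¬ (x ≤ 2 ∧ 2 ≤ y) := by
        have := hex N (by simp); rwa [hN] at this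
      by_cases hx0 : x < 0
      · have hy0 : y < 0 := by
          by_contra hcon; exact h00 ⟨hx0.le, not_lt.1 hcon⟩
        rw [ext0, Set.indicator_of_notMem (fun hh => by linarith [hh.1]), Set.indicator_of_notMem (fun hh => by linarith [hh.1])]
        simp only [sub_zero, abs_zero]; linarith
      by_cases hx2 : 2 < x
      · rw [ext0, Set.indicator_of_notMem (fun hh => by linarith [hh.2]),
          Set.indicator_of_notMem (fun hh => by linarith [hh.2])]
        simp only [sub_zero, abs_zero]; linarith
      push Not at hx0 hx2
      have hy2 : y < 2 := by
        by_contra hcon; exact h22 ⟨hx2, not_lt.1 hcon⟩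
      obtain ⟨i, hi, hi1, hi2⟩ := exists_piece h0 hN hx0 (hlt.trans hy2)
      have e1 : t i < x := by
        rcases eq_or_lt_of_le hi1 with h | h
        · exact absurd ⟨h.ge, by linarith⟩ (hex i (by simp; omega))
        · exact h
      have e2 : y < t (i + 1) := by
        by_contra hcon
        exact hex (i + 1) (by simp; omega) ⟨hi2.le, not_lt.1 hcon⟩
      have hxm : x ∈ Set.Icc (0:ℝ) 2 := ⟨hx0, hx2⟩
      have hym : y ∈ Set.Icc (0:ℝ) 2 := ⟨by linarith, hy2.le⟩
      have h3 := (hLip i hi).dist_le_mul y ⟨by linarith, e2⟩ x ⟨e1, hi2⟩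
      rw [Real.dist_eq, Real.dist_eq, abs_of_pos (sub_pos.2 hlt)] at h3
      rw [ext0, Set.indicator_of_mem hxm, Set.indicator_of_mem hym]
      simp only [cl_of_mem hxm, cl_of_mem hym]
      linarith

theorem ext0_zero {lam : ℝ → ℝ} {x : ℝ} (hx : x ∉ Set.Icc (0:ℝ) 2) : ext0 lam x = 0 := by
  rw [ext0, Set.indicator_of_notMem hx]

theorem ext0_mem {lam : ℝ → ℝ} {x : ℝ} (hx : x ∈ Set.Icc (0:ℝ) 2) : ext0 lam x = lam x := by
  rw [ext0, Set.indicator_of_mem hx]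

theorem ext0_antisymm {lam : ℝ → ℝ} (hlam : IsPreAverageFn lam) (x : ℝ) :
    ext0 lam (2 - x) = - ext0 lam x := by
  by_cases hx : x ∈ Set.Icc (0:ℝ) 2
  · have hx' : 2 - x ∈ Set.Icc (0:ℝ) 2 := ⟨by linarith [hx.2], by linarith [hx.1]⟩
    rw [ext0_mem hx, ext0_mem hx']
    rcases le_total x 1 with h | h
    · have := hlam.antisymm x ⟨hx.1, h⟩; linarith
    · have := hlam.antisymm (2 - x) ⟨hx'.1, by linarith⟩
      rw [this]; congr 2; ring
  · have hx' : 2 - x ∉ Set.Icc (0:ℝ) 2 := fun h => hx ⟨by linarith [h.2], by linarith [h.1]⟩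
    rw [ext0_zero hx, ext0_zero hx', neg_zero]

/-- tail integral -/
noncomputable def tail (lam : ℝ → ℝ) (x : ℝ) : ℝ := ∫ v in x..2, ext0 lam v

theorem integral_symm_zero {lam : ℝ → ℝ} (hlam : IsPreAverageFn lam) (u : ℝ) :
    ∫ v in (1 - u)..(1 + u), ext0 lam v = 0 := by
  have h := intervalIntegral.integral_comp_sub_left (a := 1 - u) (b := 1 + u) (ext0 lam) 2
  simp only [ext0_antisymm hlam, intervalIntegral.integral_neg] at h
  rw [show (2:ℝ) - (1 + u) = 1 - u by ring, show (2:ℝ) - (1 - u) = 1 + u by ring] at h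
  linarith

theorem integral_two_zero {lam : ℝ → ℝ} (hlam : IsPreAverageFn lam) :
    ∫ v in (0:ℝ)..2, ext0 lam v = 0 := by
  have := integral_symm_zero hlam 1
  norm_num at this; exact this

theorem tail_ge (lam : ℝ → ℝ) {x : ℝ} (hx : 2 ≤ x) : tail lam x = 0 := by
  rw [tail, intervalIntegral.integral_symm, integral_supp (α := 2) (β := 2) _ le_rfl le_rfl hx]
  · simp
  · intro y hy hy'
    apply ext0_zero
    intro h
    exact hy' ⟨hy.1, h.2⟩

theorem tail_le {lam : ℝ → ℝ} (hlam : IsPreAverageFn lam) {x : ℝ} (hx : x ≤ 0) :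
    tail lam x = 0 := by
  rw [tail, integral_supp (α := 0) (β := 2) (fun y _ hy => ext0_zero hy) hx (by norm_num) le_rfl,
    integral_two_zero hlam]

theorem integral_to {lam : ℝ → ℝ} {C : ℝ} (hC : Dom (ext0 lam) C) (x : ℝ) {q : ℝ} (hq : 2 ≤ q) :
    ∫ v in x..q, ext0 lam v = tail lam x := by
  rw [← intervalIntegral.integral_add_adjacent_intervals (hC.ii x 2) (hC.ii 2 q)]
  have := tail_ge lam hq
  rw [tail, intervalIntegral.integral_symm] at this
  rw [tail]; linarith

theorem tail_cl {lam : ℝ → ℝ} (hlam : IsPreAverageFn lam) (x : ℝ) :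
    tail lam (cl x) = tail lam x := by
  rcases le_total x 0 with h | h
  · rw [tail_le hlam h, show cl x = 0 by
      rw [cl, max_eq_left]; exact (min_le_left _ _).trans h, tail_le hlam le_rfl]
  rcases le_total x 2 with h' | h'
  · rw [cl_of_mem ⟨h, h'⟩]
  · rw [tail_ge lam h', show cl x = 2 by rw [cl, min_eq_right h']; norm_num, tail_ge lam le_rfl]

theorem tail_dom {lam : ℝ → ℝ} (hlam : IsPreAverageFn lam) {M C : ℝ} (hC : Dom (ext0 lam) C)
    (hM : ∀ x, |ext0 lam x| ≤ M) : Dom (tail lam) (2 * M) := by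
  have m0 : 0 ≤ M := (abs_nonneg _).trans (hM 0)
  refine ⟨fun x => M * cl x, fun x y h => mul_le_mul_of_nonneg_left (cl_mono h) m0, ?_, ?_⟩
  · intro x y
    have h1 := mul_le_mul_of_nonneg_left (cl_le y) m0
    have h2 := mul_nonneg m0 (cl_nonneg x)
    simp only; linarith
  · intro x y hxy
    rw [← tail_cl hlam x, ← tail_cl hlam y]
    have h1 := intervalIntegral.norm_integral_le_of_norm_le_const (a := cl x) (b := cl y)
      (f := ext0 lam) (C := M) (fun t _ => hM t)
    have h2 := intervalIntegral.integral_add_adjacent_intervals (hC.ii (cl x) (cl y))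
      (hC.ii (cl y) 2)
    have h3 : tail lam (cl y) - tail lam (cl x) = - ∫ v in (cl x)..(cl y), ext0 lam v := by
      rw [tail, tail]; linarith
    rw [h3, abs_neg]
    rw [Real.norm_eq_abs, abs_of_nonneg (sub_nonneg.2 (cl_mono hxy))] at h1
    simp only; linarith

theorem tail_bound {lam : ℝ → ℝ} (hlam : IsPreAverageFn lam) {M C : ℝ} (hC : Dom (ext0 lam) C)
    (hM : ∀ x, |ext0 lam x| ≤ M) (x : ℝ) : |tail lam x| ≤ 2 * M := by
  obtain ⟨V, _, h1, h2⟩ := tail_dom hlam hC hM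
  have := h2 x (max x 2) (le_max_left _ _)
  rw [tail_ge lam (le_max_right x 2), zero_sub, abs_neg] at this
  exact this.trans (h1 _ _)

theorem tail_eq {lam : ℝ → ℝ} (hlam : IsPreAverageFn lam) {C : ℝ} (hC : Dom (ext0 lam) C)
    {u : ℝ} (hu : u ∈ Set.Icc (0:ℝ) 2) : tail lam u = bigLam lam u := by
  have h2 := intervalIntegral.integral_add_adjacent_intervals (hC.ii 0 u) (hC.ii u 2)
  rw [integral_two_zero hlam] at h2
  have h3 : ∫ v in (0:ℝ)..u, ext0 lam v = ∫ v in (0:ℝ)..u, lam v := by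
    apply intervalIntegral.integral_congr
    intro v hv
    rw [Set.uIcc_of_le hu.1] at hv
    exact ext0_mem ⟨hv.1, hv.2.trans hu.2⟩
  rw [tail, bigLam, ← h3]; linarith

theorem tail_symm {lam : ℝ → ℝ} (hlam : IsPreAverageFn lam) {C : ℝ} (hC : Dom (ext0 lam) C)
    (u : ℝ) : tail lam (1 + u) = tail lam (1 - u) := by
  have h2 := intervalIntegral.integral_add_adjacent_intervals (hC.ii (1 - u) (1 + u))
    (hC.ii (1 + u) 2)
  rw [integral_symm_zero hlam] at h2
  rw [tail, tail]; linarith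

theorem integral_G {lam : ℝ → ℝ} (hlam : IsPreAverageFn lam) {C : ℝ} (hC : Dom (ext0 lam) C)
    {p q : ℝ} (hp : p ≤ 1) (hq : 2 ≤ q) :
    ∫ x in p..q, tail lam x * tail lam (x - 1)
      = ∫ u in (0:ℝ)..1, bigLam lam u * bigLam lam (1 - u) := by
  rw [integral_supp (α := 1) (β := 2) _ hp (by norm_num) hq]
  · have := intervalIntegral.integral_comp_add_left (a := 0) (b := 1)
      (fun x => tail lam x * tail lam (x - 1)) 1
    norm_num at this
    rw [← this]
    apply intervalIntegral.integral_congr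
    intro u hu
    rw [Set.uIcc_of_le (by norm_num)] at hu
    simp only
    rw [tail_symm hlam hC, tail_eq hlam hC ⟨by linarith [hu.2], by linarith [hu.1]⟩,
      tail_eq hlam hC ⟨hu.1, by linarith [hu.2]⟩, mul_comm]
  · intro x _ hx
    rcases lt_or_ge x 1 with h | h
    · rw [tail_le hlam (x := x - 1) (by linarith), mul_zero]
    · have : 2 ≤ x := by
        by_contra hc
        exact hx ⟨h, by linarith⟩
      rw [tail_ge lam this, zero_mul]

theorem integral_g {lam : ℝ → ℝ} (hlam : IsPreAverageFn lam)
    {p q : ℝ} (hp : p ≤ 1) (hq : 2 ≤ q) :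
    ∫ x in p..q, ext0 lam x * ext0 lam (x - 1)
      = - ∫ u in (0:ℝ)..1, lam u * lam (1 - u) := by
  rw [integral_supp (α := 1) (β := 2) _ hp (by norm_num) hq]
  · have := intervalIntegral.integral_comp_add_left (a := 0) (b := 1)
      (fun x => ext0 lam x * ext0 lam (x - 1)) 1
    norm_num at this
    rw [← this, ← intervalIntegral.integral_neg]
    apply intervalIntegral.integral_congr
    intro u hu
    rw [Set.uIcc_of_le (by norm_num)] at hu
    simp only
    have h := ext0_antisymm hlam (1 - u)
    rw [show 2 - (1 - u) = 1 + u by ring] at h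
    rw [h, ext0_mem ⟨by linarith [hu.2], by linarith [hu.1]⟩,
      ext0_mem ⟨hu.1, by linarith [hu.2]⟩]
    ring
  · intro x _ hx
    rcases lt_or_ge x 1 with h | h
    · rw [ext0_zero (x := x - 1) (fun hh => by linarith [hh.1]), mul_zero]
    · rw [ext0_zero (x := x) (fun hh => hx ⟨h, hh.2⟩), zero_mul]

theorem preAvg_eq {Ω : Type*} (lam : ℝ → ℝ) {n m : ℕ} (hn : 0 < n) (hm : 0 < m)
    (A : ℕ → Ω → ℝ) (i : ℕ) (ω : Ω) :
    preAvg lam n m A i ω = ((m : ℝ) / n) * ∑ j ∈ Finset.range (n + 1),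
      ext0 lam ((m : ℝ) / n * j - ((i : ℝ) - 2)) * A j ω := by
  have hn' : (0:ℝ) < n := by exact_mod_cast hn
  have hm' : (0:ℝ) < m := by exact_mod_cast hm
  rw [preAvg, blockIdx, Finset.sum_filter]
  congr 1
  apply Finset.sum_congr rfl
  intro j _
  have e : (m : ℝ) * j / n = (m : ℝ) / n * j := by ring
  have hiff : (((i : ℝ) - 2) / m ≤ (j : ℝ) / n ∧ (j : ℝ) / n ≤ (i : ℝ) / m) ↔
      (m : ℝ) / n * j - ((i : ℝ) - 2) ∈ Set.Icc (0:ℝ) 2 := by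
    rw [Set.mem_Icc, div_le_iff₀ hm', le_div_iff₀ hm']
    have : (j : ℝ) / n * m = (m : ℝ) / n * j := by ring
    rw [this]
    constructor <;> rintro ⟨h1, h2⟩ <;> constructor <;> linarith
  rw [e]
  by_cases h : (m : ℝ) / n * j - ((i : ℝ) - 2) ∈ Set.Icc (0:ℝ) 2
  · rw [if_pos (hiff.2 h), ext0_mem h]
  · rw [if_neg (fun hh => h (hiff.1 hh)), ext0_zero h, zero_mul]

theorem sum_min (n : ℕ) (φ ψ : ℕ → ℝ) :
    ∑ j ∈ Finset.range (n + 1), ∑ l ∈ Finset.range (n + 1), φ j * ψ l * (min j l : ℝ)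
      = ∑ k ∈ Finset.Ico 1 (n + 1),
        (∑ j ∈ Finset.Ico k (n + 1), φ j) * (∑ l ∈ Finset.Ico k (n + 1), ψ l) := by
  have h1 : ∀ k (φ : ℕ → ℝ), ∑ j ∈ Finset.Ico k (n + 1), φ j
      = ∑ j ∈ Finset.range (n + 1), if k ≤ j then φ j else 0 := by
    intro k φ
    rw [← Finset.sum_filter]
    apply Finset.sum_congr _ (fun _ _ => rfl)
    ext j; simp; omega
  simp_rw [h1 _ φ, h1 _ ψ, Finset.sum_mul_sum]
  rw [Finset.sum_comm]
  simp_rw [Finset.sum_comm (s := Finset.Ico 1 (n + 1))]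
  rw [Finset.sum_comm]
  apply Finset.sum_congr rfl
  intro j hj
  apply Finset.sum_congr rfl
  intro l hl
  have h2 : ∀ k, ((if k ≤ j then φ j else 0) * if k ≤ l then ψ l else 0)
      = if k ≤ min j l then φ j * ψ l else 0 := by
    intro k
    by_cases a : k ≤ j <;> by_cases b : k ≤ l <;> simp [a, b]
  simp_rw [h2]
  rw [← Finset.sum_filter, Finset.sum_const, nsmul_eq_mul, mul_comm]
  congr 1
  have : (Finset.Ico 1 (n + 1)).filter (fun k => k ≤ min j l) = Finset.Icc 1 (min j l) := by
    ext k; simp at hj hl ⊢; omega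
  rw [this]; simp

section model
variable {Ω : Type*} [MeasureSpace Ω] [IsProbabilityMeasure (ℙ : Measure Ω)]

theorem memLp_of_map {X : Ω → ℝ} (hX : Measurable X) {v : NNReal}
    (h : Measure.map X ℙ = gaussianReal 0 v) : MemLp X 2 (ℙ : Measure Ω) ∧ ∫ ω, X ω = 0 := by
  constructor
  · have h2 : MemLp (id : ℝ → ℝ) 2 (Measure.map X ℙ) := by
      rw [h]; exact memLp_id_gaussianReal 2
    exact (memLp_map_measure_iff (by fun_prop) hX.aemeasurable).1 h2
  · have := integral_map (μ := ℙ) hX.aemeasurable (f := fun x : ℝ => x) (by fun_prop)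
    rw [← this, h]
    exact integral_id_gaussianReal

theorem model_memLp {n : ℕ} {W η : ℕ → Ω → ℝ} (hm : IsSimplifiedModel n W η) {j : ℕ}
    (hj : j ≤ n) : (MemLp (W j) 2 (ℙ : Measure Ω) ∧ ∫ ω, W j ω = 0) ∧
      (MemLp (η j) 2 (ℙ : Measure Ω) ∧ ∫ ω, η j ω = 0) := by
  obtain ⟨hW, hη, hG, _⟩ := hm
  have hj' : j ∈ Finset.range (n + 1) := by simp; omega
  constructor
  · obtain ⟨v, hv⟩ := hG (fun k => if k = j then 1 else 0) (fun _ => 0)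
    apply memLp_of_map (hW j) (v := v)
    rw [← hv]; congr 1; ext ω
    simp [hj]
    try omega
  · obtain ⟨v, hv⟩ := hG (fun _ => 0) (fun k => if k = j then 1 else 0)
    apply memLp_of_map (hη j) (v := v)
    rw [← hv]; congr 1; ext ω
    simp [hj]
    try omega

theorem obs_facts {n : ℕ} {W η : ℕ → Ω → ℝ} (hm : IsSimplifiedModel n W η) (σ τ : ℝ) {j : ℕ}
    (hj : j ≤ n) : MemLp (obs σ τ W η j) 2 (ℙ : Measure Ω) ∧ ∫ ω, obs σ τ W η j ω = 0 := by
  obtain ⟨⟨h1, h2⟩, h3, h4⟩ := model_memLp hm hj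
  refine ⟨(h1.const_mul σ).add (h3.const_mul τ), ?_⟩
  simp only [obs]
  rw [integral_add ((h1.integrable (by norm_num)).const_mul σ)
    ((h3.integrable (by norm_num)).const_mul τ), integral_const_mul, integral_const_mul, h2, h4]
  simp

theorem obs_cov {n : ℕ} {W η : ℕ → Ω → ℝ} (hm : IsSimplifiedModel n W η) (σ τ : ℝ) {j l : ℕ}
    (hj : j ≤ n) (hl : l ≤ n) : ∫ ω, obs σ τ W η j ω * obs σ τ W η l ω
      = σ ^ 2 * ((min j l : ℝ) / n) + τ ^ 2 * (if j = l then 1 else 0) := by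
  obtain ⟨⟨a1, _⟩, a3, _⟩ := model_memLp hm hj
  obtain ⟨⟨b1, _⟩, b3, _⟩ := model_memLp hm hl
  obtain ⟨_, _, _, c1, c2, c3⟩ := hm
  have i1 : Integrable (fun ω => W j ω * W l ω) := a1.integrable_mul b1
  have i2 : Integrable (fun ω => η j ω * η l ω) := a3.integrable_mul b3
  have i3 : Integrable (fun ω => W j ω * η l ω) := a1.integrable_mul b3
  have i4 : Integrable (fun ω => W l ω * η j ω) := b1.integrable_mul a3
  have e : (fun ω => obs σ τ W η j ω * obs σ τ W η l ω) = fun ω =>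
      (σ ^ 2 * (W j ω * W l ω) + τ ^ 2 * (η j ω * η l ω)) +
      (σ * τ * (W j ω * η l ω) + σ * τ * (W l ω * η j ω)) := by
    ext ω; simp only [obs]; ring
  have j1 : Integrable (fun ω => σ ^ 2 * (W j ω * W l ω) + τ ^ 2 * (η j ω * η l ω)) :=
    (i1.const_mul _).add (i2.const_mul _)
  have j2 : Integrable (fun ω => σ * τ * (W j ω * η l ω) + σ * τ * (W l ω * η j ω)) :=
    (i3.const_mul _).add (i4.const_mul _)
  rw [e, integral_add j1 j2, integral_add (i1.const_mul _) (i2.const_mul _),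
    integral_add (i3.const_mul _) (i4.const_mul _)]
  simp only [integral_const_mul]
  rw [c1 j l hj hl, c2 j l hj hl, c3 j l hj hl, c3 l j hl hj]
  ring

theorem cov_eq {n : ℕ} {W η : ℕ → Ω → ℝ} (hm : IsSimplifiedModel n W η) (σ τ h : ℝ)
    (φ ψ : ℕ → ℝ) :
    (∫ ω, (h * ∑ j ∈ Finset.range (n + 1), φ j * obs σ τ W η j ω) *
        (h * ∑ l ∈ Finset.range (n + 1), ψ l * obs σ τ W η l ω))
      - (∫ ω, h * ∑ j ∈ Finset.range (n + 1), φ j * obs σ τ W η j ω) *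
        (∫ ω, h * ∑ l ∈ Finset.range (n + 1), ψ l * obs σ τ W η l ω)
      = σ ^ 2 / n * ∑ k ∈ Finset.Ico 1 (n + 1),
          (h * ∑ j ∈ Finset.Ico k (n + 1), φ j) * (h * ∑ l ∈ Finset.Ico k (n + 1), ψ l)
        + τ ^ 2 * h * (h * ∑ j ∈ Finset.range (n + 1), φ j * ψ j) := by
  have z : ∫ ω, h * ∑ j ∈ Finset.range (n + 1), φ j * obs σ τ W η j ω = 0 := by
    rw [integral_const_mul, integral_finsetSum]
    · rw [Finset.sum_eq_zero, mul_zero]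
      intro j hj
      rw [integral_const_mul, (obs_facts hm σ τ (by simp at hj; omega)).2, mul_zero]
    · intro j hj
      exact ((obs_facts hm σ τ (by simp at hj; omega)).1.integrable (by norm_num)).const_mul _
  rw [z, zero_mul, sub_zero]
  have e : (fun ω => (h * ∑ j ∈ Finset.range (n + 1), φ j * obs σ τ W η j ω) *
        (h * ∑ l ∈ Finset.range (n + 1), ψ l * obs σ τ W η l ω)) = fun ω =>
      h ^ 2 * ∑ j ∈ Finset.range (n + 1), ∑ l ∈ Finset.range (n + 1),
        φ j * ψ l * (obs σ τ W η j ω * obs σ τ W η l ω) := by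
    ext ω
    rw [mul_mul_mul_comm, Finset.sum_mul_sum, ← sq]
    congr 1
    refine Finset.sum_congr rfl fun j _ => Finset.sum_congr rfl fun l _ => by ring
  have hInteg : ∀ j ∈ Finset.range (n + 1), ∀ l ∈ Finset.range (n + 1),
      Integrable (fun ω => φ j * ψ l * (obs σ τ W η j ω * obs σ τ W η l ω)) := by
    intro j hj l hl
    exact ((obs_facts hm σ τ (by simp at hj; omega)).1.integrable_mul
      (obs_facts hm σ τ (by simp at hl; omega)).1).const_mul _
  rw [e, integral_const_mul, integral_finsetSum _ (fun j hj =>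
    integrable_finsetSum _ (fun l hl => hInteg j hj l hl))]
  have e2 : ∑ j ∈ Finset.range (n + 1), ∫ ω, ∑ l ∈ Finset.range (n + 1),
        φ j * ψ l * (obs σ τ W η j ω * obs σ τ W η l ω)
      = ∑ j ∈ Finset.range (n + 1), ∑ l ∈ Finset.range (n + 1),
        (σ ^ 2 / n * (φ j * ψ l * (min j l : ℝ)) + if j = l then τ ^ 2 * (φ j * ψ l) else 0) := by
    refine Finset.sum_congr rfl fun j hj => ?_
    rw [integral_finsetSum _ (fun l hl => hInteg j hj l hl)]
    refine Finset.sum_congr rfl fun l hl => ?_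
    rw [integral_const_mul, obs_cov hm σ τ (by simp at hj; omega) (by simp at hl; omega)]
    split_ifs <;> ring
  rw [e2]
  simp only [Finset.sum_add_distrib, ← Finset.mul_sum]
  rw [sum_min]
  have e3 : ∑ j ∈ Finset.range (n + 1), ∑ l ∈ Finset.range (n + 1),
      (if j = l then τ ^ 2 * (φ j * ψ l) else 0) = τ ^ 2 * ∑ j ∈ Finset.range (n + 1), φ j * ψ j := by
    rw [Finset.mul_sum]
    refine Finset.sum_congr rfl fun j hj => ?_
    rw [Finset.sum_ite_eq, if_pos hj]
  rw [e3]
  have e4 : ∀ k, (h * ∑ j ∈ Finset.Ico k (n + 1), φ j) * (h * ∑ l ∈ Finset.Ico k (n + 1), ψ l)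
    = h ^ 2 * ((∑ j ∈ Finset.Ico k (n + 1), φ j) * (∑ l ∈ Finset.Ico k (n + 1), ψ l)) := by
    intro k; ring
  simp_rw [e4]
  rw [← Finset.mul_sum]
  ring

end model

theorem mOf_bound {c : ℝ} (hc : 0 < c) {n : ℕ} (hn : ⌈c ^ 2⌉₊ + 1 ≤ n) :
    (mOf c n : ℝ) ^ 2 ≤ 4 * c ^ 2 * n := by
  have h1 : c ^ 2 ≤ n := by
    have := Nat.le_ceil (c ^ 2)
    have h2 : ((⌈c ^ 2⌉₊ + 1 : ℕ) : ℝ) ≤ n := by exact_mod_cast hn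
    push_cast at h2; linarith
  have h2 : c ≤ Real.sqrt n := Real.le_sqrt_of_sq_le h1
  have hs : 0 < Real.sqrt n := hc.trans_le h2
  have hx : 1 ≤ Real.sqrt n / c := by rw [le_div_iff₀ hc]; linarith
  have hk1 : 1 ≤ ⌊Real.sqrt n / c⌋₊ := by rw [Nat.one_le_floor_iff]; exact hx
  have hk2 := Nat.lt_floor_add_one (Real.sqrt n / c)
  set k := ⌊Real.sqrt n / c⌋₊ with hk
  have hk1' : (1:ℝ) ≤ k := by exact_mod_cast hk1
  have h3 : Real.sqrt n ≤ 2 * c * k := by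
    have : Real.sqrt n / c ≤ 2 * k := by linarith
    rw [div_le_iff₀ hc] at this; linarith
  have h4 : (mOf c n : ℝ) * k ≤ n := by
    have : mOf c n * k ≤ n := by rw [mOf, ← hk]; exact Nat.div_mul_le_self n k
    exact_mod_cast this
  have hsq : Real.sqrt n * Real.sqrt n = n := Real.mul_self_sqrt (Nat.cast_nonneg n)
  have hm0 : (0:ℝ) ≤ mOf c n := Nat.cast_nonneg _
  have h5 : (mOf c n : ℝ) * Real.sqrt n ≤ 2 * c * n := by
    calc (mOf c n : ℝ) * Real.sqrt n ≤ mOf c n * (2 * c * k) := mul_le_mul_of_nonneg_left h3 hm0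
      _ = 2 * c * (mOf c n * k) := by ring
      _ ≤ 2 * c * n := mul_le_mul_of_nonneg_left h4 (by positivity)
  have h6 : (mOf c n : ℝ) ≤ 2 * c * Real.sqrt n := by
    have h7 : 2 * c * n = 2 * c * Real.sqrt n * Real.sqrt n := by rw [mul_assoc _ (Real.sqrt n), hsq]
    rw [h7] at h5
    exact le_of_mul_le_mul_right h5 hs
  calc (mOf c n : ℝ) ^ 2 ≤ (2 * c * Real.sqrt n) ^ 2 := pow_le_pow_left₀ hm0 h6 2
    _ = 4 * c ^ 2 * (Real.sqrt n * Real.sqrt n) := by ring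
    _ = _ := by rw [hsq]

theorem sum_abs_tail {lam : ℝ → ℝ} (hlam : IsPreAverageFn lam) {M C : ℝ} (hC : Dom (ext0 lam) C)
    (hM : ∀ x, |ext0 lam x| ≤ M) {h a : ℝ} (hh : 0 < h) (ha : 0 ≤ a) {n : ℕ}
    (hq : 2 ≤ h * (n + 1 : ℕ) - a) :
    h * ∑ k ∈ Finset.Ico 1 (n + 1), |tail lam (h * k - a)|
      ≤ (∫ x in (0:ℝ)..2, |tail lam x|) + h * (2 * M) := by
  have h1 := (tail_dom hlam hC hM).abs.riemann hh a (Nat.zero_le (n + 1))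
  rw [integral_supp (α := 0) (β := 2) _ (by simpa using ha) (by norm_num) hq] at h1
  · have h2 : ∑ k ∈ Finset.Ico 1 (n + 1), |tail lam (h * k - a)|
        ≤ ∑ k ∈ Finset.Ico 0 (n + 1), |tail lam (h * k - a)| :=
      Finset.sum_le_sum_of_subset_of_nonneg (Finset.Ico_subset_Ico_left (by norm_num))
        (fun _ _ _ => abs_nonneg _)
    have h3 := mul_le_mul_of_nonneg_left h2 hh.le
    have h4 := (abs_le.1 h1).2
    linarith
  · intro x _ hx
    rcases lt_or_ge x 0 with h | h
    · rw [tail_le hlam h.le, abs_zero]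
    · rw [tail_ge lam (not_lt.1 fun h' => hx ⟨h, h'.le⟩), abs_zero]

theorem main_bound {lam : ℝ → ℝ} (hlam : IsPreAverageFn lam) {M C D : ℝ}
    (hC : Dom (ext0 lam) C) (hM : ∀ x, |ext0 lam x| ≤ M) (σ τ : ℝ) {n m i : ℕ}
    (hn : 0 < n) (hmn : m ≤ n) (hD : (m : ℝ) ^ 2 ≤ D * n) (hi : 2 ≤ i) (him : i + 1 ≤ m) :
    |(σ ^ 2 / n * ∑ k ∈ Finset.Ico 1 (n + 1),
          ((m : ℝ) / n * ∑ j ∈ Finset.Ico k (n + 1), ext0 lam ((m : ℝ) / n * j - ((i : ℝ) - 2))) *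
          ((m : ℝ) / n * ∑ l ∈ Finset.Ico k (n + 1),
            ext0 lam ((m : ℝ) / n * l - (((i + 1 : ℕ) : ℝ) - 2)))
        + τ ^ 2 * ((m : ℝ) / n) * ((m : ℝ) / n * ∑ j ∈ Finset.range (n + 1),
          ext0 lam ((m : ℝ) / n * j - ((i : ℝ) - 2)) *
          ext0 lam ((m : ℝ) / n * j - (((i + 1 : ℕ) : ℝ) - 2))))
      - (σ ^ 2 / (m : ℝ)) * (∫ u in (0:ℝ)..1, bigLam lam u * bigLam lam (1 - u))
      + τ ^ 2 * ((m : ℝ) / n) * ∫ u in (0:ℝ)..1, lam u * lam (1 - u)|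
    ≤ (σ ^ 2 * (D * C ^ 2 + 2 * C * ((∫ x in (0:ℝ)..2, |tail lam x|) + 2 * M) + 8 * M ^ 2)
        + τ ^ 2 * (D * (2 * M * C))) / n := by
  have hn' : (0:ℝ) < n := by exact_mod_cast hn
  have hm' : (0:ℝ) < m := by exact_mod_cast (by omega : 0 < m)
  have hmn' : (m:ℝ) ≤ n := by exact_mod_cast hmn
  have hi' : (2:ℝ) ≤ i := by exact_mod_cast hi
  have him' : (i:ℝ) + 1 ≤ m := by exact_mod_cast him
  have m0 : 0 ≤ M := (abs_nonneg _).trans (hM 0)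
  have c0 := hC.nonneg
  set h : ℝ := (m : ℝ) / n with hh
  have hpos : 0 < h := div_pos hm' hn'
  have hle1 : h ≤ 1 := (div_le_one hn').2 hmn'
  have hnm : h * n = m := by rw [hh]; field_simp
  have hhD : h ^ 2 * n ≤ D := by
    have : h ^ 2 * n * n = (m:ℝ) ^ 2 := by rw [← hnm]; ring
    rw [← this] at hD
    exact le_of_mul_le_mul_right hD hn'
  have hup : h * ((n + 1 : ℕ) : ℝ) = m + h := by push_cast; rw [mul_add, hnm, mul_one]
  set a : ℝ := (i : ℝ) - 2 with ha
  have ha0 : 0 ≤ a := by linarith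
  have ha1 : ((i + 1 : ℕ) : ℝ) - 2 = a + 1 := by push_cast; ring
  rw [ha1]
  have hq1 : 2 ≤ h * ((n + 1 : ℕ) : ℝ) - a := by rw [hup]; linarith
  have hq2 : 2 ≤ h * ((n + 1 : ℕ) : ℝ) - (a + 1) := by rw [hup]; linarith
  set I := ∫ u in (0:ℝ)..1, bigLam lam u * bigLam lam (1 - u) with hI
  set J := ∫ u in (0:ℝ)..1, lam u * lam (1 - u) with hJ
  set T := ∫ x in (0:ℝ)..2, |tail lam x| with hT
  -- noise part
  have noise : |h * ∑ j ∈ Finset.range (n + 1), ext0 lam (h * j - a) * ext0 lam (h * j - (a + 1))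
      + J| ≤ h * (2 * M * C) := by
    have h1 := (hC.mul (hC.shift 1) hM (fun x => hM _)).riemann hpos a (Nat.zero_le (n + 1))
    rw [integral_g hlam (by simp; linarith) hq1, ← Finset.range_eq_Ico] at h1
    simp only [sub_sub, ← hJ] at h1
    rw [sub_neg_eq_add] at h1
    refine h1.trans (le_of_eq (by ring))
  set A : ℕ → ℝ := fun k => h * ∑ j ∈ Finset.Ico k (n + 1), ext0 lam (h * j - a) with hA
  set B : ℕ → ℝ := fun k => h * ∑ j ∈ Finset.Ico k (n + 1), ext0 lam (h * j - (a + 1)) with hB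
  set F : ℕ → ℝ := fun k => tail lam (h * k - a) with hF
  set F' : ℕ → ℝ := fun k => tail lam (h * k - (a + 1)) with hF'
  have hAF : ∀ k ∈ Finset.Ico 1 (n + 1), |A k - F k| ≤ h * C := by
    intro k hk
    have h1 := hC.riemann hpos a (Finset.mem_Ico.1 hk).2.le
    rwa [integral_to hC _ hq1] at h1
  have hBF : ∀ k ∈ Finset.Ico 1 (n + 1), |B k - F' k| ≤ h * C := by
    intro k hk
    have h1 := hC.riemann hpos (a + 1) (Finset.mem_Ico.1 hk).2.le
    rwa [integral_to hC _ hq2] at h1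
  have s1 : h * ∑ k ∈ Finset.Ico 1 (n + 1), |F k| ≤ T + 2 * M := by
    have := sum_abs_tail hlam hC hM hpos ha0 hq1
    have h2 := mul_le_mul_of_nonneg_right hle1 (by linarith : 0 ≤ 2 * M)
    linarith
  have s2 : h * ∑ k ∈ Finset.Ico 1 (n + 1), |F' k| ≤ T + 2 * M := by
    have := sum_abs_tail hlam hC hM hpos (by linarith : 0 ≤ a + 1) hq2
    have h2 := mul_le_mul_of_nonneg_right hle1 (by linarith : 0 ≤ 2 * M)
    linarith
  have e1 : |∑ k ∈ Finset.Ico 1 (n + 1), A k * B k - ∑ k ∈ Finset.Ico 1 (n + 1), F k * F' k|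
      ≤ D * C ^ 2 + 2 * C * (T + 2 * M) := by
    rw [← Finset.sum_sub_distrib]
    calc _ ≤ ∑ k ∈ Finset.Ico 1 (n + 1), |A k * B k - F k * F' k| :=
          Finset.abs_sum_le_sum_abs _ _
      _ ≤ ∑ k ∈ Finset.Ico 1 (n + 1), (h ^ 2 * C ^ 2 + C * (h * |F k|) + C * (h * |F' k|)) := by
          refine Finset.sum_le_sum fun k hk => ?_
          have e : A k * B k - F k * F' k = (A k - F k) * (B k - F' k) + F k * (B k - F' k)
            + F' k * (A k - F k) := by ring
          rw [e]
          refine (abs_add_three _ _ _).trans ?_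
          rw [abs_mul, abs_mul, abs_mul]
          have b0 : 0 ≤ h * C := by positivity
          have b1 := mul_le_mul (hAF k hk) (hBF k hk) (abs_nonneg _) b0
          have b2 := mul_le_mul_of_nonneg_left (hBF k hk) (abs_nonneg (F k))
          have b3 := mul_le_mul_of_nonneg_left (hAF k hk) (abs_nonneg (F' k))
          linarith
      _ = h ^ 2 * n * C ^ 2 + C * (h * ∑ k ∈ Finset.Ico 1 (n + 1), |F k|)
          + C * (h * ∑ k ∈ Finset.Ico 1 (n + 1), |F' k|) := by
          simp only [Finset.sum_add_distrib, ← Finset.mul_sum]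
          simp; ring
      _ ≤ _ := by
          have b1 := mul_le_mul_of_nonneg_right hhD (sq_nonneg C)
          have b2 := mul_le_mul_of_nonneg_left s1 c0
          have b3 := mul_le_mul_of_nonneg_left s2 c0
          linarith
  have e2 : |h * ∑ k ∈ Finset.Ico 1 (n + 1), F k * F' k - I| ≤ h * (8 * M ^ 2) := by
    have hTd := tail_dom hlam hC hM
    have hTb := tail_bound hlam hC hM
    have h1 := (hTd.mul (hTd.shift 1) hTb (fun x => hTb _)).riemann hpos a
      (by omega : 1 ≤ n + 1)
    rw [integral_G hlam hC (by simp; linarith) hq1] at h1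
    simp only [sub_sub, ← hI] at h1
    refine h1.trans (le_of_eq (by ring))
  have e3 : σ ^ 2 / n * ∑ k ∈ Finset.Ico 1 (n + 1), F k * F' k - σ ^ 2 / m * I
      = σ ^ 2 / m * (h * ∑ k ∈ Finset.Ico 1 (n + 1), F k * F' k - I) := by
    rw [← hnm]; field_simp
  have total : (σ ^ 2 / n * ∑ k ∈ Finset.Ico 1 (n + 1), A k * B k
        + τ ^ 2 * h * (h * ∑ j ∈ Finset.range (n + 1), ext0 lam (h * j - a) *
          ext0 lam (h * j - (a + 1)))) - σ ^ 2 / m * I + τ ^ 2 * h * J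
      = σ ^ 2 / n * (∑ k ∈ Finset.Ico 1 (n + 1), A k * B k - ∑ k ∈ Finset.Ico 1 (n + 1), F k * F' k)
        + σ ^ 2 / m * (h * ∑ k ∈ Finset.Ico 1 (n + 1), F k * F' k - I)
        + τ ^ 2 * h * (h * ∑ j ∈ Finset.range (n + 1), ext0 lam (h * j - a) *
          ext0 lam (h * j - (a + 1)) + J) := by
    rw [← e3]; ring
  rw [total]
  refine (abs_add_three _ _ _).trans ?_
  rw [abs_mul, abs_mul, abs_mul, abs_of_nonneg (by positivity : 0 ≤ σ ^ 2 / (n:ℝ)),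
    abs_of_nonneg (by positivity : 0 ≤ σ ^ 2 / (m:ℝ)), abs_of_nonneg (by positivity : 0 ≤ τ ^ 2 * h)]
  have f1 := mul_le_mul_of_nonneg_left e1 (by positivity : 0 ≤ σ ^ 2 / (n:ℝ))
  have f2 := mul_le_mul_of_nonneg_left e2 (by positivity : 0 ≤ σ ^ 2 / (m:ℝ))
  have f3 := mul_le_mul_of_nonneg_left noise (by positivity : 0 ≤ τ ^ 2 * h)
  have f2' : σ ^ 2 / (m:ℝ) * (h * (8 * M ^ 2)) = σ ^ 2 / n * (8 * M ^ 2) := by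
    rw [← hnm]; field_simp
  have f3' : τ ^ 2 * h * (h * (2 * M * C)) ≤ τ ^ 2 * (D * (2 * M * C)) / n := by
    rw [le_div_iff₀ hn']
    have := mul_le_mul_of_nonneg_left hhD (by positivity : 0 ≤ τ ^ 2 * (2 * M * C))
    linarith
  have fin : (σ ^ 2 * (D * C ^ 2 + 2 * C * (T + 2 * M) + 8 * M ^ 2) + τ ^ 2 * (D * (2 * M * C))) / n
      = σ ^ 2 / n * (D * C ^ 2 + 2 * C * (T + 2 * M)) + σ ^ 2 / n * (8 * M ^ 2)
        + τ ^ 2 * (D * (2 * M * C)) / n := by ring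
  rw [fin]
  linarith

end PreAvgAux

theorem preAveragedObs_adjacent_covariance (σ τ c : ℝ) (hσ : 0 < σ) (hτ : 0 < τ) (hc : 0 < c)
    (lam : ℝ → ℝ) (hlam : IsPreAverageFn lam)
    (Ω : ℕ → Type*) [∀ n, MeasureSpace (Ω n)] [∀ n, IsProbabilityMeasure (ℙ : Measure (Ω n))]
    (W η : (n : ℕ) → ℕ → Ω n → ℝ)
    (hmodel : ∀ n, IsSimplifiedModel n (W n) (η n)) :
    ∃ C > 0, ∃ N : ℕ, ∀ n ≥ N, ∀ i : ℕ, 2 ≤ i → i + 1 ≤ mOf c n →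
      |((∫ ω, preAvg lam n (mOf c n) (obs σ τ (W n) (η n)) i ω *
              preAvg lam n (mOf c n) (obs σ τ (W n) (η n)) (i + 1) ω)
          - (∫ ω, preAvg lam n (mOf c n) (obs σ τ (W n) (η n)) i ω) *
            (∫ ω, preAvg lam n (mOf c n) (obs σ τ (W n) (η n)) (i + 1) ω))
          - (σ ^ 2 / (mOf c n : ℝ)) * (∫ u in (0:ℝ)..1, bigLam lam u * bigLam lam (1 - u))
          + τ ^ 2 * ((mOf c n : ℝ) / n) * ∫ u in (0:ℝ)..1, lam u * lam (1 - u)| ≤ C / n := by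
  obtain ⟨M, hM⟩ := PreAvgAux.exists_bound hlam
  obtain ⟨C, hC⟩ := PreAvgAux.ext0_dom hlam
  set K : ℝ := σ ^ 2 * (4 * c ^ 2 * C ^ 2
    + 2 * C * ((∫ x in (0:ℝ)..2, |PreAvgAux.tail lam x|) + 2 * M) + 8 * M ^ 2)
        + τ ^ 2 * (4 * c ^ 2 * (2 * M * C)) with hK
  refine ⟨max K 1, lt_max_of_lt_right one_pos, ⌈c ^ 2⌉₊ + 1, ?_⟩
  intro n hn i hi him
  have hn0 : 0 < n := by omega
  have hm0 : 0 < mOf c n := by omega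
  simp only [PreAvgAux.preAvg_eq lam hn0 hm0]
  rw [PreAvgAux.cov_eq (hmodel n)]
  refine (PreAvgAux.main_bound hlam hC hM σ τ hn0 (Nat.div_le_self _ _)
    (PreAvgAux.mOf_bound hc hn) hi him).trans ?_
  exact div_le_div_of_nonneg_right (le_max_left _ _) (Nat.cast_nonneg n)
end

section
/- In the simplified model (Case III of the covariance computation), there are constants C > 0 and N such that for all n ≥ N and all 2 ≤ i ≤ m, |Var(Ȳ_{i,m}) − σ²/m − τ²(m/n)∫₀² λ(u)² du| ≤ C/n; that is, Var(Ȳ_{i,m}) = (σ²/m)∫₀² Λ(u)² du + τ²(m/n)∫₀² λ(u)² du + O(1/n) uniformly in i, with ∫₀² Λ(u)² du = 1. -/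
open MeasureTheory ProbabilityTheory Real

/-- Bounded, supported in `[0,2]`, Lipschitz away from the finite set `T`. -/
structure PLip (f : ℝ → ℝ) (K M : ℝ) (T : Finset ℝ) : Prop where
  K0 : 0 ≤ K
  M0 : 0 ≤ M
  bd : ∀ x, |f x| ≤ M
  supp : ∀ x, x ∉ Set.Icc (0:ℝ) 2 → f x = 0
  lip : ∀ x y, x ≤ y → (∀ t ∈ T, t ∉ Set.Icc x y) → |f y - f x| ≤ K * (y - x)

theorem PLip.sq {f : ℝ → ℝ} {K M : ℝ} {T : Finset ℝ} (h : PLip f K M T) :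
    PLip (fun x => f x ^ 2) (2 * M * K) (M ^ 2) T where
  K0 := by have := h.K0; have := h.M0; positivity
  M0 := by positivity
  bd x := by rw [abs_pow]; exact pow_le_pow_left₀ (abs_nonneg _) (h.bd x) 2
  supp x hx := by simp [h.supp x hx]
  lip x y hxy hT := by
    have h1 := h.lip x y hxy hT
    have : f y ^ 2 - f x ^ 2 = (f y + f x) * (f y - f x) := by ring
    rw [this, abs_mul]
    have h2 : |f y + f x| ≤ 2 * M := by
      have := abs_add_le (f y) (f x); have := h.bd x; have := h.bd y; linarith
    have := mul_le_mul h2 h1 (abs_nonneg _) (by have := h.M0; positivity)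
    linarith

theorem PLip.cut {f : ℝ → ℝ} {K M : ℝ} {T : Finset ℝ} (h : PLip f K M T) (s : ℝ) :
    PLip (fun x => if s < x then f x else 0) K M (insert s T) where
  K0 := h.K0
  M0 := h.M0
  bd x := by
    split_ifs
    · exact h.bd x
    · simpa using h.M0
  supp x hx := by simp [h.supp x hx]
  lip x y hxy hT := by
    have hs : s ∉ Set.Icc x y := hT s (by simp)
    have hT' : ∀ t ∈ T, t ∉ Set.Icc x y := fun t ht => hT t (by simp [ht])
    have hK : 0 ≤ K * (y - x) := mul_nonneg h.K0 (by linarith)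
    simp only [Set.mem_Icc, not_and_or, not_le] at hs
    rcases hs with hs | hs
    · rw [if_pos hs, if_pos (by linarith)]; exact h.lip x y hxy hT'
    · rw [if_neg (by linarith), if_neg (by linarith)]; simpa using hK

theorem PLip.integrable {f : ℝ → ℝ} {K M : ℝ} {T : Finset ℝ} (h : PLip f K M T) :
    Integrable f := by
  have hcont : ContinuousOn f ((T : Set ℝ)ᶜ) := by
    intro x hx
    apply ContinuousAt.continuousWithinAt
    have ho : IsOpen ((T : Set ℝ)ᶜ) := T.finite_toSet.isClosed.isOpen_compl
    obtain ⟨ε, hε, hb⟩ := Metric.isOpen_iff.1 ho x hx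
    have hL : ∀ y ∈ Metric.ball x ε, |f y - f x| ≤ K * |y - x| := by
      intro y hy
      rw [Metric.mem_ball, Real.dist_eq, abs_lt] at hy
      have key : ∀ z, |z - x| < ε → z ∉ T := by
        intro z hz hzT
        have : z ∈ Metric.ball x ε := by rwa [Metric.mem_ball, Real.dist_eq]
        exact hb this hzT
      rcases le_total x y with hxy | hxy
      · rw [abs_of_nonneg (by linarith : (0:ℝ) ≤ y - x)]
        refine h.lip x y hxy fun t ht hm => key t ?_ ht
        rw [abs_lt]; constructor <;> linarith [hm.1, hm.2]
      · rw [abs_of_nonpos (by linarith : y - x ≤ (0:ℝ)), abs_sub_comm, neg_sub]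
        refine h.lip y x hxy fun t ht hm => key t ?_ ht
        rw [abs_lt]; constructor <;> linarith [hm.1, hm.2]
    rw [ContinuousAt, tendsto_iff_dist_tendsto_zero]
    refine squeeze_zero' (g := fun y => K * |y - x|) (Filter.Eventually.of_forall fun _ => dist_nonneg) ?_ ?_
    · filter_upwards [Metric.ball_mem_nhds x hε] with y hy
      rw [Real.dist_eq]; exact hL y hy
    · have : Continuous fun y : ℝ => K * |y - x| := by fun_prop
      simpa using this.tendsto x
  have hm : AEStronglyMeasurable f volume := by
    have h1 := hcont.aestronglyMeasurable (μ := volume)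
      (T.finite_toSet.isClosed.isOpen_compl.measurableSet)
    rwa [Measure.restrict_eq_self_of_ae_mem] at h1
    have : volume (T : Set ℝ) = 0 := T.finite_toSet.measure_zero _
    simpa using measure_eq_zero_iff_ae_notMem.1 this
  have hi : IntegrableOn f (Set.Icc 0 2) := by
    refine Measure.integrableOn_of_bounded (M := M) (by simp) hm ?_
    exact Filter.Eventually.of_forall fun x => by simpa using h.bd x
  refine (integrableOn_iff_integrable_of_support_subset ?_).1 hi
  intro x hx
  by_contra hc
  exact hx (h.supp x hc)

theorem PLip.integral_eq {f : ℝ → ℝ} {K M : ℝ} {T : Finset ℝ} (h : PLip f K M T) {a b : ℝ}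
    (ha : a ≤ 0) (hb : 2 ≤ b) : ∫ x in a..b, f x = ∫ x, f x := by
  rw [intervalIntegral.integral_of_le (by linarith), ← integral_Icc_eq_integral_Ioc]
  refine setIntegral_eq_integral_of_forall_compl_eq_zero fun x hx => h.supp x fun hc => hx ?_
  exact ⟨by linarith [hc.1], by linarith [hc.2]⟩

theorem PLip.riemann {f : ℝ → ℝ} {K M : ℝ} {T : Finset ℝ} (hf : PLip f K M T)
    {h a : ℝ} (h0 : 0 < h) (h1 : h ≤ 1) (ha : 0 ≤ a) {n : ℕ} (hn : 2 ≤ h * n - a) :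
    |h * ∑ j ∈ Finset.range (n + 1), f (h * j - a) - ∫ x in (0:ℝ)..2, f x|
      ≤ (3 * K + 2 * M * T.card + M) * h := by
  have hK := hf.K0
  have hM := hf.M0
  set u : ℕ → ℝ := fun j => h * j - a with hu
  set G : ℝ → ℝ := fun x => (Set.Icc (-1:ℝ) 2).indicator (fun _ => K * h) x +
    ∑ t ∈ T, (Set.Icc (t - h) t).indicator (fun _ => 2 * M) x with hG
  have hG1 : Integrable ((Set.Icc (-1:ℝ) 2).indicator (fun _ => K * h)) :=
    (integrable_indicator_iff measurableSet_Icc).2 (integrableOn_const (by simp) enorm_ne_top)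
  have hG2 : ∀ t : ℝ, Integrable ((Set.Icc (t - h) t).indicator (fun _ => 2 * M)) := fun t =>
    (integrable_indicator_iff measurableSet_Icc).2 (integrableOn_const (by simp) enorm_ne_top)
  have hGi : Integrable G := hG1.add (integrable_finsetSum _ fun t _ => hG2 t)
  have hG0 : ∀ x, 0 ≤ G x := by
    intro x
    refine add_nonneg (Set.indicator_nonneg (fun _ _ => by positivity) _)
      (Finset.sum_nonneg fun t _ => Set.indicator_nonneg (fun _ _ => by positivity) _)
  have hGint : ∫ x, G x = (3 * K + 2 * M * T.card) * h := by
    rw [hG, integral_add hG1 (integrable_finsetSum _ fun t _ => hG2 t),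
      integral_finsetSum _ fun t _ => hG2 t]
    have e1 : ∀ t : ℝ, ∫ x, (Set.Icc (t - h) t).indicator (fun _ => 2 * M) x = 2 * M * h := by
      intro t
      rw [integral_indicator measurableSet_Icc]
      simp [h0.le]; ring
    simp only [e1]
    rw [integral_indicator measurableSet_Icc]
    simp
    norm_num
    ring
  -- pointwise bound
  have hpt : ∀ x y, x ≤ y → y ≤ x + h → |f y - f x| ≤ G x := by
    intro x y hxy hyx
    by_cases hT : ∀ t ∈ T, t ∉ Set.Icc x y
    · by_cases hx : x ∈ Set.Icc (-1:ℝ) 2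
      · have e := hf.lip x y hxy hT
        have : G x = K * h + ∑ t ∈ T, (Set.Icc (t - h) t).indicator (fun _ => 2 * M) x := by
          simp only [hG, Set.indicator_of_mem hx]
        rw [this]
        have h3 : 0 ≤ ∑ t ∈ T, (Set.Icc (t - h) t).indicator (fun _ => 2 * M) x :=
          (Finset.sum_nonneg fun t _ => Set.indicator_nonneg (fun _ _ => by positivity) _)
        have : K * (y - x) ≤ K * h := mul_le_mul_of_nonneg_left (by linarith) hK
        linarith
      · simp only [Set.mem_Icc, not_and_or, not_le] at hx
        rw [hf.supp x, hf.supp y]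
        · simpa using hG0 x
        · rintro ⟨_, _⟩; rcases hx with hx | hx <;> linarith
        · rintro ⟨_, _⟩; rcases hx with hx | hx <;> linarith
    · push Not at hT
      obtain ⟨t, ht, hxt⟩ := hT
      have e : |f y - f x| ≤ 2 * M := by
        have := abs_sub (f y) (f x); have := hf.bd x; have := hf.bd y; linarith
      have e2 : 2 * M ≤ ∑ t ∈ T, (Set.Icc (t - h) t).indicator (fun _ => 2 * M) x := by
        have := Finset.single_le_sum (f := fun t => (Set.Icc (t - h) t).indicator (fun _ => 2 * M) x)
          (fun t _ => Set.indicator_nonneg (fun _ _ => by positivity) _) ht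
        refine le_trans (le_of_eq ?_) this
        have hm : x ∈ Set.Icc (t - h) t := ⟨by linarith [hxt.2], hxt.1⟩
        simp only [Set.indicator_of_mem hm]
      have e3 : 0 ≤ (Set.Icc (-1:ℝ) 2).indicator (fun _ => K * h) x :=
        Set.indicator_nonneg (fun _ _ => by positivity) _
      simp only [hG]; linarith
  have hstep : ∀ j : ℕ, u (j + 1) = u j + h := by intro j; simp only [hu]; push_cast; ring
  have hcell : ∀ j : ℕ, |h * f (u (j + 1)) - ∫ x in u j..u (j + 1), f x|
      ≤ ∫ x in u j..u (j + 1), G x := by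
    intro j
    have : h * f (u (j + 1)) = ∫ x in u j..u (j + 1), f (u (j + 1)) := by
      rw [intervalIntegral.integral_const, hstep]; simp
    rw [this, ← intervalIntegral.integral_sub (by simp) hf.integrable.intervalIntegrable,
      ← Real.norm_eq_abs]
    refine intervalIntegral.norm_integral_le_of_norm_le (by rw [hstep]; linarith) ?_
      hGi.intervalIntegrable
    refine Filter.Eventually.of_forall fun x hx => ?_
    rw [Real.norm_eq_abs]
    refine hpt x _ hx.2 ?_
    rw [hstep]; linarith [hx.1]
  have hsum : |h * ∑ j ∈ Finset.range n, f (u (j + 1)) - ∫ x in u 0..u n, f x|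
      ≤ ∫ x in u 0..u n, G x := by
    rw [← intervalIntegral.sum_integral_adjacent_intervals
        (fun k _ => hf.integrable.intervalIntegrable),
      ← intervalIntegral.sum_integral_adjacent_intervals
        (fun k _ => hGi.intervalIntegrable), Finset.mul_sum, ← Finset.sum_sub_distrib]
    exact (Finset.abs_sum_le_sum_abs _ _).trans (Finset.sum_le_sum fun j _ => hcell j)
  have hu0 : u 0 ≤ 0 := by simp [hu, ha]
  have hun : 2 ≤ u n := hn
  rw [hf.integral_eq hu0 hun, ← hf.integral_eq le_rfl le_rfl] at hsum
  have hGle : ∫ x in u 0..u n, G x ≤ ∫ x, G x := by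
    rw [intervalIntegral.integral_of_le (by linarith)]
    exact setIntegral_le_integral hGi (Filter.Eventually.of_forall hG0)
  rw [Finset.sum_range_succ']
  have h5 : |h * f (u 0)| ≤ M * h := by
    rw [abs_mul, abs_of_pos h0, mul_comm]; exact mul_le_mul_of_nonneg_right (hf.bd _) h0.le
  have h6 : h * (∑ j ∈ Finset.range n, f (h * ((j + 1 : ℕ) : ℝ) - a) + f (h * ((0:ℕ):ℝ) - a)) -
      ∫ x in (0:ℝ)..2, f x = (h * ∑ j ∈ Finset.range n, f (u (j + 1)) - ∫ x in (0:ℝ)..2, f x)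
        + h * f (u 0) := by
    simp only [hu]; ring
  rw [h6]
  refine (abs_add_le _ _).trans ?_
  rw [hGint] at hGle
  linarith

theorem exists_piece {t : ℕ → ℝ} {x : ℝ} (h0 : t 0 < x) : ∀ N : ℕ, x < t N →
    (∀ i ≤ N, x ≠ t i) → ∃ i < N, t i < x ∧ x < t (i + 1) := by
  intro N
  induction N with
  | zero => intro h; linarith
  | succ k ih =>
    intro h hne
    rcases lt_trichotomy x (t k) with hk | hk | hk
    · obtain ⟨i, hi, h⟩ := ih hk fun i hi => hne i (by omega)
      exact ⟨i, by omega, h⟩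
    · exact absurd hk (hne k (by omega))
    · exact ⟨k, by omega, hk, h⟩

theorem IsPreAverageFn.plip {lam : ℝ → ℝ} (h : IsPreAverageFn lam) :
    ∃ K M T, PLip ((Set.Icc (0:ℝ) 2).indicator lam) K M T := by
  obtain ⟨N, t, K, hN, ht0, htN, hlt, hlip⟩ := h.piecewise_lipschitz
  set T : Finset ℝ := (Finset.range (N + 1)).image t with hT
  have hmem : ∀ i ≤ N, t i ∈ T := fun i hi =>
    Finset.mem_image_of_mem _ (Finset.mem_range.2 (by omega))
  set c : ℕ → ℝ := fun i => (t i + t (i + 1)) / 2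
  set B : ℕ → ℝ := fun i => |lam (c i)| + K * |t (i + 1) - t i|
  have hB : ∀ i, 0 ≤ B i := fun i => by positivity
  have hS1 : 0 ≤ ∑ i ∈ Finset.range N, B i := Finset.sum_nonneg fun i _ => hB i
  have hS2 : 0 ≤ ∑ x ∈ T, |lam x| := Finset.sum_nonneg fun i _ => abs_nonneg _
  have hM0 : 0 ≤ ∑ i ∈ Finset.range N, B i + ∑ x ∈ T, |lam x| := by linarith
  refine ⟨K, ∑ i ∈ Finset.range N, B i + ∑ x ∈ T, |lam x|, T, K.2, hM0, ?_, ?_, ?_⟩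
  · intro x
    by_cases hx : x ∈ Set.Icc (0:ℝ) 2
    · rw [Set.indicator_of_mem hx]
      by_cases hxT : x ∈ T
      · have := Finset.single_le_sum (f := fun x => |lam x|) (fun i _ => abs_nonneg _) hxT
        linarith
      · have hne : ∀ i ≤ N, x ≠ t i := fun i hi e => hxT (e ▸ hmem i hi)
        have hx0 : t 0 < x := lt_of_le_of_ne (ht0 ▸ hx.1) (Ne.symm (hne 0 (by omega)))
        have hxN : x < t N := lt_of_le_of_ne (htN ▸ hx.2) (hne N le_rfl)
        obtain ⟨i, hi, h1, h2⟩ := exists_piece hx0 N hxN hne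
        have hd := (hlip i hi).dist_le_mul x ⟨h1, h2⟩ (c i)
          ⟨by simp only [c]; linarith, by simp only [c]; linarith⟩
        rw [Real.dist_eq, Real.dist_eq] at hd
        have h3 : |x - c i| ≤ |t (i + 1) - t i| := by
          rw [abs_of_pos (by linarith : 0 < t (i + 1) - t i), abs_le]
          constructor <;> simp only [c] <;> linarith
        have h4 : (K:ℝ) * |x - c i| ≤ K * |t (i + 1) - t i| := mul_le_mul_of_nonneg_left h3 K.2
        have h5 : |lam x| ≤ |lam (c i)| + |lam x - lam (c i)| := by
          have := abs_add_le (lam (c i)) (lam x - lam (c i))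
          simpa using this
        have h6 := Finset.single_le_sum (f := B) (fun i _ => hB i) (Finset.mem_range.2 hi)
        have h7 : B i = |lam (c i)| + K * |t (i + 1) - t i| := rfl
        linarith
    · rw [Set.indicator_of_notMem hx]; simpa using hM0
  · intro x hx; exact Set.indicator_of_notMem hx _
  · intro x y hxy hno
    have hK : (0:ℝ) ≤ K * (y - x) := mul_nonneg K.2 (by linarith)
    have hno' : ∀ i ≤ N, t i < x ∨ y < t i := by
      intro i hi
      have := hno _ (hmem i hi)
      simpa only [Set.mem_Icc, not_and_or, not_le] using this
    rcases hno' 0 (by omega) with h0 | h0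
    · rcases hno' N le_rfl with h2 | h2
      · rw [Set.indicator_of_notMem, Set.indicator_of_notMem]
        · simpa using hK
        · rintro ⟨_, _⟩; linarith
        · rintro ⟨_, _⟩; linarith
      · have hne : ∀ i ≤ N, x ≠ t i := by
          intro i hi e; rcases hno' i hi with h | h <;> linarith
        obtain ⟨i, hi, h1, h3⟩ := exists_piece h0 N (by linarith) hne
        have hy : y < t (i + 1) := by
          rcases hno' (i + 1) (by omega) with h | h <;> linarith
        have hd := (hlip i hi).dist_le_mul y ⟨by linarith, hy⟩ x ⟨h1, h3⟩
        rw [Real.dist_eq, Real.dist_eq, abs_of_nonneg (by linarith : 0 ≤ y - x)] at hd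
        rw [Set.indicator_of_mem, Set.indicator_of_mem]
        · exact hd
        · constructor <;> linarith
        · constructor <;> linarith
    · rw [Set.indicator_of_notMem, Set.indicator_of_notMem]
      · simpa using hK
      · rintro ⟨_, _⟩; linarith
      · rintro ⟨_, _⟩; linarith

theorem lam_facts {lam : ℝ → ℝ} (h : IsPreAverageFn lam) (hi : IntervalIntegrable lam volume 0 2) :
    (∫ x in (0:ℝ)..2, lam x = 0) ∧ ∫ u in (0:ℝ)..2, (bigLam lam u) ^ 2 = 1 := by
  have hanti : ∀ x ∈ Set.Icc (0:ℝ) 2, lam x = - lam (2 - x) := by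
    intro x hx
    rcases le_total x 1 with h1 | h1
    · exact h.antisymm x ⟨hx.1, h1⟩
    · have := h.antisymm (2 - x) ⟨by linarith [hx.2], by linarith⟩
      rw [this]; simp
  have hii : ∀ a b : ℝ, a ∈ Set.Icc (0:ℝ) 2 → b ∈ Set.Icc (0:ℝ) 2 → IntervalIntegrable lam volume a b := by
    intro a b ha hb
    refine hi.mono_set ?_
    rw [Set.uIcc_of_le (by norm_num : (0:ℝ) ≤ 2)]
    exact Set.uIcc_subset_Icc ha hb
  have hsym : ∀ u ∈ Set.Icc (0:ℝ) 1, ∫ x in u..(2 - u), lam x = 0 := by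
    intro u hu
    have e1 : ∫ x in u..(2 - u), lam x = ∫ x in u..(2 - u), - lam (2 - x) := by
      refine intervalIntegral.integral_congr fun x hx => hanti x ?_
      rw [Set.uIcc_of_le (by linarith [hu.2])] at hx
      exact ⟨by linarith [hx.1, hu.1], by linarith [hx.2, hu.1]⟩
    rw [intervalIntegral.integral_neg, intervalIntegral.integral_comp_sub_left (fun x => lam x)] at e1
    simp only [sub_sub_cancel] at e1
    linarith
  refine ⟨by simpa using hsym 0 (by simp), ?_⟩
  have hrefl : ∀ u ∈ Set.Icc (0:ℝ) 1, bigLam lam (2 - u) = bigLam lam u := by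
    intro u hu
    have h1 : u ∈ Set.Icc (0:ℝ) 2 := ⟨hu.1, by linarith [hu.2]⟩
    have h2 : 2 - u ∈ Set.Icc (0:ℝ) 2 := ⟨by linarith [hu.2], by linarith [hu.1]⟩
    unfold bigLam
    rw [← intervalIntegral.integral_add_adjacent_intervals (hii 0 u (by simp) h1) (hii _ _ h1 h2),
      hsym u hu, add_zero]
  have hc : ContinuousOn (fun u => (bigLam lam u) ^ 2) (Set.Icc (0:ℝ) 2) := by
    have : ContinuousOn (fun u => ∫ v in (0:ℝ)..u, lam v) (Set.uIcc (0:ℝ) 2) :=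
      intervalIntegral.continuousOn_primitive_interval
        (by
          rw [Set.uIcc_of_le (by norm_num : (0:ℝ) ≤ 2)]
          exact (intervalIntegrable_iff_integrableOn_Icc_of_le (by norm_num)).1 hi)
    rw [Set.uIcc_of_le (by norm_num : (0:ℝ) ≤ 2)] at this
    exact (this.neg).pow 2
  have i1 : IntervalIntegrable (fun u => (bigLam lam u) ^ 2) volume 0 1 :=
    (hc.mono (by rw [Set.uIcc_of_le (by norm_num : (0:ℝ) ≤ 1)]; exact Set.Icc_subset_Icc (by norm_num) (by norm_num))).intervalIntegrable
  have i2 : IntervalIntegrable (fun u => (bigLam lam u) ^ 2) volume 1 2 :=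
    (hc.mono (by rw [Set.uIcc_of_le (by norm_num : (1:ℝ) ≤ 2)]; exact Set.Icc_subset_Icc (by norm_num) (by norm_num))).intervalIntegrable
  rw [← intervalIntegral.integral_add_adjacent_intervals i1 i2]
  have e2 : ∫ u in (1:ℝ)..2, (bigLam lam u) ^ 2 = ∫ u in (0:ℝ)..1, (bigLam lam u) ^ 2 := by
    have := intervalIntegral.integral_comp_sub_left (a := 0) (b := 1) (fun u => (bigLam lam u) ^ 2) 2
    norm_num at this
    rw [← this]
    refine intervalIntegral.integral_congr fun x hx => ?_
    rw [Set.uIcc_of_le (by norm_num : (0:ℝ) ≤ 1)] at hx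
    simp only [hrefl x hx]
  have e3 : ∫ u in (0:ℝ)..1, (bigLam lam u) ^ 2 = ∫ s in (0:ℝ)..1, (∫ u in (0:ℝ)..s, lam u) ^ 2 := by
    simp [bigLam]
  have := h.normalized
  rw [Real.sqrt_eq_one] at this
  rw [e2, e3]; linarith

theorem model_variance {Ω : Type*} [MeasureSpace Ω] [IsProbabilityMeasure (ℙ : Measure Ω)]
    {n : ℕ} {W η : ℕ → Ω → ℝ} (hm : IsSimplifiedModel n W η) (a b : ℕ → ℝ) :
    variance (fun ω => ∑ j ∈ Finset.range (n + 1), (a j * W j ω + b j * η j ω)) ℙ =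
      ∑ j ∈ Finset.range (n + 1), ∑ l ∈ Finset.range (n + 1), a j * a l * ((min j l : ℝ) / n)
      + ∑ j ∈ Finset.range (n + 1), b j ^ 2 := by
  obtain ⟨mW, mη, hg, cW, cη, cWη⟩ := hm
  have hmeas : ∀ a b : ℕ → ℝ, Measurable
      (fun ω => ∑ j ∈ Finset.range (n + 1), (a j * W j ω + b j * η j ω)) := by
    intro a b
    exact Finset.measurable_fun_sum _ fun j _ => ((mW j).const_mul _).add ((mη j).const_mul _)
  have hL2 : ∀ a b : ℕ → ℝ, MemLp
      (fun ω => ∑ j ∈ Finset.range (n + 1), (a j * W j ω + b j * η j ω)) 2 ℙ := by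
    intro a b
    obtain ⟨v, hv⟩ := hg a b
    have h1 : MemLp id 2 (gaussianReal 0 v) := memLp_id_gaussianReal 2
    rw [← hv] at h1
    exact (memLp_map_measure_iff h1.1 (hmeas a b).aemeasurable).1 h1
  have h0 : ∫ ω, (∑ j ∈ Finset.range (n + 1), (a j * W j ω + b j * η j ω)) = 0 := by
    obtain ⟨v, hv⟩ := hg a b
    have h1 : ∫ x, x ∂(gaussianReal 0 v) = 0 := integral_id_gaussianReal
    rw [← hv, integral_map (hmeas a b).aemeasurable (by fun_prop)] at h1
    exact h1
  have LW : ∀ j ∈ Finset.range (n + 1), MemLp (W j) 2 ℙ := by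
    intro j hj
    have := hL2 (fun l => if l = j then 1 else 0) (fun _ => 0)
    simpa [Finset.sum_ite_eq', Finset.mem_range.1 hj] using this
  have Lη : ∀ j ∈ Finset.range (n + 1), MemLp (η j) 2 ℙ := by
    intro j hj
    have := hL2 (fun _ => 0) (fun l => if l = j then 1 else 0)
    simpa [Finset.sum_ite_eq', Finset.mem_range.1 hj] using this
  rw [variance_of_integral_eq_zero (hmeas a b).aemeasurable h0]
  have hexp : ∀ ω, (∑ j ∈ Finset.range (n + 1), (a j * W j ω + b j * η j ω)) ^ 2 =
      ∑ j ∈ Finset.range (n + 1), ∑ l ∈ Finset.range (n + 1),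
        (a j * a l * (W j ω * W l ω) + a j * b l * (W j ω * η l ω) + b j * a l * (W l ω * η j ω)
          + b j * b l * (η j ω * η l ω)) := by
    intro ω
    rw [sq, Finset.sum_mul_sum]
    refine Finset.sum_congr rfl fun j _ => Finset.sum_congr rfl fun l _ => by ring
  simp only [hexp]
  have i1 : ∀ j ∈ Finset.range (n + 1), ∀ l ∈ Finset.range (n + 1),
      Integrable (fun ω => a j * a l * (W j ω * W l ω)) := fun j hj l hl =>
    ((LW j hj).integrable_mul (LW l hl)).const_mul _
  have i2 : ∀ j ∈ Finset.range (n + 1), ∀ l ∈ Finset.range (n + 1),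
      Integrable (fun ω => a j * b l * (W j ω * η l ω)) := fun j hj l hl =>
    ((LW j hj).integrable_mul (Lη l hl)).const_mul _
  have i3 : ∀ j ∈ Finset.range (n + 1), ∀ l ∈ Finset.range (n + 1),
      Integrable (fun ω => b j * a l * (W l ω * η j ω)) := fun j hj l hl =>
    ((LW l hl).integrable_mul (Lη j hj)).const_mul _
  have i4 : ∀ j ∈ Finset.range (n + 1), ∀ l ∈ Finset.range (n + 1),
      Integrable (fun ω => b j * b l * (η j ω * η l ω)) := fun j hj l hl =>
    ((Lη j hj).integrable_mul (Lη l hl)).const_mul _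
  have i5 : ∀ j ∈ Finset.range (n + 1), ∀ l ∈ Finset.range (n + 1),
      Integrable (fun ω => a j * a l * (W j ω * W l ω) + a j * b l * (W j ω * η l ω)
        + b j * a l * (W l ω * η j ω) + b j * b l * (η j ω * η l ω)) := fun j hj l hl =>
    (((i1 j hj l hl).add (i2 j hj l hl)).add (i3 j hj l hl)).add (i4 j hj l hl)
  rw [integral_finsetSum _ fun j hj => integrable_finsetSum _ fun l hl =>
    i5 j hj l hl,
    ← Finset.sum_add_distrib]
  refine Finset.sum_congr rfl fun j hj => ?_
  rw [integral_finsetSum _ fun l hl =>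
    i5 j hj l hl]
  have hjn : j ≤ n := by have := Finset.mem_range.1 hj; omega
  have : ∀ l ∈ Finset.range (n + 1), ∫ ω, (a j * a l * (W j ω * W l ω) + a j * b l * (W j ω * η l ω)
      + b j * a l * (W l ω * η j ω) + b j * b l * (η j ω * η l ω)) =
      a j * a l * ((min j l : ℝ) / n) + if j = l then b j * b l else 0 := by
    intro l hl
    have hln : l ≤ n := by have := Finset.mem_range.1 hl; omega
    have i6 : Integrable (fun ω => a j * a l * (W j ω * W l ω) + a j * b l * (W j ω * η l ω)) :=
      (i1 j hj l hl).add (i2 j hj l hl)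
    have i7 : Integrable (fun ω => a j * a l * (W j ω * W l ω) + a j * b l * (W j ω * η l ω)
        + b j * a l * (W l ω * η j ω)) := i6.add (i3 j hj l hl)
    rw [integral_add i7 (i4 j hj l hl), integral_add i6 (i3 j hj l hl),
      integral_add (i1 j hj l hl) (i2 j hj l hl)]
    simp only [integral_const_mul]
    rw [cW j l hjn hln, cη j l hjn hln, cWη j l hjn hln, cWη l j hln hjn]
    simp
  rw [Finset.sum_congr rfl this, Finset.sum_add_distrib, Finset.sum_ite_eq, if_pos hj]
  ring

theorem double_sum {u F : ℕ → ℝ} (S : Finset ℕ) (hu : ∀ j, F j ≠ 0 → u j ∈ Set.Icc (0:ℝ) 2) :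
    IntervalIntegrable (fun s => (∑ j ∈ S, if s < u j then F j else 0) ^ 2) volume 0 2 ∧
    ∫ s in (0:ℝ)..2, (∑ j ∈ S, if s < u j then F j else 0) ^ 2 =
      ∑ j ∈ S, ∑ l ∈ S, F j * F l * min (u j) (u l) := by
  have hexp : (fun s => (∑ j ∈ S, if s < u j then F j else 0) ^ 2) = fun s =>
      ∑ j ∈ S, ∑ l ∈ S, F j * F l * (Set.Iio (min (u j) (u l))).indicator (fun _ => (1:ℝ)) s := by
    funext s
    rw [sq, Finset.sum_mul_sum]
    refine Finset.sum_congr rfl fun j _ => Finset.sum_congr rfl fun l _ => ?_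
    by_cases h1 : s < u j <;> by_cases h2 : s < u l <;> simp [Set.indicator, h1, h2]
  have hi : ∀ (k w : ℝ), IntervalIntegrable
      (fun s => k * (Set.Iio w).indicator (fun _ => (1:ℝ)) s) volume 0 2 := by
    intro k w
    refine IntervalIntegrable.const_mul ?_ k
    refine AntitoneOn.intervalIntegrable fun x _ y _ hxy => ?_
    by_cases hy : y < w
    · have : x < w := by linarith
      simp [hy, this]
    · simp only [Set.indicator, Set.mem_Iio, hy, if_false]
      split_ifs <;> norm_num
  have hii : ∀ j ∈ S, IntervalIntegrable (fun s => ∑ l ∈ S,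
      F j * F l * (Set.Iio (min (u j) (u l))).indicator (fun _ => (1:ℝ)) s) volume 0 2 := by
    intro j _
    have := IntervalIntegrable.sum (μ := volume) (a := 0) (b := 2) S
      (f := fun l s => F j * F l * (Set.Iio (min (u j) (u l))).indicator (fun _ => (1:ℝ)) s)
      fun l _ => hi _ _
    convert! this using 1
    funext s; simp
  rw [hexp]
  have hiii := IntervalIntegrable.sum S hii
  refine ⟨by convert! hiii using 1; funext s; simp, ?_⟩
  rw [intervalIntegral.integral_finsetSum hii]
  refine Finset.sum_congr rfl fun j _ => ?_
  rw [intervalIntegral.integral_finsetSum fun l _ => hi _ _]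
  refine Finset.sum_congr rfl fun l _ => ?_
  rw [intervalIntegral.integral_const_mul]
  by_cases h0 : F j * F l = 0
  · simp [h0]
  have hj := hu j (left_ne_zero_of_mul h0)
  have hl := hu l (right_ne_zero_of_mul h0)
  congr 1
  have hw : min (u j) (u l) ∈ Set.Icc (0:ℝ) 2 := by
    rcases min_choice (u j) (u l) with h | h <;> rw [h] <;> assumption
  generalize min (u j) (u l) = w at hw
  rw [intervalIntegral.integral_of_le (by norm_num), integral_indicator measurableSet_Iio,
    Measure.restrict_restrict measurableSet_Iio]
  have : Set.Iio w ∩ Set.Ioc 0 2 = Set.Ioo 0 w := by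
    ext x; constructor
    · rintro ⟨h1, h2, h3⟩; exact ⟨h2, h1⟩
    · rintro ⟨h1, h2⟩; exact ⟨h2, h1, by linarith [hw.2, h2]⟩
  rw [this]
  simp [hw.1]

theorem mOf_sq_le {c : ℝ} (hc : 0 < c) {n : ℕ} (hm : 2 ≤ mOf c n) :
    0 < n ∧ (mOf c n : ℝ) ≤ n ∧ (mOf c n : ℝ) ^ 2 ≤ 4 * c ^ 2 * n := by
  unfold mOf at *
  set k := ⌊Real.sqrt n / c⌋₊ with hk
  have hk0 : k ≠ 0 := by rintro h; simp [h] at hm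
  have hn : 0 < n := by
    rcases Nat.eq_zero_or_pos n with h | h
    · subst h; simp at hm
    · exact h
  have hle : n / k ≤ n := Nat.div_le_self _ _
  refine ⟨hn, by exact_mod_cast hle, ?_⟩
  have h1 : Real.sqrt n / c < k + 1 := Nat.lt_floor_add_one _
  have hk1 : (1:ℝ) ≤ k := by exact_mod_cast Nat.one_le_iff_ne_zero.2 hk0
  have h2 : Real.sqrt n < 2 * k * c := by
    rw [div_lt_iff₀ hc] at h1
    nlinarith
  have h3 : ((n / k : ℕ) : ℝ) * k ≤ n := by exact_mod_cast Nat.div_mul_le_self n k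
  have hs : 0 < Real.sqrt n := Real.sqrt_pos.2 (by exact_mod_cast hn)
  have hsq : Real.sqrt n * Real.sqrt n = n := Real.mul_self_sqrt (by positivity)
  have hx : (0:ℝ) ≤ ((n / k : ℕ) : ℝ) := by positivity
  generalize ((n / k : ℕ) : ℝ) = x at *
  have h4 : x * Real.sqrt n ≤ 2 * c * n := by
    have := mul_le_mul_of_nonneg_left h2.le hx
    nlinarith
  have h5 : x ≤ 2 * c * Real.sqrt n := by
    refine le_of_mul_le_mul_right ?_ hs
    calc x * Real.sqrt n ≤ 2 * c * n := h4
      _ = 2 * c * Real.sqrt n * Real.sqrt n := by rw [mul_assoc (2 * c), hsq]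
  calc x ^ 2 ≤ (2 * c * Real.sqrt n) ^ 2 := pow_le_pow_left₀ hx h5 2
    _ = 4 * c ^ 2 * n := by rw [mul_pow, sq (Real.sqrt n), hsq]; ring

theorem preAvg_eq {Ω : Type*} (σ τ : ℝ) (lam : ℝ → ℝ) {n m i : ℕ} (hn : 0 < n) (hm : 0 < m)
    (W η : ℕ → Ω → ℝ) :
    preAvg lam n m (obs σ τ W η) i = fun ω => ∑ j ∈ Finset.range (n + 1),
      (((m:ℝ) / n * σ * (Set.Icc (0:ℝ) 2).indicator lam ((m:ℝ) / n * j - ((i:ℝ) - 2))) * W j ω +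
       ((m:ℝ) / n * τ * (Set.Icc (0:ℝ) 2).indicator lam ((m:ℝ) / n * j - ((i:ℝ) - 2))) * η j ω) := by
  funext ω
  have hn' : (0:ℝ) < n := by exact_mod_cast hn
  have hm' : (0:ℝ) < m := by exact_mod_cast hm
  unfold preAvg blockIdx obs
  rw [Finset.sum_filter, Finset.mul_sum]
  refine Finset.sum_congr rfl fun j _ => ?_
  have e : (m:ℝ) * j / n = (m:ℝ) / n * j := by ring
  have hiff : ((i:ℝ) - 2) / m ≤ (j:ℝ) / n ∧ (j:ℝ) / n ≤ (i:ℝ) / m ↔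
      (m:ℝ) / n * j - ((i:ℝ) - 2) ∈ Set.Icc (0:ℝ) 2 := by
    have e2 : (m:ℝ) / n * j = (j:ℝ) / n * m := by ring
    rw [div_le_iff₀ hm', le_div_iff₀ hm', e2, Set.mem_Icc]
    constructor <;> rintro ⟨_, _⟩ <;> constructor <;> linarith
  rw [e]
  by_cases h : (m:ℝ) / n * j - ((i:ℝ) - 2) ∈ Set.Icc (0:ℝ) 2
  · rw [if_pos (hiff.2 h), Set.indicator_of_mem h]; ring
  · rw [if_neg (fun hh => h (hiff.1 hh)), Set.indicator_of_notMem h]; ring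

set_option maxHeartbeats 2000000 in
theorem preAveragedObs_variance (σ τ c : ℝ) (hσ : 0 < σ) (hτ : 0 < τ) (hc : 0 < c)
    (lam : ℝ → ℝ) (hlam : IsPreAverageFn lam)
    (Ω : ℕ → Type*) [∀ n, MeasureSpace (Ω n)] [∀ n, IsProbabilityMeasure (ℙ : Measure (Ω n))]
    (W η : (n : ℕ) → ℕ → Ω n → ℝ)
    (hmodel : ∀ n, IsSimplifiedModel n (W n) (η n)) :
    (∃ C > 0, ∃ N : ℕ, ∀ n ≥ N, ∀ i : ℕ, 2 ≤ i → i ≤ mOf c n →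
      |variance (preAvg lam n (mOf c n) (obs σ τ (W n) (η n)) i) ℙ
          - σ ^ 2 / (mOf c n : ℝ)
          - τ ^ 2 * ((mOf c n : ℝ) / n) * ∫ u in (0:ℝ)..2, (lam u) ^ 2| ≤ C / n) ∧
    ∫ u in (0:ℝ)..2, (bigLam lam u) ^ 2 = 1 := by
  obtain ⟨K, M, T, hf⟩ := hlam.plip
  set f := (Set.Icc (0:ℝ) 2).indicator lam with hfdef
  have hfl : ∀ x ∈ Set.Icc (0:ℝ) 2, f x = lam x := fun x hx => Set.indicator_of_mem hx _
  have hli : IntervalIntegrable lam volume 0 2 := by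
    refine (hf.integrable.intervalIntegrable (a := 0) (b := 2)).congr ?_
    intro x hx
    rw [Set.uIoc_of_le (by norm_num : (0:ℝ) ≤ 2)] at hx
    exact hfl x ⟨hx.1.le, hx.2⟩
  obtain ⟨hz, hone⟩ := lam_facts hlam hli
  refine ⟨?_, hone⟩
  have hK := hf.K0
  have hM := hf.M0
  set D : ℝ := 3 * K + 2 * M * (T.card + 1) + M with hD
  have hD0 : 0 ≤ D := by positivity
  set E : ℝ := 3 * (2 * M * K) + 2 * M ^ 2 * T.card + M ^ 2 with hE
  have hE0 : 0 ≤ E := by positivity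
  refine ⟨σ ^ 2 * (2 * D * (D + 4 * M)) + (σ ^ 2 * D ^ 2 + τ ^ 2 * E) * (4 * c ^ 2) + 1,
    by positivity, 0, fun n _ i hi2 him => ?_⟩
  obtain ⟨hn, hmn, hmsq⟩ := mOf_sq_le hc (hi2.trans him)
  generalize mOf c n = m at *
  have hm : 0 < m := by omega
  have hn' : (0:ℝ) < n := by exact_mod_cast hn
  have hm' : (0:ℝ) < m := by exact_mod_cast hm
  have hi2' : (2:ℝ) ≤ i := by exact_mod_cast hi2
  have him' : (i:ℝ) ≤ m := by exact_mod_cast him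
  rw [preAvg_eq σ τ lam hn hm, model_variance (hmodel n), ← hfdef]
  set h : ℝ := (m:ℝ) / n with hh
  set a : ℝ := (i:ℝ) - 2 with ha
  have h0 : 0 < h := by positivity
  have h1 : h ≤ 1 := by rw [hh, div_le_one hn']; exact hmn
  have ha0 : 0 ≤ a := by linarith
  have hhn : h * n = m := by rw [hh]; field_simp
  have hend : 2 ≤ h * n - a := by rw [hhn]; linarith
  set u : ℕ → ℝ := fun j => h * j - a with hu
  set R : ℝ → ℝ := fun s => ∑ j ∈ Finset.range (n + 1), if s < u j then f (u j) else 0 with hR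
  obtain ⟨hRi, hRe⟩ := double_sum (u := u) (F := fun j => f (u j)) (Finset.range (n + 1))
    (fun j hj => by by_contra hc; exact hj (hf.supp _ hc))
  set S1 : ℝ := ∫ s in (0:ℝ)..2, (h * R s) ^ 2 with hS1
  set S2 : ℝ := h * ∑ j ∈ Finset.range (n + 1), f (u j) with hS2
  set S3 : ℝ := h * ∑ j ∈ Finset.range (n + 1), f (u j) ^ 2 with hS3
  have hS1' : S1 = h ^ 2 * ∑ j ∈ Finset.range (n + 1), ∑ l ∈ Finset.range (n + 1),
      f (u j) * f (u l) * min (u j) (u l) := by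
    rw [hS1, ← hRe, ← intervalIntegral.integral_const_mul]
    simp only [mul_pow, hR]
  -- the variance in terms of S1, S2, S3
  have hvar : ∑ j ∈ Finset.range (n + 1), ∑ l ∈ Finset.range (n + 1),
        h * σ * f (u j) * (h * σ * f (u l)) * ((min j l : ℝ) / n)
      + ∑ j ∈ Finset.range (n + 1), (h * τ * f (u j)) ^ 2
      = σ ^ 2 / m * (S1 + a * S2 ^ 2) + τ ^ 2 * h * S3 := by
    have e1 : S2 ^ 2 = h ^ 2 * ∑ j ∈ Finset.range (n + 1), ∑ l ∈ Finset.range (n + 1),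
        f (u j) * f (u l) := by
      rw [hS2, mul_pow, sq (∑ j ∈ Finset.range (n + 1), f (u j)), Finset.sum_mul_sum]
    rw [hS1', e1, hS3]
    congr 1
    · have e2 : σ ^ 2 / m * (h ^ 2 * ∑ j ∈ Finset.range (n + 1), ∑ l ∈ Finset.range (n + 1),
          f (u j) * f (u l) * min (u j) (u l) + a * (h ^ 2 * ∑ j ∈ Finset.range (n + 1),
            ∑ l ∈ Finset.range (n + 1), f (u j) * f (u l))) =
          ∑ j ∈ Finset.range (n + 1), ∑ l ∈ Finset.range (n + 1),
            σ ^ 2 / m * h ^ 2 * (f (u j) * f (u l) * (min (u j) (u l) + a)) := by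
        simp only [← Finset.mul_sum, mul_add, Finset.sum_add_distrib, ← Finset.sum_mul]
        ring
      rw [e2]
      refine Finset.sum_congr rfl fun j _ => Finset.sum_congr rfl fun l _ => ?_
      have e3 : min (u j) (u l) + a = h * min (j:ℝ) l := by
        simp only [hu]
        rw [min_sub_sub_right, mul_min_of_nonneg _ _ h0.le]; ring
      have e4 : (min (j:ℝ) l) / n = h * min (j:ℝ) l / m := by
        rw [hh]; field_simp
      rw [e3, e4]; ring
    · rw [← mul_assoc, Finset.mul_sum]
      refine Finset.sum_congr rfl fun j _ => by ring
  rw [show (∑ j ∈ Finset.range (n + 1), ∑ l ∈ Finset.range (n + 1),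
        h * σ * f (h * j - a) * (h * σ * f (h * l - a)) * ((min j l : ℝ) / n)
      + ∑ j ∈ Finset.range (n + 1), (h * τ * f (h * j - a)) ^ 2) =
      σ ^ 2 / m * (S1 + a * S2 ^ 2) + τ ^ 2 * h * S3 from hvar]
  -- bound S1
  have hRb : ∀ s ∈ Set.Icc (0:ℝ) 2, |h * R s - bigLam lam s| ≤ D * h := by
    intro s hs
    have hcut := hf.cut s
    have hr := hcut.riemann h0 h1 ha0 hend
    have hint : ∫ x in (0:ℝ)..2, (if s < x then f x else 0) = bigLam lam s := by
      rw [← intervalIntegral.integral_add_adjacent_intervals (b := s)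
        hcut.integrable.intervalIntegrable hcut.integrable.intervalIntegrable]
      have e1 : ∫ x in (0:ℝ)..s, (if s < x then f x else 0) = 0 := by
        rw [intervalIntegral.integral_congr_ae (g := fun _ => (0:ℝ))]
        · simp
        · refine Filter.Eventually.of_forall fun x hx => ?_
          rw [Set.uIoc_of_le hs.1] at hx
          simp [hx.2]
      have e2 : ∫ x in s..(2:ℝ), (if s < x then f x else 0) = ∫ x in s..(2:ℝ), lam x := by
        refine intervalIntegral.integral_congr_ae (Filter.Eventually.of_forall fun x hx => ?_)
        rw [Set.uIoc_of_le hs.2] at hx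
        rw [if_pos hx.1, hfl x ⟨by linarith [hs.1, hx.1], hx.2⟩]
      have i1 : IntervalIntegrable lam volume 0 s := hli.mono_set (by
        rw [Set.uIcc_of_le hs.1, Set.uIcc_of_le (by norm_num : (0:ℝ) ≤ 2)]
        exact Set.Icc_subset_Icc le_rfl hs.2)
      have i2 : IntervalIntegrable lam volume s 2 := hli.mono_set (by
        rw [Set.uIcc_of_le hs.2, Set.uIcc_of_le (by norm_num : (0:ℝ) ≤ 2)]
        exact Set.Icc_subset_Icc hs.1 le_rfl)
      have := intervalIntegral.integral_add_adjacent_intervals i1 i2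
      rw [e1, e2, bigLam]
      linarith
    rw [hint] at hr
    refine hr.trans ?_
    refine mul_le_mul_of_nonneg_right ?_ h0.le
    have hcard : ((insert s T).card : ℝ) ≤ T.card + 1 := by
      exact_mod_cast Finset.card_insert_le s T
    have := mul_le_mul_of_nonneg_left hcard (by positivity : 0 ≤ 2 * M)
    rw [hD]; linarith
  have hLb : ∀ s ∈ Set.Icc (0:ℝ) 2, |bigLam lam s| ≤ 2 * M := by
    intro s hs
    rw [bigLam, abs_neg, ← Real.norm_eq_abs]
    refine (intervalIntegral.norm_integral_le_of_norm_le_const (C := M) fun x hx => ?_).trans ?_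
    · rw [Set.uIoc_of_le hs.1] at hx
      rw [← hfl x ⟨hx.1.le, by linarith [hx.2, hs.2]⟩]; exact hf.bd x
    · rw [sub_zero, abs_of_nonneg hs.1, mul_comm]
      exact mul_le_mul_of_nonneg_right hs.2 hM
  have hLi : IntervalIntegrable (fun s => bigLam lam s ^ 2) volume 0 2 := by
    by_contra hni
    rw [intervalIntegral.integral_undef hni] at hone
    norm_num at hone
  have hRi' : IntervalIntegrable (fun s => (h * R s) ^ 2) volume 0 2 := by
    simp only [mul_pow]
    exact hRi.const_mul _
  have hB1 : |S1 - 1| ≤ 2 * D * (D + 4 * M) * h := by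
    rw [hS1, ← hone, ← intervalIntegral.integral_sub hRi' hLi, ← Real.norm_eq_abs]
    refine (intervalIntegral.norm_integral_le_of_norm_le_const
      (C := D * h * (D + 4 * M)) fun s hs => ?_).trans ?_
    · rw [Set.uIoc_of_le (by norm_num : (0:ℝ) ≤ 2)] at hs
      have hs' : s ∈ Set.Icc (0:ℝ) 2 := ⟨hs.1.le, hs.2⟩
      have b1 := hRb s hs'
      have b2 := hLb s hs'
      have e : (h * R s) ^ 2 - bigLam lam s ^ 2 =
        (h * R s - bigLam lam s) * ((h * R s - bigLam lam s) + 2 * bigLam lam s) := by ring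
      rw [e, Real.norm_eq_abs, abs_mul]
      have b3 : |(h * R s - bigLam lam s) + 2 * bigLam lam s| ≤ D + 4 * M := by
        refine (abs_add_le _ _).trans ?_
        rw [abs_mul, abs_two]
        have : D * h ≤ D := mul_le_of_le_one_right hD0 h1
        linarith
      exact mul_le_mul b1 b3 (abs_nonneg _) (by positivity)
    · rw [sub_zero, abs_two]; apply le_of_eq; ring
  have hB2 : |S2| ≤ D * h := by
    have hr := hf.riemann h0 h1 ha0 hend
    have : ∫ x in (0:ℝ)..2, f x = 0 := by
      refine Eq.trans ?_ hz
      refine intervalIntegral.integral_congr fun x hx => ?_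
      rw [Set.uIcc_of_le (by norm_num : (0:ℝ) ≤ 2)] at hx
      exact hfl x hx
    rw [this, sub_zero] at hr
    refine hr.trans (mul_le_mul_of_nonneg_right ?_ h0.le)
    rw [hD]; linarith
  have hB3 : |S3 - ∫ x in (0:ℝ)..2, lam x ^ 2| ≤ E * h := by
    have hr := hf.sq.riemann h0 h1 ha0 hend
    have : ∫ x in (0:ℝ)..2, f x ^ 2 = ∫ x in (0:ℝ)..2, lam x ^ 2 := by
      refine intervalIntegral.integral_congr fun x hx => ?_
      rw [Set.uIcc_of_le (by norm_num : (0:ℝ) ≤ 2)] at hx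
      simp only [hfl x hx]
    rw [this] at hr
    exact hr
  have hhm : h / m = 1 / n := by rw [hh]; field_simp
  have hhsq : h ^ 2 ≤ 4 * c ^ 2 / n := by
    rw [hh, div_pow, div_le_div_iff₀ (by positivity) hn']
    nlinarith
  have ham : a / m ≤ 1 := by rw [div_le_one hm']; linarith
  have hfin : σ ^ 2 / m * (S1 + a * S2 ^ 2) + τ ^ 2 * h * S3 - σ ^ 2 / m
      - τ ^ 2 * h * ∫ x in (0:ℝ)..2, lam x ^ 2 =
      σ ^ 2 / m * (S1 - 1) + σ ^ 2 * (a / m) * S2 ^ 2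
        + τ ^ 2 * h * (S3 - ∫ x in (0:ℝ)..2, lam x ^ 2) := by ring
  rw [hfin]
  have t1 : |σ ^ 2 / m * (S1 - 1)| ≤ σ ^ 2 * (2 * D * (D + 4 * M)) / n := by
    rw [abs_mul, abs_of_pos (by positivity : 0 < σ ^ 2 / m)]
    refine (mul_le_mul_of_nonneg_left hB1 (by positivity)).trans (le_of_eq ?_)
    calc σ ^ 2 / m * (2 * D * (D + 4 * M) * h) = σ ^ 2 * (2 * D * (D + 4 * M)) * (h / m) := by ring
      _ = _ := by rw [hhm]; ring
  have t2 : |σ ^ 2 * (a / m) * S2 ^ 2| ≤ σ ^ 2 * D ^ 2 * (4 * c ^ 2 / n) := by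
    have ham0 : 0 ≤ a / m := by positivity
    rw [abs_of_nonneg (by positivity)]
    have b : S2 ^ 2 ≤ (D * h) ^ 2 := by
      rw [← sq_abs S2]; exact pow_le_pow_left₀ (abs_nonneg _) hB2 2
    calc σ ^ 2 * (a / m) * S2 ^ 2 ≤ σ ^ 2 * 1 * (D * h) ^ 2 := by gcongr
      _ = σ ^ 2 * D ^ 2 * h ^ 2 := by ring
      _ ≤ _ := mul_le_mul_of_nonneg_left hhsq (by positivity)
  have t3 : |τ ^ 2 * h * (S3 - ∫ x in (0:ℝ)..2, lam x ^ 2)| ≤ τ ^ 2 * E * (4 * c ^ 2 / n) := by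
    rw [abs_mul, abs_of_pos (by positivity : 0 < τ ^ 2 * h)]
    calc _ ≤ τ ^ 2 * h * (E * h) := by gcongr
      _ = τ ^ 2 * E * h ^ 2 := by ring
      _ ≤ _ := mul_le_mul_of_nonneg_left hhsq (by positivity)
  have t4 : (σ ^ 2 * (2 * D * (D + 4 * M)) + (σ ^ 2 * D ^ 2 + τ ^ 2 * E) * (4 * c ^ 2) + 1) / n =
      σ ^ 2 * (2 * D * (D + 4 * M)) / n + σ ^ 2 * D ^ 2 * (4 * c ^ 2 / n)
        + τ ^ 2 * E * (4 * c ^ 2 / n) + 1 / n := by ring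
  have t5 : (0:ℝ) ≤ 1 / n := by positivity
  rw [t4]
  refine (abs_add_le _ _).trans ?_
  have := abs_add_le (σ ^ 2 / m * (S1 - 1)) (σ ^ 2 * (a / m) * S2 ^ 2)
  linarith
end

section
/- In the simplified model, the bias of the integrated-volatility estimator is of order n^{−1/2}: there are constants C > 0 and N such that for all n ≥ N, |E[⟨σ²,1⟩^] − σ²| ≤ C n^{−1/2}, where σ² = ∫₀¹ σ² ds is the true integrated volatility. -/
open MeasureTheory ProbabilityTheory Real

lemma riemann_lip (g : ℝ → ℝ) (K : NNReal) (hg : LipschitzWith K g) (p q : ℝ) (hp : 0 ≤ p)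
    (hpq : p ≤ q) : ∃ C ≥ 0, ∀ h > 0, h ≤ 1 → ∀ a ≥ 0, ∀ u, p ≤ u → u ≤ q →
      |h * ∑ j ∈ Finset.Ioc ⌊(u + a) / h⌋₊ ⌊(q + a) / h⌋₊, g (h * j - a) - ∫ x in u..q, g x|
        ≤ C * h := by
  have hgc : Continuous g := hg.continuous
  have hint : ∀ x y, IntervalIntegrable g volume x y := fun x y => hgc.intervalIntegrable x y
  obtain ⟨M, hM⟩ := (isCompact_Icc (a := p - 1) (b := q + 1)).exists_bound_of_continuousOn
    hgc.continuousOn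
  have hM0 : 0 ≤ M := (norm_nonneg _).trans (hM p ⟨by linarith, by linarith⟩)
  refine ⟨K * (q - p + 1) + 2 * M, by have := K.2; have : 0 ≤ q - p + 1 := by linarith
                                      positivity, ?_⟩
  intro h hh hh1 a ha u hu huq
  set k0 := ⌊(u + a) / h⌋₊ with hk0
  set k1 := ⌊(q + a) / h⌋₊ with hk1
  have hk : k0 ≤ k1 := by
    apply Nat.floor_mono; gcongr
  have step : ∀ k, k0 ≤ k → |h * ∑ j ∈ Finset.Ioc k0 k, g (h * j - a)
      - ∫ x in (h * k0 - a)..(h * k - a), g x| ≤ K * h ^ 2 * ((k : ℝ) - k0) := by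
    intro k hk
    induction k, hk using Nat.le_induction with
    | base => simp
    | succ k hk ih =>
      rw [Finset.sum_Ioc_succ_top (by omega), mul_add,
        ← intervalIntegral.integral_add_adjacent_intervals (hint _ (h * k - a)) (hint _ _)]
      have e : h * g (h * ((k + 1 : ℕ) : ℝ) - a) - ∫ x in (h * k - a)..(h * ((k + 1 : ℕ) : ℝ) - a), g x
          = ∫ x in (h * k - a)..(h * ((k + 1 : ℕ) : ℝ) - a), (g (h * ((k + 1 : ℕ) : ℝ) - a) - g x) := by
        rw [intervalIntegral.integral_sub (by simp) (hint _ _)]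
        simp
        left; ring
      have b : |h * g (h * ((k + 1 : ℕ) : ℝ) - a) - ∫ x in (h * k - a)..(h * ((k + 1 : ℕ) : ℝ) - a), g x|
          ≤ K * h ^ 2 := by
        rw [e]
        have := intervalIntegral.norm_integral_le_of_norm_le_const (C := K * h)
          (f := fun x => g (h * ((k + 1 : ℕ) : ℝ) - a) - g x) (a := h * k - a)
          (b := h * ((k + 1 : ℕ) : ℝ) - a) (by
            intro x hx
            have hle : h * k - a ≤ h * ((k + 1 : ℕ) : ℝ) - a := by push_cast; nlinarith
            rw [Set.uIoc_of_le hle] at hx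
            have h1 := hg.dist_le_mul (h * ((k + 1 : ℕ) : ℝ) - a) x
            rw [Real.dist_eq, Real.dist_eq] at h1
            rw [Real.norm_eq_abs]
            refine h1.trans ?_
            gcongr
            have h2 := hx.1
            have h3 := hx.2
            push_cast at h2 h3 ⊢
            rw [abs_le]; constructor <;> nlinarith)
        rw [Real.norm_eq_abs] at this
        refine this.trans (le_of_eq ?_)
        have : h * ((k + 1 : ℕ) : ℝ) - a - (h * k - a) = h := by push_cast; ring
        rw [this, abs_of_pos hh]; ring
      rw [abs_le] at b ih ⊢
      push_cast at *
      constructor <;> nlinarith [b.1, b.2, ih.1, ih.2]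
  have h0a : h * k0 ≤ u + a := by
    have := Nat.floor_le (show 0 ≤ (u + a) / h by have : 0 ≤ u := hp.trans hu
                                                  positivity)
    rw [← hk0, le_div_iff₀ hh] at this; linarith
  have h0b : u + a < h * k0 + h := by
    have := Nat.lt_floor_add_one ((u + a) / h)
    rw [← hk0, div_lt_iff₀ hh] at this; linarith
  have h1a : h * k1 ≤ q + a := by
    have := Nat.floor_le (show 0 ≤ (q + a) / h by have : 0 ≤ q := hp.trans hpq
                                                  positivity)
    rw [← hk1, le_div_iff₀ hh] at this; linarith
  have h1b : q + a < h * k1 + h := by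
    have := Nat.lt_floor_add_one ((q + a) / h)
    rw [← hk1, div_lt_iff₀ hh] at this; linarith
  have s := step k1 hk
  have bd : ∀ x y, p - 1 ≤ x → x ≤ y → y ≤ q → y - x ≤ h → |∫ t in x..y, g t| ≤ M * h := by
    intro x y h1 h2 h3 h4
    have := intervalIntegral.norm_integral_le_of_norm_le_const (C := M)
          (f := g) (a := x) (b := y) (by
            intro t ht
            rw [Set.uIoc_of_le h2] at ht
            exact hM t ⟨by linarith [ht.1], by linarith [ht.2]⟩)
    rw [Real.norm_eq_abs] at this
    refine this.trans ?_
    rw [abs_of_nonneg (by linarith)]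
    gcongr
  have b0 := bd (h * k0 - a) u (by linarith) (by linarith) huq (by linarith)
  have b1 := bd (h * k1 - a) q (by linarith) (by linarith) le_rfl (by linarith)
  have e1 := intervalIntegral.integral_add_adjacent_intervals (hint (h * k0 - a) u) (hint u q)
  have e2 := intervalIntegral.integral_add_adjacent_intervals (hint (h * k0 - a) (h * k1 - a)) (hint (h * k1 - a) q)
  have s2 : K * h ^ 2 * ((k1 : ℝ) - k0) ≤ K * (q - p + 1) * h := by
    have : h * ((k1 : ℝ) - k0) ≤ q - p + 1 := by nlinarith
    calc K * h ^ 2 * ((k1 : ℝ) - k0) = K * (h * ((k1 : ℝ) - k0)) * h := by ring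
      _ ≤ _ := by gcongr
  rw [abs_le] at *
  constructor <;> linarith [s.1, s.2, b0.1, b0.2, b1.1, b1.2]

/-- good pieces -/
def GoodPiece (f : ℝ → ℝ) (p q : ℝ) : Prop :=
  IntervalIntegrable f volume p q ∧ (∃ B ≥ 0, ∀ x, p < x → x ≤ q → |f x| ≤ B) ∧
  ∃ C ≥ 0, ∀ h > 0, h ≤ 1 → ∀ a ≥ 0, ∀ u, p ≤ u → u ≤ q →
      |h * ∑ j ∈ Finset.Ioc ⌊(u + a) / h⌋₊ ⌊(q + a) / h⌋₊, f (h * j - a) - ∫ x in u..q, f x|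
        ≤ C * h

lemma goodPiece_lip (f : ℝ → ℝ) (K : NNReal) (p q : ℝ) (hp : 0 ≤ p) (hpq : p < q)
    (hf : LipschitzOnWith K f (Set.Ioo p q)) : GoodPiece f p q := by
  obtain ⟨g, hg, hfg⟩ := hf.extend_real
  have hgc : Continuous g := hg.continuous
  have hint : ∀ x y, IntervalIntegrable g volume x y := fun x y => hgc.intervalIntegrable x y
  have hae : ∀ᵐ x : ℝ, x ≠ q := by
    simp [ae_iff]
  have hcongr : ∀ u, p ≤ u → u ≤ q → ∀ᵐ x ∂volume, x ∈ Set.uIoc u q → g x = f x := by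
    intro u hu huq
    filter_upwards [hae] with x hx hxm
    rw [Set.uIoc_of_le huq] at hxm
    exact (hfg ⟨lt_of_le_of_lt hu hxm.1, lt_of_le_of_ne hxm.2 hx⟩).symm
  refine ⟨?_, ?_, ?_⟩
  · refine (hint p q).congr_ae ?_
    rw [Filter.EventuallyEq, ae_restrict_iff' measurableSet_uIoc]
    exact hcongr p le_rfl hpq.le
  · obtain ⟨M, hM⟩ := (isCompact_Icc (a := p) (b := q)).exists_bound_of_continuousOn
      hgc.continuousOn
    refine ⟨max M |f q|, le_max_of_le_right (abs_nonneg _), ?_⟩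
    intro x hx hxq
    rcases hxq.eq_or_lt with rfl | h
    · exact le_max_right _ _
    · rw [hfg ⟨hx, h⟩]
      exact (hM x ⟨hx.le, hxq⟩).trans (le_max_left _ _)
  · obtain ⟨C, hC, H⟩ := riemann_lip g K hg p q hp hpq.le
    refine ⟨C + |f q - g q|, by positivity, ?_⟩
    intro h hh hh1 a ha u hu huq
    have H1 := H h hh hh1 a ha u hu huq
    rw [intervalIntegral.integral_congr_ae (hcongr u hu huq)] at H1
    have key : |∑ j ∈ Finset.Ioc ⌊(u + a) / h⌋₊ ⌊(q + a) / h⌋₊, f (h * j - a)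
       - ∑ j ∈ Finset.Ioc ⌊(u + a) / h⌋₊ ⌊(q + a) / h⌋₊, g (h * j - a)| ≤ |f q - g q| := by
      rw [← Finset.sum_sub_distrib]
      have hz : ∀ j ∈ Finset.Ioc ⌊(u + a) / h⌋₊ ⌊(q + a) / h⌋₊, j ≠ ⌊(q + a) / h⌋₊ →
          f (h * j - a) - g (h * j - a) = 0 := by
        intro j hj hne
        rw [Finset.mem_Ioc] at hj
        have h1 : (u + a) / h < j := (Nat.floor_lt (by have : 0 ≤ u := hp.trans hu
                                                       positivity)).1 hj.1
        have h2 : ((j + 1 : ℕ) : ℝ) ≤ (q + a) / h := (Nat.le_floor_iff (by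
          have : 0 ≤ q := hp.trans hpq.le
          positivity)).1 (by omega)
        rw [div_lt_iff₀ hh] at h1
        rw [le_div_iff₀ hh] at h2
        push_cast at h2
        rw [hfg ⟨by linarith, by linarith⟩, sub_self]
      by_cases hm : ⌊(q + a) / h⌋₊ ∈ Finset.Ioc ⌊(u + a) / h⌋₊ ⌊(q + a) / h⌋₊
      · rw [Finset.sum_eq_single_of_mem _ hm hz]
        rw [Finset.mem_Ioc] at hm
        have h1 : (u + a) / h < (⌊(q + a) / h⌋₊ : ℝ) := (Nat.floor_lt (by
          have : 0 ≤ u := hp.trans hu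
          positivity)).1 hm.1
        have h2 : (⌊(q + a) / h⌋₊ : ℝ) ≤ (q + a) / h := Nat.floor_le (by
          have : 0 ≤ q := hp.trans hpq.le
          positivity)
        rw [div_lt_iff₀ hh] at h1
        rw [le_div_iff₀ hh] at h2
        rcases (show h * (⌊(q + a) / h⌋₊ : ℝ) - a ≤ q by linarith).eq_or_lt with h3 | h3
        · rw [h3]
        · rw [hfg ⟨by linarith, h3⟩, sub_self]; simp
      · rw [Finset.sum_eq_zero]
        · simp
        · intro j hj
          exact hz j hj (fun h => hm (h ▸ hj))
    rw [abs_le] at *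
    constructor <;> nlinarith [H1.1, H1.2, key.1, key.2]

lemma GoodPiece.trans {f : ℝ → ℝ} {p q r : ℝ} (hpq : p ≤ q) (hqr : q ≤ r)
    (h1 : GoodPiece f p q) (h2 : GoodPiece f q r) : GoodPiece f p r := by
  obtain ⟨i1, ⟨B1, hB1, b1⟩, C1, hC1, c1⟩ := h1
  obtain ⟨i2, ⟨B2, hB2, b2⟩, C2, hC2, c2⟩ := h2
  refine ⟨i1.trans i2, ⟨max B1 B2, le_max_of_le_left hB1, ?_⟩, C1 + C2, by positivity, ?_⟩
  · intro x hx hxr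
    rcases le_or_gt x q with h | h
    · exact (b1 x hx h).trans (le_max_left _ _)
    · exact (b2 x h hxr).trans (le_max_right _ _)
  · intro h hh hh1 a ha u hu hur
    rcases le_or_gt u q with hq | hq
    · have e1 := c1 h hh hh1 a ha u hu hq
      have e2 := c2 h hh hh1 a ha q le_rfl hqr
      rw [← Finset.sum_Ioc_consecutive (fun j : ℕ => f (h * j - a))
        (show ⌊(u + a) / h⌋₊ ≤ ⌊(q + a) / h⌋₊ by apply Nat.floor_mono; gcongr)
        (show ⌊(q + a) / h⌋₊ ≤ ⌊(r + a) / h⌋₊ by apply Nat.floor_mono; gcongr),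
        ← intervalIntegral.integral_add_adjacent_intervals
          (i1.mono_set (by rw [Set.uIcc_of_le hpq, Set.uIcc_of_le hq]
                           exact Set.Icc_subset_Icc_left hu)) i2]
      rw [abs_le] at *
      constructor <;> linarith [e1.1, e1.2, e2.1, e2.2]
    · refine (c2 h hh hh1 a ha u hq.le hur).trans ?_
      nlinarith

lemma goodPiece_lam (lam : ℝ → ℝ) (N : ℕ) (t : ℕ → ℝ) (K : NNReal)
      (hN : 0 < N) (h0 : t 0 = 0) (h2 : t N = 2) (hlt : ∀ i < N, t i < t (i + 1))
      (hL : ∀ i < N, LipschitzOnWith K lam (Set.Ioo (t i) (t (i + 1)))) :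
      GoodPiece lam 0 2 := by
  have : ∀ k, k < N → 0 ≤ t (k + 1) ∧ GoodPiece lam 0 (t (k + 1)) := by
    intro k
    induction k with
    | zero =>
      intro hk
      have a := hlt 0 hk
      rw [h0] at a
      refine ⟨a.le, ?_⟩
      have := goodPiece_lip lam K (t 0) (t 1) (h0.ge) (hlt 0 hk) (hL 0 hk)
      rwa [h0] at this
    | succ k ih =>
      intro hk
      obtain ⟨a, b⟩ := ih (by omega)
      have l := hlt (k + 1) hk
      refine ⟨a.trans l.le, b.trans a l.le ?_⟩
      exact goodPiece_lip lam K _ _ a l (hL _ hk)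
  have := (this (N - 1) (by omega)).2
  rwa [Nat.sub_add_cancel hN, h2] at this

lemma lam_T (lam : ℝ → ℝ) (hlam : IsPreAverageFn lam) (hi : IntervalIntegrable lam volume 0 2) :
    (∫ x in (0:ℝ)..2, lam x) = 0 ∧ ∫ u in (0:ℝ)..2, (∫ x in u..2, lam x) ^ 2 = 1 := by
  have anti : ∀ t ∈ Set.Icc (0:ℝ) 2, lam (2 - t) = - lam t := by
    intro t ht
    rcases le_total t 1 with h | h
    · rw [hlam.antisymm t ⟨ht.1, h⟩, neg_neg]
    · have := hlam.antisymm (2 - t) ⟨by linarith [ht.2], by linarith⟩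
      rw [this]; congr 2; ring
  have hsub : ∀ x ∈ Set.Icc (0:ℝ) 2, ∀ y ∈ Set.Icc (0:ℝ) 2, IntervalIntegrable lam volume x y := by
    intro x hx y hy
    refine hi.mono_set ?_
    rw [Set.uIcc_of_le (show (0:ℝ) ≤ 2 by norm_num)]
    exact Set.uIcc_subset_Icc hx hy
  have refl : ∀ u ∈ Set.Icc (0:ℝ) 2, ∫ x in u..2, lam x = - ∫ x in (0:ℝ)..(2 - u), lam x := by
    intro u hu
    have := intervalIntegral.integral_comp_sub_left (fun x => lam x) (a := 0) (b := 2 - u) 2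
    simp only [sub_sub_cancel, sub_zero] at this
    rw [← this, ← intervalIntegral.integral_neg]
    apply intervalIntegral.integral_congr
    intro x hx
    rw [Set.uIcc_of_le (by linarith [hu.2])] at hx
    exact anti x ⟨hx.1, by linarith [hx.2, hu.1]⟩
  have h0 : (∫ x in (0:ℝ)..2, lam x) = 0 := by
    have := refl 0 ⟨le_rfl, by norm_num⟩
    rw [sub_zero] at this; linarith
  refine ⟨h0, ?_⟩
  have hT : ∀ u ∈ Set.Icc (0:ℝ) 2, ∫ x in u..2, lam x = - ∫ x in (0:ℝ)..u, lam x := by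
    intro u hu
    have := intervalIntegral.integral_add_adjacent_intervals
      (hsub 0 ⟨le_rfl, by norm_num⟩ u hu) (hsub u hu 2 ⟨by norm_num, le_rfl⟩)
    linarith
  have hcont : ContinuousOn (fun u => (∫ x in (0:ℝ)..u, lam x) ^ 2) (Set.uIcc 0 2) :=
    (intervalIntegral.continuousOn_primitive_interval' hi Set.left_mem_uIcc).pow 2
  have hii : ∀ x ∈ Set.Icc (0:ℝ) 2, ∀ y ∈ Set.Icc (0:ℝ) 2,
      IntervalIntegrable (fun u => (∫ x in (0:ℝ)..u, lam x) ^ 2) volume x y := by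
    intro x hx y hy
    refine (hcont.intervalIntegrable).mono_set ?_
    rw [Set.uIcc_of_le (show (0:ℝ) ≤ 2 by norm_num)]
    exact Set.uIcc_subset_Icc hx hy
  have e : ∫ u in (0:ℝ)..2, (∫ x in u..2, lam x) ^ 2 = ∫ u in (0:ℝ)..2, (∫ x in (0:ℝ)..u, lam x) ^ 2 := by
    apply intervalIntegral.integral_congr
    intro u hu
    rw [Set.uIcc_of_le (by norm_num)] at hu
    simp only [hT u hu, neg_sq]
  have e2 : ∫ u in (1:ℝ)..2, (∫ x in (0:ℝ)..u, lam x) ^ 2 = ∫ u in (0:ℝ)..1, (∫ x in (0:ℝ)..u, lam x) ^ 2 := by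
    have := intervalIntegral.integral_comp_sub_left (fun u => (∫ x in (0:ℝ)..u, lam x) ^ 2)
      (a := 0) (b := 1) 2
    norm_num at this
    rw [← this]
    apply intervalIntegral.integral_congr
    intro u hu
    rw [Set.uIcc_of_le (by norm_num)] at hu
    have hu' : u ∈ Set.Icc (0:ℝ) 2 := ⟨hu.1, by linarith [hu.2]⟩
    have a1 := refl u hu'
    have a2 := hT u hu'
    simp only
    congr 1; linarith
  have m0 : (0:ℝ) ∈ Set.Icc (0:ℝ) 2 := by norm_num
  have m1 : (1:ℝ) ∈ Set.Icc (0:ℝ) 2 := by norm_num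
  have m2 : (2:ℝ) ∈ Set.Icc (0:ℝ) 2 := by norm_num
  rw [e, ← intervalIntegral.integral_add_adjacent_intervals (hii 0 m0 1 m1) (hii 1 m1 2 m2), e2]
  have := hlam.normalized
  rw [Real.sqrt_eq_one] at this
  linarith

lemma quad_min (J : Finset ℕ) (s w : ℕ → ℝ) (hs : ∀ j ∈ J, 0 ≤ s j ∧ s j ≤ 2) :
    IntervalIntegrable (fun u => (∑ j ∈ J with u < s j, w j) ^ 2) volume 0 2 ∧
    ∑ j ∈ J, ∑ l ∈ J, w j * w l * min (s j) (s l)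
      = ∫ u in (0:ℝ)..2, (∑ j ∈ J with u < s j, w j) ^ 2 := by
  have e : (fun u => (∑ j ∈ J with u < s j, w j) ^ 2) = fun u => ∑ j ∈ J, ∑ l ∈ J,
      w j * w l * (Set.Iio (min (s j) (s l))).indicator (fun _ => (1:ℝ)) u := by
    ext u
    rw [sq, Finset.sum_filter, Finset.sum_mul_sum]
    refine Finset.sum_congr rfl fun j _ => Finset.sum_congr rfl fun l _ => ?_
    by_cases h1 : u < s j <;> by_cases h2 : u < s l <;> simp [h1, h2, Set.indicator]
  have hI : ∀ y : ℝ, IntervalIntegrable ((Set.Iio y).indicator (fun _ => (1:ℝ))) volume 0 2 := by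
    intro y
    rw [intervalIntegrable_iff, Set.uIoc_of_le (by norm_num)]
    exact (integrable_const (1:ℝ)).indicator measurableSet_Iio
  have hval : ∀ y : ℝ, 0 ≤ y → y ≤ 2 →
      ∫ u in (0:ℝ)..2, (Set.Iio y).indicator (fun _ => (1:ℝ)) u = y := by
    intro y h0 h2
    rw [intervalIntegral.integral_of_le (by norm_num), integral_indicator measurableSet_Iio,
      Measure.restrict_restrict measurableSet_Iio]
    have : Set.Iio y ∩ Set.Ioc 0 2 = Set.Ioo 0 y := by
      ext x; simp only [Set.mem_inter_iff, Set.mem_Iio, Set.mem_Ioc, Set.mem_Ioo]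
      constructor
      · rintro ⟨a, b, c⟩; exact ⟨b, a⟩
      · rintro ⟨a, b⟩; exact ⟨b, a, by linarith⟩
    rw [this]; simp [h0]
  rw [e]
  have hI2 : ∀ j ∈ J, IntervalIntegrable (fun u => ∑ l ∈ J,
      w j * w l * (Set.Iio (min (s j) (s l))).indicator (fun _ => (1:ℝ)) u) volume 0 2 := by
    intro j _
    have := IntervalIntegrable.sum (μ := volume) (a := (0:ℝ)) (b := 2) J
      (f := fun l u => w j * w l * (Set.Iio (min (s j) (s l))).indicator (fun _ => (1:ℝ)) u)
      (fun l _ => (hI _).const_mul _)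
    simpa only [Finset.sum_fn] using this
  constructor
  · have := IntervalIntegrable.sum (μ := volume) (a := (0:ℝ)) (b := 2) J
      (f := fun j u => ∑ l ∈ J, w j * w l * (Set.Iio (min (s j) (s l))).indicator (fun _ => (1:ℝ)) u)
      hI2
    simpa only [Finset.sum_fn] using this
  · rw [intervalIntegral.integral_finsetSum hI2]
    refine Finset.sum_congr rfl fun j hj => ?_
    rw [intervalIntegral.integral_finsetSum (fun l _ => (hI _).const_mul _)]
    refine Finset.sum_congr rfl fun l hl => ?_
    rw [intervalIntegral.integral_const_mul, hval _ (le_min (hs j hj).1 (hs l hl).1)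
      ((min_le_left _ _).trans (hs j hj).2)]

lemma block_analytic (lam : ℝ → ℝ) (hlam : IsPreAverageFn lam) :
    ∃ A ≥ (0:ℝ), ∀ h > (0:ℝ), h ≤ 1 → ∀ a ≥ (0:ℝ), ∀ J : Finset ℕ,
      (∀ j : ℕ, j ∈ J ↔ a ≤ h * j ∧ h * j ≤ a + 2) →
      |h * ∑ j ∈ J, lam (h * j - a)| ≤ A * h ∧
      |h ^ 2 * ∑ j ∈ J, ∑ l ∈ J, lam (h * j - a) * lam (h * l - a) * min (h * j - a) (h * l - a) - 1|
        ≤ A * h ∧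
      h * ∑ j ∈ J, lam (h * j - a) ^ 2 ≤ A ∧ ∀ j ∈ J, lam (h * j - a) ^ 2 ≤ A := by
  obtain ⟨N, t, K, hN, h0, h2, hlt, hL⟩ := hlam.piecewise_lipschitz
  obtain ⟨hi, ⟨B0, hB0, b0⟩, C, hC, c⟩ := goodPiece_lam lam N t K hN h0 h2 hlt hL
  obtain ⟨hT0, hT2⟩ := lam_T lam hlam hi
  set B := max B0 |lam 0| with hB
  have hB' : 0 ≤ B := le_max_of_le_left hB0
  have b : ∀ x, 0 ≤ x → x ≤ 2 → |lam x| ≤ B := by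
    intro x hx hx2
    rcases hx.eq_or_lt with rfl | h
    · exact le_max_right _ _
    · exact (b0 x h hx2).trans (le_max_left _ _)
  have hTB : ∀ u, 0 ≤ u → u ≤ 2 → |∫ x in u..2, lam x| ≤ 2 * B := by
    intro u hu hu2
    have := intervalIntegral.norm_integral_le_of_norm_le_const (C := B)
          (f := lam) (a := u) (b := 2) (by
            intro t ht
            rw [Set.uIoc_of_le hu2] at ht
            exact b t (by linarith [ht.1]) ht.2)
    rw [Real.norm_eq_abs, abs_of_nonneg (by linarith : 0 ≤ 2 - u)] at this
    nlinarith
  have hTc : IntervalIntegrable (fun u => (∫ x in u..2, lam x) ^ 2) volume 0 2 := by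
    have := (intervalIntegral.continuousOn_primitive_interval' hi Set.right_mem_uIcc)
    have h2 : ContinuousOn (fun u => (∫ x in u..2, lam x) ^ 2) (Set.uIcc 0 2) := by
      refine (this.pow 2).congr ?_
      intro u _
      simp only
      rw [intervalIntegral.integral_symm, neg_sq]
      rfl
    exact h2.intervalIntegrable
  refine ⟨(C + B) + 2 * (C * (4 * B + C)) + 3 * B ^ 2, by positivity, ?_⟩
  intro h hh hh1 a ha J hJ
  have hmem : ∀ j ∈ J, 0 ≤ h * j - a ∧ h * j - a ≤ 2 := by
    intro j hj
    have := (hJ j).1 hj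
    constructor <;> linarith
  have hcard : h * (J.card : ℝ) ≤ 3 := by
    have hsub : J ⊆ Finset.Icc ⌈a / h⌉₊ ⌊(a + 2) / h⌋₊ := by
      intro j hj
      have := (hJ j).1 hj
      rw [Finset.mem_Icc]
      constructor
      · rw [Nat.ceil_le, div_le_iff₀ hh]; linarith
      · apply Nat.le_floor; rw [le_div_iff₀ hh]; linarith
    have h1 := Finset.card_le_card hsub
    rw [Nat.card_Icc] at h1
    have hceil := Nat.le_ceil (a / h)
    have hfl := Nat.floor_le (show 0 ≤ (a + 2) / h by positivity)
    rw [div_le_iff₀ hh] at hceil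
    rw [le_div_iff₀ hh] at hfl
    have hle : ⌈a / h⌉₊ ≤ ⌊(a + 2) / h⌋₊ + 1 := by
      rw [Nat.ceil_le]
      have := Nat.lt_floor_add_one ((a + 2) / h)
      push_cast
      refine le_trans ?_ this.le
      gcongr; linarith
    have h3 : (J.card : ℝ) ≤ (⌊(a + 2) / h⌋₊ : ℝ) + 1 - (⌈a / h⌉₊ : ℝ) := by
      have : J.card + ⌈a / h⌉₊ ≤ ⌊(a + 2) / h⌋₊ + 1 := by omega
      have : ((J.card + ⌈a / h⌉₊ : ℕ) : ℝ) ≤ ((⌊(a + 2) / h⌋₊ + 1 : ℕ) : ℝ) := by exact_mod_cast this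
      push_cast at this; linarith
    nlinarith
  have hsq : ∀ j ∈ J, lam (h * j - a) ^ 2 ≤ B ^ 2 := by
    intro j hj
    rw [← sq_abs]
    have := b _ (hmem j hj).1 (hmem j hj).2
    gcongr
  have hfil : ∀ u, 0 ≤ u → u ≤ 2 → (J.filter fun j : ℕ => u < h * j - a)
      = Finset.Ioc ⌊(u + a) / h⌋₊ ⌊(2 + a) / h⌋₊ := by
    intro u hu hu2
    ext j
    rw [Finset.mem_filter, Finset.mem_Ioc, hJ, Nat.floor_lt (by positivity),
      Nat.le_floor_iff (by positivity), div_lt_iff₀ hh, le_div_iff₀ hh]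
    constructor
    · rintro ⟨⟨_, _⟩, _⟩; constructor <;> linarith
    · rintro ⟨_, _⟩; refine ⟨⟨?_, ?_⟩, ?_⟩ <;> linarith
  have hS : ∀ u, 0 ≤ u → u ≤ 2 →
      |(∑ j ∈ J with u < h * (j : ℕ) - a, h * lam (h * j - a)) - ∫ x in u..2, lam x| ≤ C * h := by
    intro u hu hu2
    rw [hfil u hu hu2, ← Finset.mul_sum]
    exact c h hh hh1 a ha u hu hu2
  refine ⟨?_, ?_, ?_, ?_⟩
  · have hs := hS 0 le_rfl (by norm_num)
    rw [hT0, sub_zero, ← Finset.mul_sum] at hs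
    have hz : |∑ j ∈ J with ¬ (0 < h * (j : ℕ) - a), lam (h * j - a)| ≤ B := by
      have hsub : ∀ j ∈ J.filter (fun j : ℕ => ¬ (0 < h * (j : ℕ) - a)), h * j - a = 0 := by
        intro j hj
        rw [Finset.mem_filter] at hj
        linarith [hmem j hj.1]
      have hc1 : (J.filter (fun j : ℕ => ¬ (0 < h * (j : ℕ) - a))).card ≤ 1 := by
        rw [Finset.card_le_one]
        intro x hx y hy
        have h1 := hsub x hx
        have h2 := hsub y hy
        have : h * ((x : ℝ) - y) = 0 := by linarith
        rcases mul_eq_zero.1 this with h | h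
        · exact absurd h hh.ne'
        · have : (x : ℝ) = y := by linarith
          exact_mod_cast this
      refine (Finset.abs_sum_le_sum_abs _ _).trans ?_
      refine (Finset.sum_le_card_nsmul _ _ B ?_).trans ?_
      · intro j hj
        rw [hsub j hj]; exact b 0 le_rfl (by norm_num)
      · rw [nsmul_eq_mul]
        have : ((J.filter (fun j : ℕ => ¬ (0 < h * (j : ℕ) - a))).card : ℝ) ≤ 1 := by exact_mod_cast hc1
        nlinarith
    rw [← Finset.sum_filter_add_sum_filter_not J (fun j : ℕ => 0 < h * (j : ℕ) - a), mul_add]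
    refine (abs_add_le _ _).trans ?_
    rw [abs_mul h (∑ j ∈ J with ¬ (0 < h * (j : ℕ) - a), lam (h * j - a)), abs_of_pos hh]
    have : 0 ≤ (2 * (C * (4 * B + C)) + 3 * B ^ 2) * h := by positivity
    nlinarith
  · obtain ⟨q1, q2⟩ := quad_min J (fun j => h * j - a) (fun j => h * lam (h * j - a)) hmem
    have e : h ^ 2 * ∑ j ∈ J, ∑ l ∈ J, lam (h * j - a) * lam (h * l - a) * min (h * j - a) (h * l - a)
        = ∑ j ∈ J, ∑ l ∈ J, (h * lam (h * j - a)) * (h * lam (h * l - a)) * min (h * j - a) (h * l - a) := by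
      rw [Finset.mul_sum]
      refine Finset.sum_congr rfl fun j _ => ?_
      rw [Finset.mul_sum]
      refine Finset.sum_congr rfl fun l _ => ?_
      ring
    rw [e, q2, ← hT2, ← intervalIntegral.integral_sub q1 hTc]
    have := intervalIntegral.norm_integral_le_of_norm_le_const (C := C * h * (4 * B + C))
          (f := fun u => (∑ j ∈ J with u < h * (j : ℕ) - a, h * lam (h * j - a)) ^ 2
            - (∫ x in u..2, lam x) ^ 2) (a := 0) (b := 2) (by
            intro u hu
            rw [Set.uIoc_of_le (by norm_num)] at hu
            have h1 := hS u hu.1.le hu.2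
            have h2 := hTB u hu.1.le hu.2
            rw [Real.norm_eq_abs, sq_sub_sq, mul_comm, abs_mul]
            gcongr
            have h3 : C * h ≤ C := by nlinarith
            rw [abs_le] at *
            constructor <;> linarith [h1.1, h1.2, h2.1, h2.2])
    rw [Real.norm_eq_abs] at this
    refine this.trans ?_
    norm_num
    have : 0 ≤ (C + B + 3 * B ^ 2) * h := by positivity
    nlinarith
  · have := Finset.sum_le_card_nsmul J _ (B ^ 2) hsq
    rw [nsmul_eq_mul] at this
    have h3 : 0 ≤ (C + B + 2 * (C * (4 * B + C))) := by positivity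
    nlinarith [sq_nonneg B]
  · intro j hj
    refine (hsq j hj).trans ?_
    have h3 : 0 ≤ (C + B + 2 * (C * (4 * B + C))) := by positivity
    nlinarith [sq_nonneg B]

section model
variable {Ω' : Type*} [MeasureSpace Ω']

lemma model_memLp {n : ℕ} {W η : ℕ → Ω' → ℝ} (hm : IsSimplifiedModel n W η) (j : ℕ) (hj : j ≤ n) :
    MemLp (W j) 2 ℙ ∧ MemLp (η j) 2 ℙ := by
  obtain ⟨mW, mη, hg, -⟩ := hm
  have hjm : j ∈ Finset.range (n + 1) := Finset.mem_range.2 (by omega)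
  constructor
  · obtain ⟨v, hv⟩ := hg (fun k => if k = j then 1 else 0) (fun _ => 0)
    have e : (fun ω => ∑ k ∈ Finset.range (n + 1),
        ((if k = j then (1:ℝ) else 0) * W k ω + 0 * η k ω)) = W j := by
      ext ω
      rw [Finset.sum_eq_single_of_mem j hjm]
      · simp
      · intro b _ hb; simp [hb]
    rw [e] at hv
    have h2 : MemLp id 2 (Measure.map (W j) (ℙ : Measure Ω')) := by
      rw [hv]; exact memLp_id_gaussianReal 2
    exact (memLp_map_measure_iff (by fun_prop) (mW j).aemeasurable).1 h2
  · obtain ⟨v, hv⟩ := hg (fun _ => 0) (fun k => if k = j then 1 else 0)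
    have e : (fun ω => ∑ k ∈ Finset.range (n + 1),
        (0 * W k ω + (if k = j then (1:ℝ) else 0) * η k ω)) = η j := by
      ext ω
      rw [Finset.sum_eq_single_of_mem j hjm]
      · simp
      · intro b _ hb; simp [hb]
    rw [e] at hv
    have h2 : MemLp id 2 (Measure.map (η j) (ℙ : Measure Ω')) := by
      rw [hv]; exact memLp_id_gaussianReal 2
    exact (memLp_map_measure_iff (by fun_prop) (mη j).aemeasurable).1 h2

lemma obs_cov {n : ℕ} {W η : ℕ → Ω' → ℝ} (hm : IsSimplifiedModel n W η) (σ τ : ℝ)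
    (j l : ℕ) (hj : j ≤ n) (hl : l ≤ n) :
    Integrable (fun ω => obs σ τ W η j ω * obs σ τ W η l ω) ∧
    ∫ ω, obs σ τ W η j ω * obs σ τ W η l ω
      = σ ^ 2 * ((min j l : ℝ) / n) + τ ^ 2 * (if j = l then 1 else 0) := by
  obtain ⟨a1, a2⟩ := model_memLp hm j hj
  obtain ⟨b1, b2⟩ := model_memLp hm l hl
  obtain ⟨-, -, -, cW, cη, cWη⟩ := hm
  have i1 : Integrable (fun ω => W j ω * W l ω) := a1.integrable_mul b1
  have i2 : Integrable (fun ω => W j ω * η l ω) := a1.integrable_mul b2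
  have i3 : Integrable (fun ω => W l ω * η j ω) := b1.integrable_mul a2
  have i4 : Integrable (fun ω => η j ω * η l ω) := a2.integrable_mul b2
  have e : (fun ω => obs σ τ W η j ω * obs σ τ W η l ω) = fun ω =>
      (σ ^ 2 * (W j ω * W l ω) + σ * τ * (W j ω * η l ω)) + (σ * τ * (W l ω * η j ω)
        + τ ^ 2 * (η j ω * η l ω)) := by
    ext ω; unfold obs; ring
  rw [e]
  have I1 := i1.const_mul (σ ^ 2)
  have I2 := i2.const_mul (σ * τ)
  have I3 := i3.const_mul (σ * τ)
  have I4 := i4.const_mul (τ ^ 2)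
  refine ⟨(I1.add I2).add (I3.add I4), ?_⟩
  rw [integral_add (f := fun ω => σ ^ 2 * (W j ω * W l ω) + σ * τ * (W j ω * η l ω))
    (g := fun ω => σ * τ * (W l ω * η j ω) + τ ^ 2 * (η j ω * η l ω))
    (I1.add I2) (I3.add I4), integral_add I1 I2, integral_add I3 I4]
  simp only [integral_const_mul]
  rw [cW j l hj hl, cη j l hj hl, cWη j l hj hl, cWη l j hl hj]
  ring

lemma preAvg_sq {n : ℕ} {W η : ℕ → Ω' → ℝ} (hm : IsSimplifiedModel n W η) (σ τ : ℝ)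
    (lam : ℝ → ℝ) (m i : ℕ) :
    Integrable (fun ω => preAvg lam n m (obs σ τ W η) i ω ^ 2) ∧
    ∫ ω, preAvg lam n m (obs σ τ W η) i ω ^ 2
      = ((m : ℝ) / n) ^ 2 * ∑ j ∈ blockIdx n m i, ∑ l ∈ blockIdx n m i,
        lam ((m : ℝ) * j / n - ((i : ℝ) - 2)) * lam ((m : ℝ) * l / n - ((i : ℝ) - 2)) *
        (σ ^ 2 * ((min j l : ℝ) / n) + τ ^ 2 * (if j = l then 1 else 0)) := by
  have hJ : ∀ j ∈ blockIdx n m i, j ≤ n := by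
    intro j hj
    have := (Finset.mem_filter.1 hj).1
    rw [Finset.mem_range] at this; omega
  have e : (fun ω => preAvg lam n m (obs σ τ W η) i ω ^ 2) = fun ω =>
      ((m : ℝ) / n) ^ 2 * ∑ j ∈ blockIdx n m i, ∑ l ∈ blockIdx n m i,
        lam ((m : ℝ) * j / n - ((i : ℝ) - 2)) * lam ((m : ℝ) * l / n - ((i : ℝ) - 2)) *
        (obs σ τ W η j ω * obs σ τ W η l ω) := by
    ext ω
    unfold preAvg
    rw [mul_pow, sq (Finset.sum _ _), Finset.sum_mul_sum]
    congr 1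
    refine Finset.sum_congr rfl fun j _ => Finset.sum_congr rfl fun l _ => ?_
    ring
  rw [e]
  have I : ∀ j ∈ blockIdx n m i, ∀ l ∈ blockIdx n m i, Integrable (fun ω =>
      lam ((m : ℝ) * j / n - ((i : ℝ) - 2)) * lam ((m : ℝ) * l / n - ((i : ℝ) - 2)) *
        (obs σ τ W η j ω * obs σ τ W η l ω)) := fun j hj l hl =>
    (obs_cov hm σ τ j l (hJ j hj) (hJ l hl)).1.const_mul _
  refine ⟨(integrable_finsetSum _ fun j hj => integrable_finsetSum _ fun l hl =>
    I j hj l hl).const_mul _, ?_⟩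
  rw [integral_const_mul, integral_finsetSum _ (fun j hj => integrable_finsetSum _ (I j hj))]
  congr 1
  refine Finset.sum_congr rfl fun j hj => ?_
  rw [integral_finsetSum _ (I j hj)]
  refine Finset.sum_congr rfl fun l hl => ?_
  rw [integral_const_mul, (obs_cov hm σ τ j l (hJ j hj) (hJ l hl)).2]

lemma biasCorr_int {n : ℕ} {W η : ℕ → Ω' → ℝ} (hm : IsSimplifiedModel n W η) (σ τ : ℝ)
    (lam : ℝ → ℝ) (m i : ℕ) :
    Integrable (fun ω => biasCorr lam n m (obs σ τ W η) i ω) ∧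
    ∫ ω, biasCorr lam n m (obs σ τ W η) i ω
      = ((m : ℝ) ^ 2 / (2 * (n : ℝ) ^ 2)) * ∑ j ∈ (blockIdx n m i).filter (fun j => 1 ≤ j),
    (lam ((m : ℝ) * j / n - ((i : ℝ) - 2))) ^ 2 * (σ ^ 2 / n + 2 * τ ^ 2) := by
  have inc : ∀ j ∈ (blockIdx n m i).filter (fun j => 1 ≤ j),
      Integrable (fun ω => (obs σ τ W η j ω - obs σ τ W η (j - 1) ω) ^ 2) ∧
      ∫ ω, (obs σ τ W η j ω - obs σ τ W η (j - 1) ω) ^ 2 = σ ^ 2 / n + 2 * τ ^ 2 := by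
    intro j hj
    rw [Finset.mem_filter] at hj
    have hjn : j ≤ n := by
      have := (Finset.mem_filter.1 hj.1).1
      rw [Finset.mem_range] at this; omega
    obtain ⟨k, rfl⟩ : ∃ k, j = k + 1 := ⟨j - 1, by omega⟩
    rw [Nat.add_sub_cancel]
    obtain ⟨i1, e1⟩ := obs_cov hm σ τ (k + 1) (k + 1) hjn hjn
    obtain ⟨i2, e2⟩ := obs_cov hm σ τ (k + 1) k hjn (by omega)
    obtain ⟨i3, e3⟩ := obs_cov hm σ τ k k (by omega) (by omega)
    have e : (fun ω => (obs σ τ W η (k + 1) ω - obs σ τ W η k ω) ^ 2) = fun ω =>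
        (obs σ τ W η (k + 1) ω * obs σ τ W η (k + 1) ω -
          2 * (obs σ τ W η (k + 1) ω * obs σ τ W η k ω)) + obs σ τ W η k ω * obs σ τ W η k ω := by
      ext ω; ring
    rw [e]
    have I2 := i2.const_mul 2
    refine ⟨(i1.sub I2).add i3, ?_⟩
    rw [integral_add (f := fun ω => obs σ τ W η (k + 1) ω * obs σ τ W η (k + 1) ω -
          2 * (obs σ τ W η (k + 1) ω * obs σ τ W η k ω)) (i1.sub I2) i3, integral_sub i1 I2, integral_const_mul, e1, e2, e3]
    have : min ((k : ℝ) + 1) k = k := min_eq_right (by linarith)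
    simp [this]
    ring
  unfold biasCorr
  have I : ∀ j ∈ (blockIdx n m i).filter (fun j => 1 ≤ j), Integrable (fun ω =>
      (lam ((m : ℝ) * j / n - ((i : ℝ) - 2))) ^ 2 *
        (obs σ τ W η j ω - obs σ τ W η (j - 1) ω) ^ 2) := fun j hj => (inc j hj).1.const_mul _
  refine ⟨(integrable_finsetSum _ I).const_mul _, ?_⟩
  rw [integral_const_mul, integral_finsetSum _ I]
  congr 1
  refine Finset.sum_congr rfl fun j hj => ?_
  rw [integral_const_mul, (inc j hj).2]

end model

lemma mem_blockIdx (n m i : ℕ) (hn : 0 < n) (hi2 : 2 ≤ i) (him : i ≤ m) (j : ℕ) :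
    j ∈ blockIdx n m i ↔ (i : ℝ) - 2 ≤ (m : ℝ) / n * j ∧ (m : ℝ) / n * j ≤ (i : ℝ) - 2 + 2 := by
  have hn' : (0:ℝ) < n := by exact_mod_cast hn
  have hm' : (0:ℝ) < m := by exact_mod_cast (by omega : 0 < m)
  unfold blockIdx
  rw [Finset.mem_filter, Finset.mem_range, div_le_div_iff₀ hm' hn', div_le_div_iff₀ hn' hm',
    sub_add_cancel, div_mul_eq_mul_div, le_div_iff₀ hn', div_le_iff₀ hn', mul_comm (j : ℝ)]
  constructor
  · rintro ⟨_, h⟩; exact h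
  · rintro ⟨h1, h2⟩
    refine ⟨?_, h1, h2⟩
    have : (i : ℝ) ≤ m := by exact_mod_cast him
    have h3 : (m : ℝ) * j ≤ m * n := h2.trans (by gcongr)
    have h4 : (j : ℝ) ≤ n := le_of_mul_le_mul_left h3 hm'
    have : j ≤ n := by exact_mod_cast h4
    omega

lemma block_arith (σ τ A h a m n S Q P P0 : ℝ) (hA : 0 ≤ A) (hn' : 0 < n) (hm' : 0 < m)
    (hh : 0 < h) (hh1 : h ≤ 1) (ha : 0 ≤ a) (ham : a ≤ m) (hninv : 1 / n = h / m)
    (h1 : |h * S| ≤ A * h) (h2 : |h ^ 2 * Q - 1| ≤ A * h) (d3 : P0 ≤ A) (d3' : 0 ≤ P0)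
    (d4' : 0 ≤ P) (d4 : h * P ≤ A) :
    |h ^ 2 * (σ ^ 2 * (a / m) * S ^ 2 + σ ^ 2 / m * Q + τ ^ 2 * (P + P0))
      - h ^ 2 / 2 * (P * (σ ^ 2 / n + 2 * τ ^ 2)) - σ ^ 2 / m|
    ≤ (σ ^ 2 * A ^ 2 + σ ^ 2 * A + τ ^ 2 * A + σ ^ 2 * A) * (h ^ 2 + h / m) := by
  have e : h ^ 2 * (σ ^ 2 * (a / m) * S ^ 2 + σ ^ 2 / m * Q + τ ^ 2 * (P + P0))
      - h ^ 2 / 2 * (P * (σ ^ 2 / n + 2 * τ ^ 2)) - σ ^ 2 / m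
      = σ ^ 2 * ((a / m) * (h * S) ^ 2) + σ ^ 2 * ((h ^ 2 * Q - 1) / m) + τ ^ 2 * (h ^ 2 * P0)
        - σ ^ 2 * (h * (h * P) * (1 / n) / 2) := by ring
  rw [e]
  have f1 : |(a / m) * (h * S) ^ 2| ≤ A ^ 2 * h ^ 2 := by
    rw [abs_of_nonneg (by positivity), ← sq_abs (h * S)]
    have : a / m ≤ 1 := by rw [div_le_one hm']; exact ham
    calc a / m * |h * S| ^ 2 ≤ 1 * (A * h) ^ 2 := by gcongr
      _ = _ := by ring
  have f2 : |(h ^ 2 * Q - 1) / m| ≤ A * (h / m) := by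
    rw [abs_div, abs_of_pos hm', ← mul_div_assoc]
    gcongr
  have f3 : h ^ 2 * P0 ≤ A * h ^ 2 := by nlinarith [sq_nonneg h]
  have f3' : 0 ≤ h ^ 2 * P0 := by positivity
  have f4 : h * (h * P) * (1 / n) / 2 ≤ A * (h / m) := by
    rw [hninv]
    have : h * (h * P) ≤ 1 * A := by gcongr
    have hx : 0 ≤ h / m := by positivity
    nlinarith
  have f4' : 0 ≤ h * (h * P) * (1 / n) / 2 := by positivity
  have x1 : 0 ≤ h / m := by positivity
  generalize h / m = z at *
  generalize h ^ 2 * P0 = y3 at *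
  generalize h * (h * P) * (1 / n) / 2 = y4 at *
  generalize (h ^ 2 * Q - 1) / m = y2 at *
  generalize (a / m) * (h * S) ^ 2 = y1 at *
  have x2 : 0 ≤ h ^ 2 := by positivity
  generalize h ^ 2 = w at *
  have hs : 0 ≤ σ ^ 2 := sq_nonneg _
  have ht : 0 ≤ τ ^ 2 := sq_nonneg _
  generalize σ ^ 2 = s at *
  generalize τ ^ 2 = t at *
  rw [abs_le] at f1 f2
  have g1 := mul_le_mul_of_nonneg_left f1.1 hs
  have g2 := mul_le_mul_of_nonneg_left f1.2 hs
  have g3 := mul_le_mul_of_nonneg_left f2.1 hs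
  have g4 := mul_le_mul_of_nonneg_left f2.2 hs
  have g5 := mul_le_mul_of_nonneg_left f3 ht
  have g6 := mul_nonneg ht f3'
  have g7 := mul_le_mul_of_nonneg_left f4 hs
  have g8 := mul_nonneg hs f4'
  have k1 : 0 ≤ s * A ^ 2 * z := by positivity
  have k2 : 0 ≤ s * A * z := by positivity
  have k3 : 0 ≤ t * A * z := by positivity
  have k4 : 0 ≤ s * A * w := by positivity
  have k5 : 0 ≤ t * A * w := by positivity
  have k6 : 0 ≤ s * A ^ 2 * w := by positivity
  rw [abs_le]
  constructor <;> linarith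

lemma block_bound (σ τ : ℝ) (lam : ℝ → ℝ) (hlam : IsPreAverageFn lam) :
    ∃ A ≥ (0:ℝ), ∀ n m i : ℕ, 0 < n → m ≤ n → 2 ≤ i → i ≤ m →
    |(((m : ℝ) / n) ^ 2 * ∑ j ∈ blockIdx n m i, ∑ l ∈ blockIdx n m i,
        lam ((m : ℝ) * j / n - ((i : ℝ) - 2)) * lam ((m : ℝ) * l / n - ((i : ℝ) - 2)) *
        (σ ^ 2 * ((min j l : ℝ) / n) + τ ^ 2 * (if j = l then 1 else 0)))
     - (((m : ℝ) ^ 2 / (2 * (n : ℝ) ^ 2)) * ∑ j ∈ (blockIdx n m i).filter (fun j => 1 ≤ j),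
    (lam ((m : ℝ) * j / n - ((i : ℝ) - 2))) ^ 2 * (σ ^ 2 / n + 2 * τ ^ 2)) - σ ^ 2 / m|
      ≤ A * (((m : ℝ) / n) ^ 2 + (m : ℝ) / n / m) := by
  obtain ⟨A, hA, H⟩ := block_analytic lam hlam
  refine ⟨σ ^ 2 * A ^ 2 + σ ^ 2 * A + τ ^ 2 * A + σ ^ 2 * A, by positivity, ?_⟩
  intro n m i hn hmn hi2 him
  have hn' : (0:ℝ) < n := by exact_mod_cast hn
  have hm' : (0:ℝ) < m := by exact_mod_cast (by omega : 0 < m)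
  have hm1 : (1:ℝ) ≤ m := by exact_mod_cast (by omega : 1 ≤ m)
  have hh : (0:ℝ) < (m : ℝ) / n := by positivity
  have hh1 : (m : ℝ) / n ≤ 1 := by rw [div_le_one hn']; exact_mod_cast hmn
  have ha : (0:ℝ) ≤ (i : ℝ) - 2 := by
    have : (2:ℝ) ≤ i := by exact_mod_cast hi2
    linarith
  have ham : (i : ℝ) - 2 ≤ m := by
    have : (i:ℝ) ≤ m := by exact_mod_cast him
    linarith
  obtain ⟨h1, h2, h3, h4⟩ := H _ hh hh1 _ ha (blockIdx n m i) (mem_blockIdx n m i hn hi2 him)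
  simp only [mul_div_right_comm (m : ℝ)]
  have hhn : (m : ℝ) ^ 2 / (2 * (n : ℝ) ^ 2) = ((m : ℝ) / n) ^ 2 / 2 := by
    field_simp
  have hninv : (1:ℝ) / n = (m : ℝ) / n / m := by field_simp
  rw [hhn]
  set h : ℝ := (m : ℝ) / n with hh_def
  set a : ℝ := (i : ℝ) - 2 with ha_def
  set J := blockIdx n m i
  set F : ℕ → ℝ := fun j => lam (h * j - a) with hF
  -- decomposition
  have hmin : ∀ j l : ℕ, (min j l : ℝ) / n = a / m + min (h * j - a) (h * l - a) / m := by
    intro j l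
    rw [min_sub_sub_right, ← mul_min_of_nonneg _ _ hh.le, hh_def]
    field_simp
    ring
  have d1 : ∑ j ∈ J, ∑ l ∈ J, F j * F l * (σ ^ 2 * ((min j l : ℝ) / n)
        + τ ^ 2 * (if j = l then 1 else 0))
      = σ ^ 2 * (a / m) * (∑ j ∈ J, F j) ^ 2
        + σ ^ 2 / m * (∑ j ∈ J, ∑ l ∈ J, F j * F l * min (h * j - a) (h * l - a))
        + τ ^ 2 * ∑ j ∈ J, F j ^ 2 := by
    rw [sq (∑ j ∈ J, F j), Finset.sum_mul_sum, Finset.mul_sum, Finset.mul_sum, Finset.mul_sum,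
      ← Finset.sum_add_distrib, ← Finset.sum_add_distrib]
    refine Finset.sum_congr rfl fun j hj => ?_
    have : F j ^ 2 = ∑ l ∈ J, F j * F l * (if j = l then (1:ℝ) else 0) := by
      rw [Finset.sum_eq_single_of_mem j hj]
      · simp; ring
      · intro b _ hb; simp [hb.symm]
    rw [this, Finset.mul_sum, Finset.mul_sum, Finset.mul_sum,
      ← Finset.sum_add_distrib, ← Finset.sum_add_distrib]
    refine Finset.sum_congr rfl fun l hl => ?_
    rw [hmin]; ring
  have d2 : ∑ j ∈ J, F j ^ 2 = ∑ j ∈ J.filter (fun j => 1 ≤ j), F j ^ 2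
      + ∑ j ∈ J.filter (fun j => ¬ 1 ≤ j), F j ^ 2 :=
    (Finset.sum_filter_add_sum_filter_not J _ _).symm
  have d3 : ∑ j ∈ J.filter (fun j => ¬ 1 ≤ j), F j ^ 2 ≤ A := by
    have hc : (J.filter (fun j => ¬ 1 ≤ j)).card ≤ 1 := by
      rw [Finset.card_le_one]
      intro x hx y hy
      rw [Finset.mem_filter] at hx hy
      omega
    have hc' : ((J.filter (fun j => ¬ 1 ≤ j)).card : ℝ) ≤ 1 := by exact_mod_cast hc
    have := Finset.sum_le_card_nsmul (J.filter (fun j => ¬ 1 ≤ j)) (fun j => F j ^ 2) A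
      (fun j hj => h4 j (Finset.mem_filter.1 hj).1)
    rw [nsmul_eq_mul] at this
    nlinarith
  have d3' : 0 ≤ ∑ j ∈ J.filter (fun j => ¬ 1 ≤ j), F j ^ 2 :=
    Finset.sum_nonneg fun _ _ => sq_nonneg _
  have d4' : 0 ≤ ∑ j ∈ J.filter (fun j => 1 ≤ j), F j ^ 2 :=
    Finset.sum_nonneg fun _ _ => sq_nonneg _
  have d4 : h * ∑ j ∈ J.filter (fun j => 1 ≤ j), F j ^ 2 ≤ A := by
    change h * ∑ j ∈ J, F j ^ 2 ≤ A at h3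
    rw [d2] at h3
    nlinarith
  have d5 : ∑ j ∈ J.filter (fun j => 1 ≤ j), F j ^ 2 * (σ ^ 2 / n + 2 * τ ^ 2)
      = (∑ j ∈ J.filter (fun j => 1 ≤ j), F j ^ 2) * (σ ^ 2 / n + 2 * τ ^ 2) := by
    rw [Finset.sum_mul]
  change |h ^ 2 * ∑ j ∈ J, ∑ l ∈ J, F j * F l * (σ ^ 2 * ((min j l : ℝ) / n)
        + τ ^ 2 * (if j = l then 1 else 0)) - h ^ 2 / 2 * ∑ j ∈ J.filter (fun j => 1 ≤ j),
        F j ^ 2 * (σ ^ 2 / n + 2 * τ ^ 2) - σ ^ 2 / m| ≤ _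
  change |h ^ 2 * ∑ j ∈ J, ∑ l ∈ J, F j * F l * min (h * j - a) (h * l - a) - 1| ≤ A * h at h2
  change |h * ∑ j ∈ J, F j| ≤ A * h at h1
  rw [d1, d5, d2]
  exact block_arith σ τ A h a m n _ _ _ _ hA hn' hm' hh hh1 ha ham hninv h1 h2 d3 d3' d4' d4

lemma mOf_bounds (c : ℝ) (hc : 0 < c) : ∃ N : ℕ, ∀ n ≥ N, 0 < n ∧ mOf c n ≤ n ∧
    (mOf c n : ℝ) ≤ 2 * c * Real.sqrt n ∧ c * Real.sqrt n / 2 ≤ mOf c n ∧ 1 ≤ mOf c n := by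
  obtain ⟨N, hN⟩ := exists_nat_ge ((2 * c) ^ 2 + (2 / c) ^ 2 + 1)
  refine ⟨N, fun n hn => ?_⟩
  have hn' : (2 * c) ^ 2 + (2 / c) ^ 2 + 1 ≤ (n : ℝ) := hN.trans (by exact_mod_cast hn)
  have hnpos : (0:ℝ) < n := by have := sq_nonneg (2 * c); have := sq_nonneg (2 / c); linarith
  have hs1 : 2 * c ≤ Real.sqrt n := by
    apply Real.le_sqrt_of_sq_le; have := sq_nonneg (2 / c); linarith
  have hs2 : 2 / c ≤ Real.sqrt n := by
    apply Real.le_sqrt_of_sq_le; have := sq_nonneg (2 * c); linarith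
  have hsq : Real.sqrt n * Real.sqrt n = n := Real.mul_self_sqrt hnpos.le
  have hspos : 0 < Real.sqrt n := Real.sqrt_pos.2 hnpos
  set r := Real.sqrt n
  set k := ⌊r / c⌋₊ with hk
  have hm : mOf c n = n / k := rfl
  have k1 : (k : ℝ) * c ≤ r := by
    have := Nat.floor_le (show 0 ≤ r / c by positivity)
    rwa [← hk, le_div_iff₀ hc] at this
  have k2 : r < (k + 1 : ℝ) * c := by
    have := Nat.lt_floor_add_one (r / c)
    rwa [← hk, div_lt_iff₀ hc] at this
  have k3 : r ≤ 2 * (k * c) := by linarith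
  have kpos : (0:ℝ) < k := by
    by_contra hcon
    have : (k : ℝ) * c ≤ 0 := mul_nonpos_of_nonpos_of_nonneg (not_lt.1 hcon) hc.le
    linarith
  have kpos' : 0 < k := by exact_mod_cast kpos
  have m1 : ((n / k : ℕ) : ℝ) * k ≤ n := by exact_mod_cast Nat.div_mul_le_self n k
  have m2 : (n : ℝ) < ((n / k : ℕ) + 1 : ℝ) * k := by
    have := Nat.lt_div_mul_add (a := n) kpos'
    have : (n : ℝ) < ((n / k * k + k : ℕ) : ℝ) := by exact_mod_cast this
    push_cast at this; linarith
  have hcr : 2 ≤ c * r := by rw [div_le_iff₀ hc] at hs2; linarith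
  have lower : c * r ≤ ((n / k : ℕ) : ℝ) + 1 := by
    have h1 : c * n ≤ (((n / k : ℕ) : ℝ) + 1) * r := by
      have : (((n / k : ℕ) : ℝ) + 1) * (k * c) ≤ (((n / k : ℕ) : ℝ) + 1) * r := by gcongr
      nlinarith
    rw [← hsq, ← mul_assoc] at h1
    exact le_of_mul_le_mul_right h1 hspos
  have upper : ((n / k : ℕ) : ℝ) ≤ 2 * c * r := by
    have h1 : ((n / k : ℕ) : ℝ) * r ≤ 2 * c * r * r := by
      have : ((n / k : ℕ) : ℝ) * r ≤ ((n / k : ℕ) : ℝ) * (2 * (k * c)) := by gcongr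
      nlinarith
    exact le_of_mul_le_mul_right h1 hspos
  rw [hm]
  refine ⟨by exact_mod_cast hnpos, Nat.div_le_self _ _, upper, by linarith, ?_⟩
  have : (1:ℝ) ≤ ((n / k : ℕ) : ℝ) := by linarith
  exact_mod_cast this

theorem integratedVolatilityEstimator_bias (σ τ c : ℝ) (hσ : 0 < σ) (hτ : 0 < τ) (hc : 0 < c)
    (lam : ℝ → ℝ) (hlam : IsPreAverageFn lam)
    (Ω : ℕ → Type*) [∀ n, MeasureSpace (Ω n)] [∀ n, IsProbabilityMeasure (ℙ : Measure (Ω n))]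
    (W η : (n : ℕ) → ℕ → Ω n → ℝ)
    (hmodel : ∀ n, IsSimplifiedModel n (W n) (η n)) :
    ∃ C > 0, ∃ N : ℕ, ∀ n ≥ N,
      |(∫ ω, ∑ i ∈ Finset.Icc 2 (mOf c n),
            ((preAvg lam n (mOf c n) (obs σ τ (W n) (η n)) i ω) ^ 2
              - biasCorr lam n (mOf c n) (obs σ τ (W n) (η n)) i ω))
          - σ ^ 2| ≤ C / Real.sqrt n := by
  obtain ⟨A, hA, H⟩ := block_bound σ τ lam hlam
  obtain ⟨N, hN⟩ := mOf_bounds c hc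
  refine ⟨A * (4 * c ^ 2 + 1) * (2 * c) + σ ^ 2 * (2 / c), by positivity, N, ?_⟩
  intro n hn
  obtain ⟨hn0, hmn, hup, hlow, hm1⟩ := hN n hn
  set m := mOf c n
  have hn' : (0:ℝ) < n := by exact_mod_cast hn0
  have hm' : (0:ℝ) < m := by exact_mod_cast hm1
  have hspos : 0 < Real.sqrt n := Real.sqrt_pos.2 hn'
  have hsq : Real.sqrt n * Real.sqrt n = n := Real.mul_self_sqrt hn'.le
  have P := fun i => preAvg_sq (hmodel n) σ τ lam m i
  have Bc := fun i => biasCorr_int (hmodel n) σ τ lam m i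
  rw [integral_finsetSum (Finset.Icc 2 m) (f := fun i ω =>
    preAvg lam n m (obs σ τ (W n) (η n)) i ω ^ 2 - biasCorr lam n m (obs σ τ (W n) (η n)) i ω)
    (fun i _ => (P i).1.sub (Bc i).1)]
  have hsum : |∑ i ∈ Finset.Icc 2 m, ((∫ ω, (preAvg lam n m (obs σ τ (W n) (η n)) i ω ^ 2
      - biasCorr lam n m (obs σ τ (W n) (η n)) i ω)) - σ ^ 2 / m)|
      ≤ m * (A * (((m : ℝ) / n) ^ 2 + (m : ℝ) / n / m)) := by
    refine (Finset.abs_sum_le_sum_abs _ _).trans ?_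
    refine (Finset.sum_le_card_nsmul _ _ (A * (((m : ℝ) / n) ^ 2 + (m : ℝ) / n / m)) ?_).trans ?_
    · intro i hi
      rw [Finset.mem_Icc] at hi
      rw [integral_sub (P i).1 (Bc i).1, (P i).2, (Bc i).2]
      exact H n m i hn0 hmn hi.1 hi.2
    · rw [nsmul_eq_mul, Nat.card_Icc]
      gcongr
      omega
  rw [Finset.sum_sub_distrib, Finset.sum_const, Nat.card_Icc, nsmul_eq_mul,
    show m + 1 - 2 = m - 1 by omega, Nat.cast_sub hm1] at hsum
  have e1 : ((m : ℝ) - (1 : ℕ)) * (σ ^ 2 / m) = σ ^ 2 - σ ^ 2 / m := by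
    push_cast; field_simp
  rw [e1] at hsum
  have hh : (m : ℝ) / n ≤ 2 * c / Real.sqrt n := by
    rw [div_le_div_iff₀ hn' hspos]
    nlinarith
  have hb : m * (A * (((m : ℝ) / n) ^ 2 + (m : ℝ) / n / m))
      ≤ A * (4 * c ^ 2 + 1) * (2 * c) / Real.sqrt n := by
    have e : m * (A * (((m : ℝ) / n) ^ 2 + (m : ℝ) / n / m))
        = A * ((m : ℝ) ^ 2 / n + 1) * ((m : ℝ) / n) := by field_simp
    have hq : (m : ℝ) ^ 2 / n ≤ 4 * c ^ 2 := by
      rw [div_le_iff₀ hn']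
      calc (m : ℝ) ^ 2 ≤ (2 * c * Real.sqrt n) ^ 2 := by gcongr
        _ = 4 * c ^ 2 * (Real.sqrt n * Real.sqrt n) := by ring
        _ = _ := by rw [hsq]
    rw [e, mul_div_assoc]
    gcongr
  have hr : σ ^ 2 / m ≤ σ ^ 2 * (2 / c) / Real.sqrt n := by
    rw [mul_div_assoc, div_eq_mul_inv (σ ^ 2) (m : ℝ)]
    gcongr
    rw [div_div, inv_eq_one_div, div_le_div_iff₀ hm' (by positivity)]
    linarith
  have hr0 : 0 ≤ σ ^ 2 / m := by positivity
  rw [add_div]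
  rw [abs_le] at *
  constructor <;> linarith [hsum.1, hsum.2]
end

section
/- In the simplified model, the variance of the total bias correction is negligible at rate n^{−1/2}: lim_{n→∞} n^{1/2} · Var(Σ_{i=2}^m 𝔟(λ,Y)_{i,m}) = 0. -/
open MeasureTheory ProbabilityTheory Real

section helpers

set_option linter.unusedSectionVars false

theorem gauss_fourth (v : NNReal) : ∫ x, x ^ 4 ∂(gaussianReal 0 v) = 3 * (v:ℝ) ^ 2 := by
  have h := iteratedDeriv_mgf_zero (X := id) (μ := gaussianReal 0 v)
    (by simp [integrableExpSet_id_gaussianReal]) 4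
  have hf : mgf id (gaussianReal 0 v) = fun t ↦ rexp (v * t ^ 2 / 2) := by
    rw [mgf_id_gaussianReal]; simp
  have key : ∀ (p q : ℝ → ℝ), (∀ t, HasDerivAt p (q t) t) →
      deriv (fun t => p t * rexp (v * t ^ 2 / 2))
        = fun t => (q t + p t * (v * t)) * rexp (v * t ^ 2 / 2) := by
    intro p q hp
    funext t
    have h1 : HasDerivAt (fun t : ℝ => (v:ℝ) * t ^ 2 / 2) (v * t) t := by
      have := ((hasDerivAt_pow 2 t).const_mul (v:ℝ)).div_const 2
      refine this.congr_deriv ?_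
      norm_num; ring
    have := ((hp t).mul h1.exp).deriv
    rw [show (fun t => p t * rexp (v * t ^ 2 / 2)) = p * (fun t => rexp (v * t ^ 2 / 2)) from rfl,
      this]
    ring
  have h0 : (fun t ↦ rexp (v * t ^ 2 / 2)) = fun t : ℝ => (1:ℝ) * rexp (v * t ^ 2 / 2) := by
    simp
  rw [hf, h0, iteratedDeriv_succ', key (fun _ => 1) (fun _ => 0) (fun t => hasDerivAt_const t 1),
    iteratedDeriv_succ',
    key (fun t => 0 + 1 * (v * t)) (fun _ => v) (fun t => by
      simpa using (hasDerivAt_id t).const_mul (v:ℝ)),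
    iteratedDeriv_succ',
    key (fun t => v + (0 + 1 * (v * t)) * (v * t)) (fun t => 2 * v ^ 2 * t) (fun t => by
      have := ((hasDerivAt_pow 2 t).const_mul ((v:ℝ) ^ 2)).const_add (v:ℝ)
      convert! this using 1
      · funext t; ring
      · simp; ring),
    iteratedDeriv_succ', key _ (fun t => 3 * v ^ 2 + 3 * v ^ 3 * t ^ 2) (fun t => by
      have := ((hasDerivAt_pow 3 t).const_mul ((v:ℝ) ^ 3)).add
        ((hasDerivAt_id t).const_mul (3 * (v:ℝ) ^ 2))
      convert! this using 1
      · funext t; simp; ring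
      · simp; ring)] at h
  simp at h
  exact h.symm

variable {Ω : Type*} [MeasureSpace Ω] [IsProbabilityMeasure (ℙ : Measure Ω)]

/-- centered Gaussian real random variable -/
def CGauss (X : Ω → ℝ) : Prop := Measurable X ∧ ∃ v : NNReal, Measure.map X ℙ = gaussianReal 0 v

theorem CGauss.integrable_four {X : Ω → ℝ} (h : CGauss X) : Integrable (fun ω => X ω ^ 4) ℙ := by
  obtain ⟨hm, v, hv⟩ := h
  have h1 : Integrable (fun x : ℝ => x ^ 4) (gaussianReal 0 v) := by
    have := (memLp_id_gaussianReal (μ := 0) (v := v) 4).integrable_norm_pow (p := 4) (by norm_num)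
    refine this.congr (Filter.Eventually.of_forall fun x => ?_)
    simp
    exact Even.pow_abs (by decide) x
  rw [← hv] at h1
  exact (integrable_map_measure (by fun_prop) hm.aemeasurable).1 h1

theorem CGauss.memLp_sq {X : Ω → ℝ} (h : CGauss X) : MemLp (fun ω => X ω ^ 2) 2 ℙ := by
  have := h.1
  rw [memLp_two_iff_integrable_sq (by fun_prop)]
  exact h.integrable_four.congr (Filter.Eventually.of_forall fun x => by simp only; ring)

theorem CGauss.memLp {X : Ω → ℝ} (h : CGauss X) : MemLp X 2 ℙ := by
  have := h.1
  rw [memLp_two_iff_integrable_sq (by fun_prop)]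
  exact h.memLp_sq.integrable (by norm_num)

theorem CGauss.fourth {X : Ω → ℝ} (h : CGauss X) :
    ∫ ω, X ω ^ 4 = 3 * (∫ ω, X ω ^ 2) ^ 2 := by
  obtain ⟨hm, v, hv⟩ := h
  have h4 : ∫ ω, X ω ^ 4 = ∫ x, x ^ 4 ∂(gaussianReal 0 v) := by
    rw [← hv, integral_map hm.aemeasurable (by fun_prop)]
  have h2 : ∫ ω, X ω ^ 2 = ∫ x, x ^ 2 ∂(gaussianReal 0 v) := by
    rw [← hv, integral_map hm.aemeasurable (by fun_prop)]
  have h2' : ∫ x, x ^ 2 ∂(gaussianReal 0 v) = v := by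
    have := variance_fun_id_gaussianReal (μ := 0) (v := v)
    rw [variance_of_integral_eq_zero (by fun_prop) (by simp)] at this
    exact this
  rw [h4, h2, h2', gauss_fourth]

theorem bil {A B C D : Ω → ℝ} (hA : MemLp A 2 ℙ) (hB : MemLp B 2 ℙ) (hC : MemLp C 2 ℙ)
    (hD : MemLp D 2 ℙ) (a b c d : ℝ) :
    ∫ ω, (a * A ω + b * B ω) * (c * C ω + d * D ω)
      = a * c * (∫ ω, A ω * C ω) + a * d * (∫ ω, A ω * D ω) + b * c * (∫ ω, B ω * C ω)
        + b * d * (∫ ω, B ω * D ω) := by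
  have i1 : Integrable (fun ω => A ω * C ω) ℙ := hA.integrable_mul hC
  have i2 : Integrable (fun ω => A ω * D ω) ℙ := hA.integrable_mul hD
  have i3 : Integrable (fun ω => B ω * C ω) ℙ := hB.integrable_mul hC
  have i4 : Integrable (fun ω => B ω * D ω) ℙ := hB.integrable_mul hD
  have i12 : Integrable (fun ω => a * c * (A ω * C ω) + a * d * (A ω * D ω)) ℙ :=
    (i1.const_mul _).add (i2.const_mul _)
  have i123 : Integrable (fun ω => a * c * (A ω * C ω) + a * d * (A ω * D ω)
      + b * c * (B ω * C ω)) ℙ := i12.add (i3.const_mul _)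
  rw [← integral_const_mul, ← integral_const_mul, ← integral_const_mul, ← integral_const_mul,
    ← integral_add (i1.const_mul _) (i2.const_mul _),
    ← integral_add i12 (i3.const_mul _), ← integral_add i123 (i4.const_mul _)]
  congr 1; funext ω; ring

theorem cov_sq {X Y : Ω → ℝ} (hX : CGauss X) (hY : CGauss Y)
    (hp : CGauss (fun ω => X ω + Y ω)) (hm : CGauss (fun ω => X ω - Y ω)) :
    cov[fun ω => X ω ^ 2, fun ω => Y ω ^ 2; ℙ] = 2 * (∫ ω, X ω * Y ω) ^ 2 := by
  have e1 := hX.fourth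
  have e2 := hY.fourth
  have e3 := hp.fourth
  have e4 := hm.fourth
  have b1 := bil hX.memLp hY.memLp hX.memLp hY.memLp 1 1 1 1
  have b2 := bil hX.memLp hY.memLp hX.memLp hY.memLp 1 (-1) 1 (-1)
  have c1 : ∫ ω, (X ω + Y ω) ^ 2
      = ∫ ω, (1 * X ω + 1 * Y ω) * (1 * X ω + 1 * Y ω) := by congr 1; funext ω; ring
  have c2 : ∫ ω, (X ω - Y ω) ^ 2
      = ∫ ω, (1 * X ω + (-1) * Y ω) * (1 * X ω + (-1) * Y ω) := by congr 1; funext ω; ring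
  have c3 : ∫ ω, Y ω * X ω = ∫ ω, X ω * Y ω := by congr 1; funext ω; ring
  have c4 : ∫ ω, X ω * X ω = ∫ ω, X ω ^ 2 := by congr 1; funext ω; ring
  have c5 : ∫ ω, Y ω * Y ω = ∫ ω, Y ω ^ 2 := by congr 1; funext ω; ring
  rw [c1, b1] at e3
  rw [c2, b2] at e4
  have i1 := hX.integrable_four
  have i2 := hY.integrable_four
  have i3 : Integrable (fun ω => X ω ^ 2 * Y ω ^ 2) ℙ := hX.memLp_sq.integrable_mul hY.memLp_sq
  have e5 : (∫ ω, (X ω + Y ω) ^ 4) + (∫ ω, (X ω - Y ω) ^ 4)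
      = 2 * (∫ ω, X ω ^ 4) + 2 * (∫ ω, Y ω ^ 4) + 12 * ∫ ω, X ω ^ 2 * Y ω ^ 2 := by
    have i12 : Integrable (fun ω => 2 * X ω ^ 4 + 2 * Y ω ^ 4) ℙ :=
      (i1.const_mul _).add (i2.const_mul _)
    rw [← integral_add hp.integrable_four hm.integrable_four, ← integral_const_mul,
      ← integral_const_mul, ← integral_const_mul,
      ← integral_add (i1.const_mul _) (i2.const_mul _),
      ← integral_add i12 (i3.const_mul _)]
    congr 1; funext ω; ring
  rw [covariance_eq_sub hX.memLp_sq hY.memLp_sq]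
  simp only [Pi.mul_apply]
  rw [e1, e2, e3, e4, c3, c4, c5] at e5
  linarith

/-- linear span of the model variables -/
def InSpan (n : ℕ) (W η : ℕ → Ω → ℝ) (X : Ω → ℝ) : Prop :=
  ∃ a b : ℕ → ℝ, X = fun ω => ∑ j ∈ Finset.range (n + 1), (a j * W j ω + b j * η j ω)

theorem InSpan.comb {n : ℕ} {W η : ℕ → Ω → ℝ} {X Y : Ω → ℝ} (hX : InSpan n W η X)
    (hY : InSpan n W η Y) (p q : ℝ) : InSpan n W η (fun ω => p * X ω + q * Y ω) := by
  obtain ⟨a, b, rfl⟩ := hX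
  obtain ⟨a', b', rfl⟩ := hY
  refine ⟨fun j => p * a j + q * a' j, fun j => p * b j + q * b' j, ?_⟩
  funext ω
  simp only [Finset.mul_sum]
  rw [← Finset.sum_add_distrib]
  refine Finset.sum_congr rfl fun j _ => ?_
  ring

theorem inSpan_W {n : ℕ} {W η : ℕ → Ω → ℝ} {j : ℕ} (hj : j ≤ n) : InSpan n W η (W j) := by
  refine ⟨fun k => if k = j then 1 else 0, fun _ => 0, ?_⟩
  funext ω
  simp [Nat.lt_succ_of_le hj]

theorem inSpan_eta {n : ℕ} {W η : ℕ → Ω → ℝ} {j : ℕ} (hj : j ≤ n) : InSpan n W η (η j) := by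
  refine ⟨fun _ => 0, fun k => if k = j then 1 else 0, ?_⟩
  funext ω
  simp [Nat.lt_succ_of_le hj]

theorem InSpan.gauss {n : ℕ} {W η : ℕ → Ω → ℝ} (hM : IsSimplifiedModel n W η) {X : Ω → ℝ}
    (hX : InSpan n W η X) : CGauss X := by
  obtain ⟨h1, h2, h3, -⟩ := hM
  obtain ⟨a, b, rfl⟩ := hX
  refine ⟨by fun_prop, h3 a b⟩

end helpers

section helpers2

set_option linter.unusedSectionVars false

theorem lam_bounded {lam : ℝ → ℝ} (h : IsPreAverageFn lam) :
    ∃ C : ℝ, 0 ≤ C ∧ ∀ x ∈ Set.Icc (0:ℝ) 2, |lam x| ≤ C := by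
  obtain ⟨N, t, K, hN, h0, h2, hlt, hL⟩ := h.piecewise_lipschitz
  have key : ∀ i ≤ N, ∃ C : ℝ, 0 ≤ C ∧ ∀ x ∈ Set.Icc (0:ℝ) (t i), |lam x| ≤ C := by
    intro i
    induction i with
    | zero =>
      intro _
      refine ⟨|lam 0|, abs_nonneg _, fun x hx => ?_⟩
      rw [h0] at hx
      rw [le_antisymm hx.2 hx.1]
    | succ i ih =>
      intro hi
      obtain ⟨C, hC0, hC⟩ := ih (by omega)
      have hti := hlt i (by omega)
      have hLi := hL i (by omega)
      set M := (t i + t (i + 1)) / 2 with hM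
      have hMm : M ∈ Set.Ioo (t i) (t (i + 1)) := ⟨by linarith, by linarith⟩
      have hd : 0 ≤ (K:ℝ) * (t (i + 1) - t i) := mul_nonneg K.2 (by linarith)
      refine ⟨C + |lam (t (i + 1))| + (|lam M| + K * (t (i + 1) - t i)), by positivity, ?_⟩
      intro x hx
      have a1 := abs_nonneg (lam (t (i + 1)))
      have a2 := abs_nonneg (lam M)
      rcases le_or_gt x (t i) with hx1 | hx1
      · have := hC x ⟨hx.1, hx1⟩
        linarith
      · rcases eq_or_lt_of_le hx.2 with hx2 | hx2
        · rw [hx2]; linarith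
        · have h1 := hLi.dist_le_mul x ⟨hx1, hx2⟩ M hMm
          rw [Real.dist_eq, Real.dist_eq] at h1
          have h3 : |x - M| ≤ t (i + 1) - t i := by
            rw [abs_le]; constructor <;> linarith
          have h4 : (K:ℝ) * |x - M| ≤ K * (t (i + 1) - t i) :=
            mul_le_mul_of_nonneg_left h3 K.2
          have h5 := abs_sub_abs_le_abs_sub (lam x) (lam M)
          linarith
  have := key N le_rfl
  rwa [h2] at this

variable {Ω : Type*} [MeasureSpace Ω] [IsProbabilityMeasure (ℙ : Measure Ω)]

/-- increments of the observations -/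
def incr (σ τ : ℝ) (W η : ℕ → Ω → ℝ) (k : ℕ) (ω : Ω) : ℝ :=
  obs σ τ W η (k + 1) ω - obs σ τ W η k ω

theorem incr_eq (σ τ : ℝ) (W η : ℕ → Ω → ℝ) (k : ℕ) :
    incr σ τ W η k = fun ω => σ * (1 * W (k + 1) ω + (-1) * W k ω)
      + τ * (1 * η (k + 1) ω + (-1) * η k ω) := by
  funext ω; unfold incr obs; ring

theorem incr_inSpan {n : ℕ} (σ τ : ℝ) (W η : ℕ → Ω → ℝ) {k : ℕ} (hk : k < n) :
    InSpan n W η (incr σ τ W η k) := by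
  rw [incr_eq]
  exact ((inSpan_W hk).comb (inSpan_W hk.le) 1 (-1)).comb
    ((inSpan_eta hk).comb (inSpan_eta hk.le) 1 (-1)) σ τ

theorem incr_cov {n : ℕ} (σ τ : ℝ) {W η : ℕ → Ω → ℝ} (hM : IsSimplifiedModel n W η)
    {k l : ℕ} (hk : k < n) (hl : l < n) :
    (∫ ω, incr σ τ W η k ω * incr σ τ W η l ω) ^ 2
      ≤ if (l = k ∨ l = k + 1 ∨ l = k - 1) then (σ ^ 2 + 2 * τ ^ 2) ^ 2 else 0 := by
  have mW : ∀ j ≤ n, MemLp (W j) 2 ℙ := fun j hj => (InSpan.gauss hM (inSpan_W hj)).memLp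
  have mE : ∀ j ≤ n, MemLp (η j) 2 ℙ := fun j hj => (InSpan.gauss hM (inSpan_eta hj)).memLp
  have mU : ∀ j < n, MemLp (fun ω => 1 * W (j + 1) ω + (-1) * W j ω) 2 ℙ := fun j hj =>
    (InSpan.gauss hM ((inSpan_W hj).comb (inSpan_W hj.le) 1 (-1))).memLp
  have mV : ∀ j < n, MemLp (fun ω => 1 * η (j + 1) ω + (-1) * η j ω) 2 ℙ := fun j hj =>
    (InSpan.gauss hM ((inSpan_eta hj).comb (inSpan_eta hj.le) 1 (-1))).memLp
  obtain ⟨-, -, -, hWW, hEE, hWE⟩ := hM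
  have hEW : ∀ j l, j ≤ n → l ≤ n → ∫ ω, η j ω * W l ω = 0 := by
    intro j l hj hl
    rw [← hWE l j hl hj]; congr 1; funext ω; ring
  simp only [incr_eq]
  rw [bil (mU k hk) (mV k hk) (mU l hl) (mV l hl),
    bil (mW _ hk) (mW _ hk.le) (mW _ hl) (mW _ hl.le),
    bil (mW _ hk) (mW _ hk.le) (mE _ hl) (mE _ hl.le),
    bil (mE _ hk) (mE _ hk.le) (mW _ hl) (mW _ hl.le),
    bil (mE _ hk) (mE _ hk.le) (mE _ hl) (mE _ hl.le),
    hWW _ _ hk hl, hWW _ _ hk hl.le, hWW _ _ hk.le hl, hWW _ _ hk.le hl.le,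
    hEE _ _ hk hl, hEE _ _ hk hl.le, hEE _ _ hk.le hl, hEE _ _ hk.le hl.le,
    hWE _ _ hk hl, hWE _ _ hk hl.le, hWE _ _ hk.le hl, hWE _ _ hk.le hl.le,
    hEW _ _ hk hl, hEW _ _ hk hl.le, hEW _ _ hk.le hl, hEW _ _ hk.le hl.le]
  have hn : (1:ℝ) ≤ n := by exact_mod_cast (by omega : 1 ≤ n)
  have hinv : (1:ℝ) / n ≤ 1 := by rw [div_le_one (by linarith)]; exact hn
  have hinv0 : (0:ℝ) ≤ 1 / n := by positivity
  rcases lt_trichotomy k l with h | h | h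
  · have c1 : (k:ℝ) + 1 ≤ l := by exact_mod_cast h
    have m1 : min (((k + 1 : ℕ)):ℝ) ((l + 1 : ℕ):ℝ) = k + 1 := by
      push_cast; exact min_eq_left (by linarith)
    have m2 : min (((k + 1 : ℕ)):ℝ) (l:ℝ) = k + 1 := by
      push_cast; exact min_eq_left (by linarith)
    have m3 : min (k:ℝ) ((l + 1 : ℕ):ℝ) = k := by
      push_cast; exact min_eq_left (by linarith)
    have m4 : min (k:ℝ) (l:ℝ) = k := min_eq_left (by linarith)
    rw [m1, m2, m3, m4, if_neg (by omega : ¬ k + 1 = l + 1), if_neg (by omega : ¬ k = l + 1),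
      if_neg (by omega : ¬ k = l)]
    by_cases h1 : k + 1 = l
    · rw [if_pos h1, if_pos (by omega)]
      ring_nf
      nlinarith [mul_nonneg (sq_nonneg σ) (sq_nonneg τ), sq_nonneg (σ ^ 2), sq_nonneg (τ ^ 2)]
    · rw [if_neg h1, if_neg (by omega)]
      ring_nf; exact le_rfl
  · subst h
    have m1 : min (((k + 1 : ℕ)):ℝ) ((k + 1 : ℕ):ℝ) = k + 1 := by simp
    have m2 : min (((k + 1 : ℕ)):ℝ) (k:ℝ) = k := by
      push_cast; exact min_eq_right (by linarith)
    have m3 : min (k:ℝ) ((k + 1 : ℕ):ℝ) = k := by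
      push_cast; exact min_eq_left (by linarith)
    have m4 : min (k:ℝ) (k:ℝ) = k := by simp
    rw [m1, m2, m3, m4, if_pos rfl, if_pos rfl, if_neg (by omega : ¬ k + 1 = k),
      if_neg (by omega : ¬ k = k + 1), if_pos (Or.inl rfl)]
    have e : σ * σ * (1 * 1 * (((k:ℝ) + 1) / n) + 1 * -1 * ((k:ℝ) / n) + -1 * 1 * ((k:ℝ) / n)
        + -1 * -1 * ((k:ℝ) / n)) = σ ^ 2 * (1 / n) := by ring
    rw [e]
    refine pow_le_pow_left₀ ?_ ?_ 2
    · nlinarith [mul_nonneg (sq_nonneg σ) hinv0, sq_nonneg τ]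
    · nlinarith [mul_le_mul_of_nonneg_left hinv (sq_nonneg σ), sq_nonneg τ]
  · have c1 : (l:ℝ) + 1 ≤ k := by exact_mod_cast h
    have m1 : min (((k + 1 : ℕ)):ℝ) ((l + 1 : ℕ):ℝ) = l + 1 := by
      push_cast; exact min_eq_right (by linarith)
    have m2 : min (((k + 1 : ℕ)):ℝ) (l:ℝ) = l := by
      push_cast; exact min_eq_right (by linarith)
    have m3 : min (k:ℝ) ((l + 1 : ℕ):ℝ) = l + 1 := by
      push_cast; exact min_eq_right (by linarith)
    have m4 : min (k:ℝ) (l:ℝ) = l := min_eq_right (by linarith)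
    rw [m1, m2, m3, m4, if_neg (by omega : ¬ k + 1 = l + 1), if_neg (by omega : ¬ k + 1 = l),
      if_neg (by omega : ¬ k = l)]
    by_cases h1 : k = l + 1
    · rw [if_pos h1, if_pos (by omega)]
      ring_nf
      nlinarith [mul_nonneg (sq_nonneg σ) (sq_nonneg τ), sq_nonneg (σ ^ 2), sq_nonneg (τ ^ 2)]
    · rw [if_neg h1, if_neg (by omega)]
      ring_nf; exact le_rfl

theorem var_bound {n : ℕ} (σ τ : ℝ) {W η : ℕ → Ω → ℝ} (hM : IsSimplifiedModel n W η)
    (g : ℕ → ℝ) (G : ℝ) (hG : 0 ≤ G) (hg : ∀ k < n, |g k| ≤ G) :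
    variance (fun ω => ∑ k ∈ Finset.range n, g k * incr σ τ W η k ω ^ 2) ℙ
      ≤ 6 * G ^ 2 * (σ ^ 2 + 2 * τ ^ 2) ^ 2 * n := by
  set B := (σ ^ 2 + 2 * τ ^ 2) ^ 2 with hB
  have hB0 : 0 ≤ B := sq_nonneg _
  have hD : ∀ k < n, CGauss (incr σ τ W η k) := fun k hk =>
    InSpan.gauss hM (incr_inSpan σ τ W η hk)
  rw [variance_fun_sum' (fun k hk => (hD k (Finset.mem_range.1 hk)).memLp_sq.const_mul (g k))]
  have hterm : ∀ k ∈ Finset.range n, ∀ l ∈ Finset.range n,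
      cov[fun ω => g k * incr σ τ W η k ω ^ 2, fun ω => g l * incr σ τ W η l ω ^ 2; ℙ]
        ≤ if (l = k ∨ l = k + 1 ∨ l = k - 1) then 2 * G ^ 2 * B else 0 := by
    intro k hk l hl
    rw [Finset.mem_range] at hk hl
    have hp : CGauss (fun ω => incr σ τ W η k ω + incr σ τ W η l ω) := by
      have := InSpan.gauss hM ((incr_inSpan σ τ W η hk).comb (incr_inSpan σ τ W η hl) 1 1)
      simpa using this
    have hm : CGauss (fun ω => incr σ τ W η k ω - incr σ τ W η l ω) := by
      have := InSpan.gauss hM ((incr_inSpan σ τ W η hk).comb (incr_inSpan σ τ W η hl) 1 (-1))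
      simpa [← sub_eq_add_neg] using this
    rw [covariance_const_mul_left, covariance_const_mul_right, cov_sq (hD k hk) (hD l hl) hp hm]
    have h1 := incr_cov σ τ hM hk hl
    have h2 : g k * g l ≤ G ^ 2 := by
      calc g k * g l ≤ |g k * g l| := le_abs_self _
        _ = |g k| * |g l| := abs_mul _ _
        _ ≤ G * G := mul_le_mul (hg k hk) (hg l hl) (abs_nonneg _) hG
        _ = G ^ 2 := by ring
    have h3 := sq_nonneg (∫ ω, incr σ τ W η k ω * incr σ τ W η l ω)
    calc _ = 2 * ((g k * g l) * (∫ ω, incr σ τ W η k ω * incr σ τ W η l ω) ^ 2) := by ring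
      _ ≤ 2 * (G ^ 2 * (∫ ω, incr σ τ W η k ω * incr σ τ W η l ω) ^ 2) := by gcongr
      _ ≤ 2 * (G ^ 2 * (if (l = k ∨ l = k + 1 ∨ l = k - 1) then B else 0)) := by gcongr
      _ = _ := by split_ifs <;> ring
  calc _ ≤ ∑ k ∈ Finset.range n, ∑ l ∈ Finset.range n,
        (if (l = k ∨ l = k + 1 ∨ l = k - 1) then 2 * G ^ 2 * B else 0) :=
        Finset.sum_le_sum fun k hk => Finset.sum_le_sum fun l hl => hterm k hk l hl
    _ ≤ ∑ k ∈ Finset.range n, 3 * (2 * G ^ 2 * B) := by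
        refine Finset.sum_le_sum fun k _ => ?_
        rw [← Finset.sum_filter, Finset.sum_const, nsmul_eq_mul]
        refine mul_le_mul_of_nonneg_right ?_ (by positivity)
        have : (Finset.filter (fun l => l = k ∨ l = k + 1 ∨ l = k - 1) (Finset.range n)).card
            ≤ ({k, k + 1, k - 1} : Finset ℕ).card := by
          refine Finset.card_le_card fun l hl => ?_
          simpa using (Finset.mem_filter.1 hl).2
        exact_mod_cast this.trans Finset.card_le_three
    _ = _ := by simp; ring

/-- aggregated weights -/
noncomputable def gw (lam : ℝ → ℝ) (n m k : ℕ) : ℝ :=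
  ∑ i ∈ Finset.Icc 2 m, if k + 1 ∈ blockIdx n m i then
    lam ((m : ℝ) * (k + 1 : ℕ) / n - ((i : ℝ) - 2)) ^ 2 else 0

theorem sum_bias (lam : ℝ → ℝ) (n m : ℕ) (σ τ : ℝ) (W η : ℕ → Ω → ℝ) (ω : Ω) :
    ∑ i ∈ Finset.Icc 2 m, biasCorr lam n m (obs σ τ W η) i ω
      = ((m : ℝ) ^ 2 / (2 * (n : ℝ) ^ 2)) *
        ∑ k ∈ Finset.range n, gw lam n m k * incr σ τ W η k ω ^ 2 := by
  unfold biasCorr gw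
  rw [← Finset.mul_sum]
  congr 1
  simp only [Finset.sum_mul]
  rw [Finset.sum_comm]
  refine Finset.sum_congr rfl fun i _ => ?_
  have hs : (blockIdx n m i).filter (fun j => 1 ≤ j)
      = (Finset.range (n + 1)).filter (fun j => j ∈ blockIdx n m i ∧ 1 ≤ j) := by
    ext j
    simp only [Finset.mem_filter, blockIdx]
    tauto
  rw [hs, Finset.sum_filter, Finset.sum_range_succ']
  simp only [incr, Nat.add_sub_cancel]
  simp

theorem gw_bound (lam : ℝ → ℝ) (C : ℝ) (hC : ∀ x ∈ Set.Icc (0:ℝ) 2, |lam x| ≤ C)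
    (n m k : ℕ) (hn : 0 < n) : |gw lam n m k| ≤ 3 * C ^ 2 := by
  unfold gw
  rw [abs_of_nonneg (Finset.sum_nonneg fun i _ => by split_ifs <;> positivity),
    ← Finset.sum_filter]
  set x : ℝ := (m : ℝ) * (k + 1 : ℕ) / n with hx
  have hmem : ∀ i ∈ (Finset.Icc 2 m).filter (fun i => k + 1 ∈ blockIdx n m i),
      (i:ℝ) - 2 ≤ x ∧ x ≤ i := by
    intro i hi
    obtain ⟨h1, h2⟩ := Finset.mem_filter.1 hi
    have hm : (0:ℝ) < m := by
      have := Finset.mem_Icc.1 h1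
      exact_mod_cast (by omega : 0 < m)
    obtain ⟨-, h3, h4⟩ := Finset.mem_filter.1 h2
    rw [div_le_iff₀ hm] at h3
    rw [le_div_iff₀ hm] at h4
    have : x = ((k + 1 : ℕ) : ℝ) / n * m := by rw [hx]; ring
    rw [this]
    exact ⟨h3, h4⟩
  have hx0 : 0 ≤ x := by positivity
  have hcard : ((Finset.Icc 2 m).filter (fun i => k + 1 ∈ blockIdx n m i)).card ≤ 3 := by
    have : (Finset.Icc 2 m).filter (fun i => k + 1 ∈ blockIdx n m i)
        ⊆ Finset.Icc ⌈x⌉₊ (⌈x⌉₊ + 2) := by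
      intro i hi
      obtain ⟨h1, h2⟩ := hmem i hi
      rw [Finset.mem_Icc]
      refine ⟨Nat.ceil_le.2 h2, ?_⟩
      have h3 := Nat.le_ceil x
      have : (i:ℝ) ≤ ((⌈x⌉₊ + 2 : ℕ) : ℝ) := by push_cast; linarith
      exact_mod_cast this
    refine (Finset.card_le_card this).trans ?_
    rw [Nat.card_Icc]
    omega
  calc _ ≤ ∑ i ∈ (Finset.Icc 2 m).filter (fun i => k + 1 ∈ blockIdx n m i), C ^ 2 := by
        refine Finset.sum_le_sum fun i hi => ?_
        obtain ⟨h1, h2⟩ := hmem i hi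
        have := hC (x - ((i:ℝ) - 2)) ⟨by linarith, by linarith⟩
        rw [← sq_abs]
        exact pow_le_pow_left₀ (abs_nonneg _) this 2
    _ ≤ 3 * C ^ 2 := by
        rw [Finset.sum_const, nsmul_eq_mul]
        refine mul_le_mul_of_nonneg_right ?_ (sq_nonneg _)
        exact_mod_cast hcard

theorem mOf_bound (c : ℝ) (hc : 0 < c) (n : ℕ) (hn : c ≤ √(n:ℝ)) :
    (mOf c n : ℝ) ≤ 2 * c * √(n:ℝ) := by
  unfold mOf
  set x := √(n:ℝ) / c with hx
  have h1 : 1 ≤ x := by rw [hx, le_div_iff₀ hc]; linarith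
  have h2 : x / 2 ≤ ⌊x⌋₊ := by
    have a := Nat.lt_floor_add_one x
    have b : (1:ℝ) ≤ ⌊x⌋₊ := by exact_mod_cast Nat.one_le_floor_iff _ |>.2 h1
    linarith
  have hs : 0 < √(n:ℝ) := by linarith
  calc ((n / ⌊x⌋₊ : ℕ) : ℝ) ≤ (n:ℝ) / ⌊x⌋₊ := Nat.cast_div_le
    _ ≤ (n:ℝ) / (x / 2) := by gcongr
    _ = 2 * c * √(n:ℝ) := by
        rw [hx]
        have : (n:ℝ) = √(n:ℝ) * √(n:ℝ) := (Real.mul_self_sqrt (by positivity)).symm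
        field_simp
        linarith

end helpers2

theorem biasCorrection_variance_negligible (σ τ c : ℝ) (hσ : 0 < σ) (hτ : 0 < τ) (hc : 0 < c)
    (lam : ℝ → ℝ) (hlam : IsPreAverageFn lam)
    (Ω : ℕ → Type*) [∀ n, MeasureSpace (Ω n)] [∀ n, IsProbabilityMeasure (ℙ : Measure (Ω n))]
    (W η : (n : ℕ) → ℕ → Ω n → ℝ)
    (hmodel : ∀ n, IsSimplifiedModel n (W n) (η n)) :
    Filter.Tendsto (fun n : ℕ => Real.sqrt n *
        variance (fun ω => ∑ i ∈ Finset.Icc 2 (mOf c n),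
          biasCorr lam n (mOf c n) (obs σ τ (W n) (η n)) i ω) ℙ)
      Filter.atTop (nhds 0) := by
  obtain ⟨C, hC0, hC⟩ := lam_bounded hlam
  set K : ℝ := 24 * c ^ 4 * (3 * C ^ 2) ^ 2 * (σ ^ 2 + 2 * τ ^ 2) ^ 2 with hK
  have hsq : Filter.Tendsto (fun n : ℕ => √(n:ℝ)) Filter.atTop Filter.atTop :=
    Real.tendsto_sqrt_atTop.comp tendsto_natCast_atTop_atTop
  have hlim : Filter.Tendsto (fun n : ℕ => K / √(n:ℝ)) Filter.atTop (nhds 0) :=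
    hsq.const_div_atTop K
  refine squeeze_zero' (Filter.Eventually.of_forall fun n => ?_) ?_ hlim
  · exact mul_nonneg (Real.sqrt_nonneg _) (variance_nonneg _ _)
  · filter_upwards [hsq.eventually_ge_atTop c, Filter.eventually_gt_atTop 0] with n hn hn0
    have hm := mOf_bound c hc n hn
    set m := mOf c n with hmdef
    have hs : 0 < √(n:ℝ) := by linarith
    simp only [sum_bias]
    rw [variance_const_mul]
    have hv := var_bound σ τ (hmodel n) (gw lam n m) (3 * C ^ 2) (by positivity)
      (fun k _ => gw_bound lam C hC n m k hn0)
    have hnn : (n:ℝ) = √(n:ℝ) ^ 2 := (Real.sq_sqrt (by positivity)).symm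
    calc _ ≤ √(n:ℝ) * (((2 * c * √(n:ℝ)) ^ 2 / (2 * (n : ℝ) ^ 2)) ^ 2 *
          (6 * (3 * C ^ 2) ^ 2 * (σ ^ 2 + 2 * τ ^ 2) ^ 2 * n)) := by
          gcongr
          exact variance_nonneg _ _
      _ = K / √(n:ℝ) := by
          rw [hK]
          generalize √(n:ℝ) = s at *
          rw [hnn]
          field_simp
          ring
end
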